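/- Let v be a harmonic function on the open unit ball B ⊂ ℝⁿ, not identically zero, set Z = Z(v), let x₀ ∈ Z ∩ B_{1/2}, and let k ≥ 1 be the order of vanishing of v at x₀ (i.e. the k-th iterated derivative of v at x₀ is nonzero while all iterated derivatives of order less than k vanish at x₀). Then there exists a constant C = C(x₀, Z) > 0 such that for every harmonic function u on B with Z(u) = Z one has sup_{x ∈ B_{1/2}} |u(x)| ≤ C · ‖D^k u(x₀)‖, where D^k u(x₀) denotes the k-th iterated Fréchet derivative of u at x₀ with its operator norm. -/

import Mathlib

open Metric Set Filter

noncomputable section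

abbrev En (n : ℕ) : Type := EuclideanSpace ℝ (Fin n)

/-- The Laplacian of `u` at `x`, computed from the second iterated Fréchet derivative. -/
def laplacianAt {n : ℕ} (u : En n → ℝ) (x : En n) : ℝ :=
  ∑ i : Fin n, iteratedFDeriv ℝ 2 u x ![EuclideanSpace.single i 1, EuclideanSpace.single i 1]

/-- `u` is harmonic on `Ω`: twice continuously differentiable with vanishing Laplacian. -/
def HarmonicOnSet {n : ℕ} (u : En n → ℝ) (Ω : Set (En n)) : Prop :=
  ContDiffOn ℝ 2 u Ω ∧ ∀ x ∈ Ω, laplacianAt u x = 0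

/-- The zero set of `u` within `Ω`. -/
def zeroSet {n : ℕ} (u : En n → ℝ) (Ω : Set (En n)) : Set (En n) :=
  {x ∈ Ω | u x = 0}

/-- The collection of nodal domains of `u` in `Ω`, i.e. the connected components of
`Ω \ Z(u)`. -/
def nodalComponents {n : ℕ} (u : En n → ℝ) (Ω : Set (En n)) : Set (Set (En n)) :=
  {C | ∃ x ∈ Ω \ zeroSet u Ω, C = connectedComponentIn (Ω \ zeroSet u Ω) x}

/-!
For harmonic `f` and `g` the integral of `f (x + a • y) * g (x + b • y)` against a radial weight on
the unit ball depends on the radii `a` and `b` only through their product. Suppose first that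
`0 ≤ u * v`. Then the mass of `|u * v|` at radius `ρ` equals an integral of `u` at a smaller and
`v` at a larger radius, so it is bounded by the size of `u` near the center; since `v` is bounded
below on small balls by a power of their radius, that mass in turn bounds `u` on a fixed larger
ball. Chaining such balls, `u` is bounded on every compact set by its size near `x₀`. The same
identity forces `u` to vanish at `x₀` to the order of `v`, and this passes to limits of normalised
sequences, so by compactness the size of `u` near `x₀` is bounded by its `k`-th derivative there.

It remains to see that `u * v` has a constant sign when `u` and `v` have the same zeros. It has a
local sign off the critical zeros of `v`, so `v` and its gradient vanish on the boundary of the open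
set where `0 ≤ u * v` locally. Hence `v` cut off to this set still has the mean value property, so
it is harmonic, and by unique continuation it is `v` or `0`.
-/

section

open MeasureTheory Topology InnerProductSpace

variable {n : ℕ}

section ParametricIntegral

variable {Y E : Type*} [TopologicalSpace Y] [NormedAddCommGroup E] {K : Set Y}

theorem eventually_forall_norm_le_add_one {X : Type*} [TopologicalSpace X] (hK : IsCompact K)
    {S : Set X} {F : X → Y → E} (hF : ContinuousOn (Function.uncurry F) (S ×ˢ K))
    {x₀ : X} (hx₀ : x₀ ∈ S) :
    ∀ᶠ x in 𝓝[S] x₀, ∀ y ∈ K, ‖F x y‖ ≤ ‖F x₀ y‖ + 1 := by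
  obtain ⟨N, hN, hNF⟩ := hK.mem_uniformity_of_prod hF hx₀ (dist_mem_uniformity one_pos)
  filter_upwards [hN] with x hx y hy
  have hdist : ‖F x y - F x₀ y‖ < 1 := dist_eq_norm (F x y) (F x₀ y) ▸ hNF x hx y hy
  linarith [norm_sub_norm_le (F x y) (F x₀ y)]

variable [MeasurableSpace Y] [OpensMeasurableSpace Y] {μ : Measure Y}
  [IsFiniteMeasureOnCompacts μ] [NormedSpace ℝ E]

theorem continuousOn_setIntegral_of_isCompact {X : Type*} [TopologicalSpace X]
    [FirstCountableTopology X] (hK : IsCompact K) (hKm : MeasurableSet K)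
    {S : Set X} {F : X → Y → E} (hF : ContinuousOn (Function.uncurry F) (S ×ˢ K)) :
    ContinuousOn (fun x => ∫ y in K, F x y ∂μ) S := by
  intro x₀ hx₀
  have hFx : ∀ x ∈ S, ContinuousOn (F x) K := fun x hx => hF.uncurry_left x hx
  refine continuousWithinAt_of_dominated (bound := fun y => ‖F x₀ y‖ + 1) ?_ ?_ ?_ ?_
  · filter_upwards [self_mem_nhdsWithin] with x hx
    exact ((hFx x hx).integrableOn_compact' hK hKm).aestronglyMeasurable
  · filter_upwards [eventually_forall_norm_le_add_one hK hF hx₀] with x hx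
    exact ae_restrict_of_forall_mem hKm hx
  · exact ((hFx x₀ hx₀).norm.add continuousOn_const).integrableOn_compact' hK hKm
  · exact ae_restrict_of_forall_mem hKm fun y hy => hF.uncurry_right y hy x₀ hx₀

theorem hasFDerivAt_setIntegral_of_isCompact {H : Type*} [NormedAddCommGroup H] [NormedSpace ℝ H]
    (hK : IsCompact K) (hKm : MeasurableSet K) {S : Set H} (hS : IsOpen S)
    {F : H → Y → E} {F' : H → Y → H →L[ℝ] E} (hF : ∀ x ∈ S, ContinuousOn (F x) K)
    (hF' : ContinuousOn (Function.uncurry F') (S ×ˢ K))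
    (hFF' : ∀ x ∈ S, ∀ y ∈ K, HasFDerivAt (fun x => F x y) (F' x y) x) {x₀ : H} (hx₀ : x₀ ∈ S) :
    HasFDerivAt (fun x => ∫ y in K, F x y ∂μ) (∫ y in K, F' x₀ y ∂μ) x₀ := by
  have hF'x₀ : ContinuousOn (F' x₀) K := hF'.uncurry_left x₀ hx₀
  have hbound := eventually_forall_norm_le_add_one hK hF' hx₀
  rw [hS.nhdsWithin_eq hx₀] at hbound
  refine hasFDerivAt_integral_of_dominated_of_fderiv_le (bound := fun y => ‖F' x₀ y‖ + 1)
    (inter_mem hbound (hS.mem_nhds hx₀)) ?_ ((hF x₀ hx₀).integrableOn_compact' hK hKm)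
    (hF'x₀.integrableOn_compact' hK hKm).aestronglyMeasurable ?_
    ((hF'x₀.norm.add continuousOn_const).integrableOn_compact' hK hKm) ?_
  · filter_upwards [hS.mem_nhds hx₀] with x hx
    exact ((hF x hx).integrableOn_compact' hK hKm).aestronglyMeasurable
  · exact ae_restrict_of_forall_mem hKm fun y hy x hx => hx.1 y hy
  · exact ae_restrict_of_forall_mem hKm fun y hy x hx => hFF' x hx.2 y hy

theorem hasDerivAt_setIntegral_of_isCompact [CompleteSpace E] (hK : IsCompact K)
    (hKm : MeasurableSet K) {S : Set ℝ} (hS : IsOpen S) {F F' : ℝ → Y → E}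
    (hF : ∀ t ∈ S, ContinuousOn (F t) K) (hF' : ContinuousOn (Function.uncurry F') (S ×ˢ K))
    (hFF' : ∀ t ∈ S, ∀ y ∈ K, HasDerivAt (fun t => F t y) (F' t y) t) {t₀ : ℝ} (ht₀ : t₀ ∈ S) :
    HasDerivAt (fun t => ∫ y in K, F t y ∂μ) (∫ y in K, F' t₀ y ∂μ) t₀ := by
  let Φ := ContinuousLinearMap.toSpanSingletonLIE ℝ E
  have h := hasFDerivAt_setIntegral_of_isCompact (μ := μ) hK hKm hS (F' := fun t y => Φ (F' t y))
    hF (Φ.continuous.comp_continuousOn hF') (fun t ht y hy => (hFF' t ht y hy).hasFDerivAt) ht₀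
  have hΦ : ∫ y in K, Φ (F' t₀ y) ∂μ = Φ (∫ y in K, F' t₀ y ∂μ) :=
    Φ.toContinuousLinearEquiv.integral_comp_comm _
  rw [hΦ] at h
  exact h

end ParametricIntegral

section BallMeasure

/-- The radial bump function `exp (-1 / (1 - ‖y‖ ^ 2))`, positive exactly on the open unit ball,
that serves as the unnormalised density of `ballMeasure`. -/
def ballWeight (y : En n) : ℝ := expNegInvGlue (1 - ‖y‖ ^ 2)

/-- The density of `ballMeasure` with respect to Lebesgue measure. -/
def ballDensity (y : En n) : ℝ := ballWeight y / ∫ z : En n, ballWeight z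

/-- A radial probability measure on the unit ball with smooth density. It replaces the surface
measure of the sphere in mean value properties. -/
def ballMeasure (n : ℕ) : Measure (En n) :=
  volume.withDensity fun y => ENNReal.ofReal (ballDensity y)

/-- The radial function with gradient `-ballDensity y • y` vanishing outside the unit ball. -/
def ballPotential (y : En n) : ℝ :=
  (2 * ∫ z : En n, ballWeight z)⁻¹ * ∫ s in (‖y‖ ^ 2)..1, expNegInvGlue (1 - s)

theorem contDiff_ballWeight {k : ℕ∞} : ContDiff ℝ k (ballWeight : En n → ℝ) :=
  expNegInvGlue.contDiff.comp (contDiff_const.sub (contDiff_norm_sq ℝ))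

theorem ballWeight_nonneg (y : En n) : 0 ≤ ballWeight y := expNegInvGlue.nonneg _

theorem ballWeight_pos {y : En n} (hy : y ∈ ball (0 : En n) 1) : 0 < ballWeight y := by
  rw [mem_ball_zero_iff] at hy
  exact expNegInvGlue.pos_of_pos (by nlinarith [norm_nonneg y])

theorem ballWeight_eq_zero {y : En n} (hy : y ∉ ball (0 : En n) 1) : ballWeight y = 0 := by
  rw [mem_ball_zero_iff, not_lt] at hy
  exact expNegInvGlue.zero_of_nonpos (by nlinarith)

theorem hasCompactSupport_ballWeight : HasCompactSupport (ballWeight : En n → ℝ) :=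
  HasCompactSupport.intro (isCompact_closedBall 0 1) fun _ hy =>
    ballWeight_eq_zero fun h => hy (ball_subset_closedBall h)

theorem integrable_ballWeight : Integrable (ballWeight : En n → ℝ) :=
  (contDiff_ballWeight (k := 0)).continuous.integrable_of_hasCompactSupport
    hasCompactSupport_ballWeight

theorem integral_ballWeight_pos : 0 < ∫ z : En n, ballWeight z :=
  (contDiff_ballWeight (k := 0)).continuous.integral_pos_of_hasCompactSupport_nonneg_nonzero
    hasCompactSupport_ballWeight ballWeight_nonneg (x := 0)
    (ballWeight_pos (mem_ball_self one_pos)).ne'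

theorem contDiff_ballDensity {k : ℕ∞} : ContDiff ℝ k (ballDensity : En n → ℝ) :=
  contDiff_ballWeight.div_const _

theorem continuous_ballDensity : Continuous (ballDensity : En n → ℝ) :=
  (contDiff_ballDensity (k := 0)).continuous

theorem ballDensity_nonneg (y : En n) : 0 ≤ ballDensity y :=
  div_nonneg (ballWeight_nonneg y) integral_ballWeight_pos.le

theorem ballDensity_pos {y : En n} (hy : y ∈ ball (0 : En n) 1) : 0 < ballDensity y :=
  div_pos (ballWeight_pos hy) integral_ballWeight_pos

theorem ballDensity_eq_zero {y : En n} (hy : y ∉ ball (0 : En n) 1) : ballDensity y = 0 := by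
  rw [ballDensity, ballWeight_eq_zero hy, zero_div]

theorem hasCompactSupport_ballDensity : HasCompactSupport (ballDensity : En n → ℝ) :=
  HasCompactSupport.intro (isCompact_closedBall 0 1) fun _ hy =>
    ballDensity_eq_zero fun h => hy (ball_subset_closedBall h)

instance : IsProbabilityMeasure (ballMeasure n) where
  measure_univ := by
    have hint : Integrable (ballDensity : En n → ℝ) := integrable_ballWeight.div_const _
    have hone : ∫ y : En n, ballDensity y = 1 := by
      simp only [ballDensity, integral_div, div_self integral_ballWeight_pos.ne']
    rw [ballMeasure, withDensity_apply _ MeasurableSet.univ, Measure.restrict_univ,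
      ← ofReal_integral_eq_lintegral_ofReal hint (ae_of_all _ ballDensity_nonneg), hone,
      ENNReal.ofReal_one]

theorem integral_ballMeasure {E : Type*} [NormedAddCommGroup E] [NormedSpace ℝ E] (f : En n → E) :
    ∫ y, f y ∂ballMeasure n = ∫ y, ballDensity y • f y := by
  rw [ballMeasure, integral_withDensity_eq_integral_toReal_smul
    continuous_ballDensity.measurable.ennreal_ofReal (ae_of_all _ fun _ => ENNReal.ofReal_lt_top)]
  simp only [ENNReal.toReal_ofReal (ballDensity_nonneg _)]

theorem ae_ballMeasure_mem_closedBall : ∀ᵐ y ∂ballMeasure n, y ∈ closedBall (0 : En n) 1 := by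
  refine (ae_withDensity_iff continuous_ballDensity.measurable.ennreal_ofReal).2
    (ae_of_all _ fun y hy => ?_)
  by_contra h
  rw [ballDensity_eq_zero fun h' => h (ball_subset_closedBall h'), ENNReal.ofReal_zero] at hy
  exact hy rfl

theorem restrict_ballMeasure :
    (ballMeasure n).restrict (closedBall 0 1) = ballMeasure n :=
  Measure.restrict_eq_self_of_ae_mem ae_ballMeasure_mem_closedBall

theorem integrable_ballMeasure {E : Type*} [NormedAddCommGroup E] {f : En n → E}
    (hf : ContinuousOn f (closedBall 0 1)) : Integrable f (ballMeasure n) :=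
  restrict_ballMeasure (n := n) ▸ hf.integrableOn_compact (isCompact_closedBall 0 1)

theorem eqOn_zero_of_integral_ballMeasure_eq_zero {f : En n → ℝ}
    (hf : ContinuousOn f (closedBall 0 1)) (hf0 : ∀ y ∈ closedBall (0 : En n) 1, 0 ≤ f y)
    (hint : ∫ y, f y ∂ballMeasure n = 0) : EqOn f 0 (ball 0 1) := by
  have hae : ∀ᵐ y ∂ballMeasure n, f y = 0 :=
    (integral_eq_zero_iff_of_nonneg_ae
      (ae_ballMeasure_mem_closedBall.mono hf0) (integrable_ballMeasure hf)).1 hint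
  have hae' : f =ᵐ[volume.restrict (ball 0 1)] 0 := by
    rw [Filter.EventuallyEq, ae_restrict_iff' measurableSet_ball]
    filter_upwards [(ae_withDensity_iff
      continuous_ballDensity.measurable.ennreal_ofReal).1 hae] with y hy hyB
    exact hy (ENNReal.ofReal_pos.2 (ballDensity_pos hyB)).ne'
  exact Measure.eqOn_open_of_ae_eq hae' isOpen_ball
    (hf.mono ball_subset_closedBall) continuousOn_const

theorem continuous_expNegInvGlue_one_sub : Continuous fun s : ℝ => expNegInvGlue (1 - s) :=
  (expNegInvGlue.contDiff (n := 0)).continuous.comp (continuous_const.sub continuous_id)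

theorem ballPotential_eq_zero {y : En n} (hy : y ∉ ball (0 : En n) 1) : ballPotential y = 0 := by
  rw [mem_ball_zero_iff, not_lt] at hy
  have hzero : ∫ s in (1 : ℝ)..(‖y‖ ^ 2), expNegInvGlue (1 - s) = 0 := by
    rw [intervalIntegral.integral_of_le (by nlinarith)]
    exact setIntegral_eq_zero_of_forall_eq_zero fun s hs =>
      expNegInvGlue.zero_of_nonpos (by linarith [hs.1])
  rw [ballPotential, intervalIntegral.integral_symm, hzero, neg_zero, mul_zero]

theorem ballPotential_pos {y : En n} (hy : y ∈ ball (0 : En n) 1) : 0 < ballPotential y := by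
  rw [mem_ball_zero_iff] at hy
  exact mul_pos (inv_pos.2 (mul_pos two_pos integral_ballWeight_pos))
    (intervalIntegral.intervalIntegral_pos_of_pos_on
      (continuous_expNegInvGlue_one_sub.intervalIntegrable _ _)
      (fun s hs => expNegInvGlue.pos_of_pos (by linarith [hs.2])) (by nlinarith [norm_nonneg y]))

theorem hasFDerivAt_ballPotential (y : En n) :
    HasFDerivAt ballPotential (-ballDensity y • innerSL ℝ y) y := by
  have hprim : HasDerivAt (fun t : ℝ => ∫ s in t..(1 : ℝ), expNegInvGlue (1 - s))
      (-expNegInvGlue (1 - ‖y‖ ^ 2)) (‖y‖ ^ 2) :=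
    intervalIntegral.integral_hasDerivAt_left
      (continuous_expNegInvGlue_one_sub.intervalIntegrable _ _)
      (continuous_expNegInvGlue_one_sub.stronglyMeasurableAtFilter _ _)
      continuous_expNegInvGlue_one_sub.continuousAt
  have hsq : HasFDerivAt (fun y : En n => ‖y‖ ^ 2) (2 • innerSL ℝ y) y :=
    (hasStrictFDerivAt_norm_sq y).hasFDerivAt
  refine ((hprim.comp_hasFDerivAt y hsq).const_mul _).congr_fderiv ?_
  ext z
  simp only [ballDensity, ballWeight, _root_.smul_apply, innerSL_apply_apply,
    smul_eq_mul, nsmul_eq_mul, Nat.cast_ofNat]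
  field_simp [(integral_ballWeight_pos (n := n)).ne']

theorem continuous_ballPotential : Continuous (ballPotential : En n → ℝ) :=
  continuous_iff_continuousAt.2 fun y => (hasFDerivAt_ballPotential y).continuousAt

theorem integrable_ballPotential_mul {f : En n → ℝ} (hf : ContinuousOn f (closedBall 0 1)) :
    Integrable fun y => ballPotential y * f y := by
  have hOn : IntegrableOn (fun y => ballPotential y * f y) (closedBall 0 1) :=
    (continuous_ballPotential.continuousOn.mul hf).integrableOn_compact (isCompact_closedBall 0 1)
  exact hOn.integrable_of_forall_notMem_eq_zero fun y hy => by
    rw [ballPotential_eq_zero fun h => hy (ball_subset_closedBall h), zero_mul]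

theorem integrable_ballDensity_mul {f : En n → ℝ} (hf : ContinuousOn f (closedBall 0 1)) :
    Integrable fun y => ballDensity y * f y := by
  have hOn : IntegrableOn (fun y => ballDensity y * f y) (closedBall 0 1) :=
    (continuous_ballDensity.continuousOn.mul hf).integrableOn_compact (isCompact_closedBall 0 1)
  exact hOn.integrable_of_forall_notMem_eq_zero fun y hy => by
    rw [ballDensity_eq_zero fun h => hy (ball_subset_closedBall h), zero_mul]

theorem integral_inner_mul_ballMeasure {U : Set (En n)} (hU : IsOpen U)
    (hBU : closedBall 0 1 ⊆ U) {f : En n → ℝ} (hf : ContDiffOn ℝ 1 f U) (e : En n) :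
    ∫ y, inner ℝ y e * f y ∂ballMeasure n = ∫ y, ballPotential y * fderiv ℝ f y e := by
  have hfc : ContinuousOn f (closedBall 0 1) := hf.continuousOn.mono hBU
  have hf'c : ContinuousOn (fun y => fderiv ℝ f y e) (closedBall 0 1) :=
    ((hf.continuousOn_fderiv_of_isOpen hU le_rfl).mono hBU).clm_apply continuousOn_const
  have hsupp : tsupport (ballPotential : En n → ℝ) ⊆ closedBall 0 1 :=
    closure_minimal (fun y hy => by
      by_contra h
      exact hy (ballPotential_eq_zero fun h' => h (ball_subset_closedBall h'))) isClosed_closedBall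
  have hpot (y : En n) : fderiv ℝ ballPotential y e = -(ballDensity y * inner ℝ y e) := by
    simp [(hasFDerivAt_ballPotential y).fderiv]
  have hflux : Integrable fun y => f y * fderiv ℝ ballPotential y e := by
    refine (integrable_ballDensity_mul
      (hfc.mul (by fun_prop : Continuous fun y : En n => inner ℝ y e).continuousOn)).neg.congr
      (ae_of_all _ fun y => ?_)
    simp only [hpot, Pi.neg_apply, Pi.mul_apply]
    ring
  have hparts := integral_mul_fderiv_eq_neg_fderiv_mul_of_integrable (μ := volume)
    (by simpa only [mul_comm] using integrable_ballPotential_mul hf'c)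
    hflux (by simpa only [mul_comm] using integrable_ballPotential_mul hfc)
    (fun y hy => (hf.differentiableOn one_ne_zero).differentiableAt
      (hU.mem_nhds (hBU (hsupp hy))))
    (fun y _ => (hasFDerivAt_ballPotential y).differentiableAt)
  simp only [hpot, mul_neg, integral_neg, neg_inj] at hparts
  simp only [mul_comm (ballPotential _), ← hparts, integral_ballMeasure, smul_eq_mul]
  exact integral_congr_ae (ae_of_all _ fun y => by simp only; ring)

theorem integral_sum_coord_mul_ballMeasure {U : Set (En n)} (hU : IsOpen U)
    (hBU : closedBall 0 1 ⊆ U) {X : Fin n → En n → ℝ} (hX : ∀ i, ContDiffOn ℝ 1 (X i) U) :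
    ∫ y, ∑ i, y i * X i y ∂ballMeasure n
      = ∫ y, ballPotential y * ∑ i, fderiv ℝ (X i) y (EuclideanSpace.single i 1) := by
  have hflux (i : Fin n) : Integrable (fun y => y i * X i y) (ballMeasure n) :=
    integrable_ballMeasure (.mul (by fun_prop) ((hX i).continuousOn.mono hBU))
  have hdiv (i : Fin n) : Integrable
      fun y => ballPotential y * fderiv ℝ (X i) y (EuclideanSpace.single i 1) :=
    integrable_ballPotential_mul (.clm_apply
      (((hX i).continuousOn_fderiv_of_isOpen hU le_rfl).mono hBU) continuousOn_const)
  simp only [Finset.mul_sum]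
  rw [integral_finsetSum _ fun i _ => hflux i, integral_finsetSum _ fun i _ => hdiv i]
  refine Finset.sum_congr rfl fun i _ => ?_
  rw [← integral_inner_mul_ballMeasure hU hBU (hX i)]
  simp [EuclideanSpace.inner_single_right]

end BallMeasure

section Harmonic

variable {f g : En n → ℝ} {U V : Set (En n)}

theorem laplacianAt_eq_sum_fderiv (u : En n → ℝ) (x : En n) :
    laplacianAt u x = ∑ i, fderiv ℝ (fderiv ℝ u) x (EuclideanSpace.single i 1)
      (EuclideanSpace.single i 1) := by
  simp [laplacianAt, iteratedFDeriv_two_apply]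

theorem HarmonicOnSet.mono (hf : HarmonicOnSet f U) (h : V ⊆ U) : HarmonicOnSet f V :=
  ⟨hf.1.mono h, fun x hx => hf.2 x (h hx)⟩

theorem harmonicOnSet_const (c : ℝ) : HarmonicOnSet (fun _ : En n => c) U :=
  ⟨contDiffOn_const, fun x _ => by simp [laplacianAt_eq_sum_fderiv]⟩

theorem HarmonicOnSet.hasFDerivAt (hU : IsOpen U) (hf : HarmonicOnSet f U) {x : En n}
    (hx : x ∈ U) : HasFDerivAt f (fderiv ℝ f x) x :=
  ((hf.1.contDiffAt (hU.mem_nhds hx)).differentiableAt two_ne_zero).hasFDerivAt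

theorem HarmonicOnSet.contDiffOn_fderiv (hU : IsOpen U) (hf : HarmonicOnSet f U) :
    ContDiffOn ℝ 1 (fderiv ℝ f) U :=
  hf.1.fderiv_of_isOpen hU le_rfl

theorem HarmonicOnSet.hasFDerivAt_fderiv (hU : IsOpen U) (hf : HarmonicOnSet f U) {x : En n}
    (hx : x ∈ U) : HasFDerivAt (fderiv ℝ f) (fderiv ℝ (fderiv ℝ f) x) x :=
  (((hf.contDiffOn_fderiv hU).contDiffAt (hU.mem_nhds hx)).differentiableAt
    one_ne_zero).hasFDerivAt

theorem HarmonicOnSet.const_mul (hU : IsOpen U) (hf : HarmonicOnSet f U) (c : ℝ) :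
    HarmonicOnSet (fun x => c * f x) U := by
  refine ⟨contDiffOn_const.mul hf.1, fun x hx => ?_⟩
  have h := hf.2 x hx
  simp only [laplacianAt] at h ⊢
  simp only [← smul_eq_mul, ← Pi.smul_def,
    iteratedFDeriv_const_smul_apply (hf.1.contDiffAt (hU.mem_nhds hx)), _root_.smul_apply,
    ← Finset.smul_sum, h, smul_zero]

theorem fderiv_comp_const_add_smul {F : Type*} [NormedAddCommGroup F] [NormedSpace ℝ F]
    (f : En n → F) (x : En n) (s : ℝ) :
    fderiv ℝ (fun y => f (x + s • y)) = fun y => s • fderiv ℝ f (x + s • y) := by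
  ext1 y
  rw [fderiv_comp_smul (f := fun z => f (x + z)), fderiv_comp_add_left]

theorem laplacianAt_comp_const_add_smul {x y : En n} {s : ℝ}
    (hf : ContDiffAt ℝ 2 f (x + s • y)) :
    laplacianAt (fun y => f (x + s • y)) y = s ^ 2 * laplacianAt f (x + s • y) := by
  have hdiff : DifferentiableAt ℝ (fun y => fderiv ℝ f (x + s • y)) y :=
    ((hf.fderiv_right (m := 1) le_rfl).differentiableAt one_ne_zero).comp y (by fun_prop)
  simp only [laplacianAt_eq_sum_fderiv, fderiv_comp_const_add_smul, fderiv_fun_const_smul hdiff,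
    _root_.smul_apply, smul_eq_mul, ← Finset.mul_sum]
  ring

theorem HarmonicOnSet.comp_add_smul (hU : IsOpen U) (hf : HarmonicOnSet f U) (x : En n) (s : ℝ) :
    HarmonicOnSet (fun y => f (x + s • y)) ((fun y => x + s • y) ⁻¹' U) := by
  refine ⟨hf.1.comp (by fun_prop) fun y hy => hy, fun y hy => ?_⟩
  rw [laplacianAt_comp_const_add_smul (hf.1.contDiffAt (hU.mem_nhds hy)), hf.2 _ hy, mul_zero]

theorem sum_coord_mul_apply_single (L : En n →L[ℝ] ℝ) (y : En n) :
    ∑ i, y i * L (EuclideanSpace.single i 1) = L y := by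
  conv_rhs => rw [← (EuclideanSpace.basisFun (Fin n) ℝ).sum_repr y]
  simp

theorem integral_fderiv_self_ballMeasure (hU : IsOpen U) (hBU : closedBall 0 1 ⊆ U)
    (hf : ContDiffOn ℝ 2 f U) :
    ∫ y, fderiv ℝ f y y ∂ballMeasure n = ∫ y, ballPotential y * laplacianAt f y := by
  have hX (i : Fin n) :
      ContDiffOn ℝ 1 (fun y => fderiv ℝ f y (EuclideanSpace.single i 1)) U :=
    (hf.fderiv_of_isOpen hU le_rfl).clm_apply contDiffOn_const
  have h := integral_sum_coord_mul_ballMeasure hU hBU hX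
  simp only [sum_coord_mul_apply_single] at h
  refine h.trans (integral_congr_ae (ae_of_all _ fun y => ?_))
  by_cases hy : y ∈ ball (0 : En n) 1
  · have hdiff : DifferentiableAt ℝ (fderiv ℝ f) y :=
      ((hf.fderiv_of_isOpen (m := 1) hU le_rfl).differentiableOn one_ne_zero).differentiableAt
        (hU.mem_nhds (hBU (ball_subset_closedBall hy)))
    have hX' (i : Fin n) := (hdiff.hasFDerivAt.clm_apply
      (hasFDerivAt_const (EuclideanSpace.single i (1 : ℝ)) y)).fderiv
    simp [laplacianAt_eq_sum_fderiv, hX']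
  · simp only [ballPotential_eq_zero hy, zero_mul]

/-- The integral is a superposition of fluxes of the divergence-free field `g ∇f - f ∇g` through
spheres. -/
theorem HarmonicOnSet.integral_radial_wronskian_eq_zero (hU : IsOpen U)
    (hBU : closedBall 0 1 ⊆ U) (hf : HarmonicOnSet f U) (hg : HarmonicOnSet g U) :
    ∫ y, (fderiv ℝ f y y * g y - f y * fderiv ℝ g y y) ∂ballMeasure n = 0 := by
  let e (i : Fin n) : En n := EuclideanSpace.single i 1
  let X (i : Fin n) (y : En n) : ℝ := fderiv ℝ f y (e i) * g y - f y * fderiv ℝ g y (e i)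
  have hX (i : Fin n) : ContDiffOn ℝ 1 (X i) U :=
    (((hf.contDiffOn_fderiv hU).clm_apply contDiffOn_const).mul (hg.1.of_le one_le_two)).sub
      ((hf.1.of_le one_le_two).mul ((hg.contDiffOn_fderiv hU).clm_apply contDiffOn_const))
  have hradial (y : En n) : ∑ i, y i * X i y = fderiv ℝ f y y * g y - f y * fderiv ℝ g y y := by
    simp only [X, e, mul_sub, Finset.sum_sub_distrib, ← mul_assoc, ← Finset.sum_mul,
      sum_coord_mul_apply_single]
    simp only [mul_comm _ (f y), mul_assoc]
    simp only [← Finset.mul_sum, sum_coord_mul_apply_single]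
  have hdiv : ∀ y ∈ U, ∑ i, fderiv ℝ (X i) y (e i) = 0 := by
    intro y hy
    have hf₁ := hf.hasFDerivAt hU hy
    have hg₁ := hg.hasFDerivAt hU hy
    have hfderiv (i : Fin n) : fderiv ℝ (X i) y (e i)
        = fderiv ℝ (fderiv ℝ f) y (e i) (e i) * g y
          - f y * fderiv ℝ (fderiv ℝ g) y (e i) (e i) := by
      have hf₂ := (hf.hasFDerivAt_fderiv hU hy).clm_apply (hasFDerivAt_const (e i) y)
      have hg₂ := (hg.hasFDerivAt_fderiv hU hy).clm_apply (hasFDerivAt_const (e i) y)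
      have hX₁ : HasFDerivAt (X i) _ y := (hf₂.mul hg₁).sub (hf₁.mul hg₂)
      rw [hX₁.fderiv]
      simp
      ring
    have hf₃ := hf.2 y hy
    have hg₃ := hg.2 y hy
    rw [laplacianAt_eq_sum_fderiv] at hf₃ hg₃
    simp only [hfderiv, Finset.sum_sub_distrib, ← Finset.sum_mul, ← Finset.mul_sum, e, hf₃, hg₃,
      zero_mul, mul_zero, sub_zero]
  simp only [← hradial]
  rw [integral_sum_coord_mul_ballMeasure hU hBU hX]
  refine integral_eq_zero_of_ae (ae_of_all _ fun y => ?_)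
  by_cases hy : y ∈ ball (0 : En n) 1
  · simp only [e] at hdiv
    simp only [hdiv y (hBU (ball_subset_closedBall hy)), mul_zero, Pi.zero_apply]
  · simp only [ballPotential_eq_zero hy, zero_mul, Pi.zero_apply]

theorem add_smul_mem_ball {x y : En n} {s R : ℝ} (hs : |s| < R)
    (hy : y ∈ closedBall (0 : En n) 1) : x + s • y ∈ ball x R := by
  rw [mem_closedBall_zero_iff] at hy
  rw [mem_ball, dist_self_add_left, norm_smul, Real.norm_eq_abs]
  nlinarith [abs_nonneg s]

theorem HarmonicOnSet.integral_rescaled_wronskian_eq_zero {x : En n} {R a b : ℝ}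
    (hf : HarmonicOnSet f (ball x R)) (hg : HarmonicOnSet g (ball x R)) (ha : |a| < R)
    (hb : |b| < R) :
    ∫ y, (fderiv ℝ f (x + a • y) (a • y) * g (x + b • y)
      - f (x + a • y) * fderiv ℝ g (x + b • y) (b • y)) ∂ballMeasure n = 0 := by
  have hpre (c : ℝ) : IsOpen ((fun y => x + c • y) ⁻¹' ball x R) :=
    isOpen_ball.preimage (by fun_prop)
  have hfa := hf.comp_add_smul isOpen_ball x a
  have hgb := hg.comp_add_smul isOpen_ball x b
  have hBV (c : ℝ) (hc : |c| < R) : closedBall 0 1 ⊆ (fun y : En n => x + c • y) ⁻¹' ball x R :=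
    fun y hy => mem_preimage.2 (add_smul_mem_ball hc hy)
  have h := (hfa.mono inter_subset_left).integral_radial_wronskian_eq_zero
    ((hpre a).inter (hpre b)) (subset_inter (hBV a ha) (hBV b hb)) (hgb.mono inter_subset_right)
  simp only [fderiv_comp_const_add_smul f x a, fderiv_comp_const_add_smul g x b,
    _root_.smul_apply] at h
  simpa only [map_smul] using h

theorem continuousOn_comp_add_smul {F : Type*} [TopologicalSpace F] {φ : En n → F} {x : En n}
    {R : ℝ} (hφ : ContinuousOn φ (ball x R)) {X : Type*} [TopologicalSpace X] {c : X → ℝ}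
    (hc : Continuous c) {S : Set X} (hcS : ∀ τ ∈ S, |c τ| < R) :
    ContinuousOn (fun p : X × En n => φ (x + c p.1 • p.2)) (S ×ˢ closedBall 0 1) :=
  hφ.comp (f := fun p : X × En n => x + c p.1 • p.2) (by fun_prop)
    fun _ hp => add_smul_mem_ball (hcS _ hp.1) hp.2

/-- Moving the two radii in opposite directions at the same logarithmic speed does not change the
integral, as its derivative is a flux of the field of `integral_radial_wronskian_eq_zero`. -/
theorem HarmonicOnSet.hasDerivAt_integral_dilation {x : En n} {R s t : ℝ} (hs : 0 < s)
    (ht : 0 < t) (hf : HarmonicOnSet f (ball x R)) (hg : HarmonicOnSet g (ball x R)) {τ : ℝ}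
    (hsτ : s * Real.exp τ < R) (htτ : t * Real.exp (-τ) < R) :
    HasDerivAt (fun τ => ∫ y, f (x + (s * Real.exp τ) • y) * g (x + (t * Real.exp (-τ)) • y)
      ∂ballMeasure n) 0 τ := by
  let a (τ : ℝ) : ℝ := s * Real.exp τ
  let b (τ : ℝ) : ℝ := t * Real.exp (-τ)
  let S : Set ℝ := {τ | a τ < R ∧ b τ < R}
  have ha : Continuous a := by fun_prop
  have hb : Continuous b := by fun_prop
  have hS : IsOpen S := (isOpen_lt ha continuous_const).inter (isOpen_lt hb continuous_const)
  have haS (τ) (hτ : τ ∈ S) : |a τ| < R := by rw [abs_of_pos (by positivity)]; exact hτ.1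
  have hbS (τ) (hτ : τ ∈ S) : |b τ| < R := by rw [abs_of_pos (by positivity)]; exact hτ.2
  have hda (τ : ℝ) : HasDerivAt a (a τ) τ := (Real.hasDerivAt_exp τ).const_mul s
  have hdb (τ : ℝ) : HasDerivAt b (-b τ) τ := by
    simpa [b] using ((Real.hasDerivAt_exp (-τ)).comp τ (hasDerivAt_neg τ)).const_mul t
  have hfa := continuousOn_comp_add_smul hf.1.continuousOn ha haS
  have hgb := continuousOn_comp_add_smul hg.1.continuousOn hb hbS
  have hfa' := continuousOn_comp_add_smul (hf.contDiffOn_fderiv isOpen_ball).continuousOn ha haS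
  have hgb' := continuousOn_comp_add_smul (hg.contDiffOn_fderiv isOpen_ball).continuousOn hb hbS
  have h := hasDerivAt_setIntegral_of_isCompact (μ := ballMeasure n) (isCompact_closedBall 0 1)
    measurableSet_closedBall hS
    (F := fun τ y => f (x + a τ • y) * g (x + b τ • y))
    (F' := fun τ y => fderiv ℝ f (x + a τ • y) (a τ • y) * g (x + b τ • y)
      - f (x + a τ • y) * fderiv ℝ g (x + b τ • y) (b τ • y))
    (fun τ hτ => (hfa.mul hgb).comp (f := fun y => (τ, y)) (by fun_prop) fun y hy => ⟨hτ, hy⟩)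
    (((hfa'.clm_apply (by fun_prop)).mul hgb).sub (hfa.mul (hgb'.clm_apply (by fun_prop))))
    (fun τ hτ y hy => by
      have hfτ := (hf.hasFDerivAt isOpen_ball (add_smul_mem_ball (haS τ hτ) hy)).comp_hasDerivAt τ
        (((hda τ).smul_const y).const_add x)
      have hgτ := (hg.hasFDerivAt isOpen_ball (add_smul_mem_ball (hbS τ hτ) hy)).comp_hasDerivAt τ
        (((hdb τ).smul_const y).const_add x)
      refine (hfτ.mul hgτ).congr_deriv ?_
      simp only [Function.comp_apply, neg_smul, map_neg, mul_neg, ← sub_eq_add_neg])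
    (t₀ := τ) ⟨hsτ, htτ⟩
  simp only [restrict_ballMeasure] at h
  rwa [hf.integral_rescaled_wronskian_eq_zero hg (haS τ ⟨hsτ, htτ⟩) (hbS τ ⟨hsτ, htτ⟩)] at h

theorem HarmonicOnSet.integral_mul_dilation {x : En n} {R s t s' t' : ℝ}
    (hf : HarmonicOnSet f (ball x R)) (hg : HarmonicOnSet g (ball x R))
    (hs : s ∈ Ioo 0 R) (ht : t ∈ Ioo 0 R) (hs' : s' ∈ Ioo 0 R) (ht' : t' < R)
    (hst : s * t = s' * t') :
    ∫ y, f (x + s • y) * g (x + t • y) ∂ballMeasure n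
      = ∫ y, f (x + s' • y) * g (x + t' • y) ∂ballMeasure n := by
  have hs₀ := hs.1
  have ht₀ := ht.1
  have hs'₀ := hs'.1
  let S : Set ℝ := {τ | s * Real.exp τ < R ∧ t * Real.exp (-τ) < R}
  have hS : IsOpen S := .inter
    (isOpen_lt (by fun_prop : Continuous fun τ => s * Real.exp τ) continuous_const)
    (isOpen_lt (by fun_prop : Continuous fun τ => t * Real.exp (-τ)) continuous_const)
  have hSc : S.OrdConnected := by
    refine ⟨fun τ₁ h₁ τ₂ h₂ τ hτ => ⟨lt_of_le_of_lt ?_ h₂.1, lt_of_le_of_lt ?_ h₁.2⟩⟩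
    · gcongr
      exact hτ.2
    · gcongr
      exact hτ.1
  have hderiv := fun τ (hτ : τ ∈ S) => hf.hasDerivAt_integral_dilation hs₀ ht₀ hg hτ.1 hτ.2
  have hexp : Real.exp (Real.log (s' / s)) = s' / s := Real.exp_log (by positivity)
  have hs'_eq : s * Real.exp (Real.log (s' / s)) = s' := by rw [hexp]; field_simp
  have ht'_eq : t * Real.exp (-Real.log (s' / s)) = t' := by
    rw [Real.exp_neg, hexp]
    field_simp
    linarith
  have hconst := hS.is_const_of_deriv_eq_zero hSc.isPreconnected
    (fun τ hτ => (hderiv τ hτ).differentiableAt.differentiableWithinAt)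
    (fun τ hτ => (hderiv τ hτ).deriv) (x := 0) (y := Real.log (s' / s))
    (by simpa [S] using ⟨hs.2, ht.2⟩) ⟨hs'_eq.trans_lt hs'.2, ht'_eq.trans_lt ht'⟩
  simpa only [hs'_eq, ht'_eq, Real.exp_zero, neg_zero, mul_one] using hconst

theorem continuousOn_integral_comp_add_smul {E : Type*} [NormedAddCommGroup E] [NormedSpace ℝ E]
    {φ : En n → E} {x : En n} {R : ℝ} (hφ : ContinuousOn φ (ball x R)) :
    ContinuousOn (fun s : ℝ => ∫ y, φ (x + s • y) ∂ballMeasure n) (Ioo (-R) R) := by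
  simpa only [restrict_ballMeasure] using continuousOn_setIntegral_of_isCompact
    (μ := ballMeasure n) (isCompact_closedBall 0 1) measurableSet_closedBall
    (continuousOn_comp_add_smul hφ continuous_id fun τ hτ => abs_lt.2 hτ)

theorem HarmonicOnSet.integral_eq {x : En n} {R s : ℝ} (hf : HarmonicOnSet f (ball x R))
    (hs : s ∈ Ioo 0 R) : ∫ y, f (x + s • y) ∂ballMeasure n = f x := by
  have hR : 0 < R := hs.1.trans hs.2
  have hzero : Tendsto (fun s : ℝ => ∫ y, f (x + s • y) ∂ballMeasure n) (𝓝[>] 0) (𝓝 (f x)) := by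
    have h := (continuousOn_integral_comp_add_smul hf.1.continuousOn).continuousAt
      (Ioo_mem_nhds (neg_neg_of_pos hR) hR)
    simpa [ContinuousAt] using h.tendsto.mono_left nhdsWithin_le_nhds
  refine tendsto_nhds_unique (tendsto_const_nhds.congr' ?_) hzero
  filter_upwards [Ioo_mem_nhdsGT hR] with s' hs'
  simpa using hf.integral_mul_dilation (harmonicOnSet_const 1) hs hs' hs' hs.2 (mul_comm s s')

end Harmonic

section MeanValue

variable {E F : Type*} [NormedAddCommGroup E] [NormedSpace ℝ E] [NormedAddCommGroup F]
  [NormedSpace ℝ F] {f g : En n → E} {U V : Set (En n)}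

/-- Continuous functions with the mean value property for the rescaled measures `ballMeasure n`.
Unlike harmonicity this makes sense for vector-valued functions, such as higher derivatives, and
visibly passes to uniform limits. -/
structure MeanValueOn (f : En n → E) (U : Set (En n)) : Prop where
  continuousOn : ContinuousOn f U
  integral_eq ⦃x : En n⦄ ⦃r : ℝ⦄ (hr : 0 < r) (hxr : closedBall x r ⊆ U) :
    ∫ y, f (x + r • y) ∂ballMeasure n = f x

theorem exists_ball_subset_of_closedBall_subset (hU : IsOpen U) {x : En n} {r : ℝ} (hr : 0 ≤ r)
    (hxr : closedBall x r ⊆ U) : ∃ R > r, ball x R ⊆ U := by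
  obtain ⟨δ, hδ, hδU⟩ := (isCompact_closedBall x r).exists_thickening_subset_open hU hxr
  exact ⟨δ + r, by linarith, thickening_closedBall hδ hr x ▸ hδU⟩

theorem HarmonicOnSet.meanValueOn {u : En n → ℝ} (hU : IsOpen U) (hu : HarmonicOnSet u U) :
    MeanValueOn u U where
  continuousOn := hu.1.continuousOn
  integral_eq x r hr hxr := by
    obtain ⟨R, hR, hRU⟩ := exists_ball_subset_of_closedBall_subset hU hr.le hxr
    exact (hu.mono hRU).integral_eq ⟨hr, hR⟩

theorem add_smul_mem_closedBall {x y : En n} {s : ℝ} (hs : 0 ≤ s)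
    (hy : y ∈ closedBall (0 : En n) 1) : x + s • y ∈ closedBall x s := by
  rw [mem_closedBall_zero_iff] at hy
  rw [mem_closedBall, dist_self_add_left, norm_smul, Real.norm_of_nonneg hs]
  nlinarith

namespace MeanValueOn

theorem mono (hf : MeanValueOn f U) (hVU : V ⊆ U) : MeanValueOn f V where
  continuousOn := hf.continuousOn.mono hVU
  integral_eq _ _ hr hxr := hf.integral_eq hr (hxr.trans hVU)

theorem comp_add_smul (hf : MeanValueOn f U) (x : En n) {r : ℝ} (hr : 0 < r) :
    MeanValueOn (fun y => f (x + r • y)) ((fun y => x + r • y) ⁻¹' U) where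
  continuousOn := hf.continuousOn.comp (by fun_prop) fun y hy => hy
  integral_eq y s hs hys := by
    have hsub : closedBall (x + r • y) (r * s) ⊆ U := by
      intro z hz
      have hz' : r⁻¹ • (z - x) ∈ closedBall y s := by
        have hsplit : r⁻¹ • (z - x) - y = r⁻¹ • (z - (x + r • y)) := by
          rw [← sub_sub, smul_sub _ (z - x), inv_smul_smul₀ hr.ne']
        rw [mem_closedBall_iff_norm] at hz ⊢
        rw [hsplit, norm_smul, norm_inv, Real.norm_of_nonneg hr.le, inv_mul_le_iff₀ hr]
        exact hz
      simpa [smul_inv_smul₀ hr.ne'] using hys hz'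
    rw [← hf.integral_eq (mul_pos hr hs) hsub]
    simp only [smul_add, smul_smul, add_assoc]

theorem integrable_comp_add_smul (hf : MeanValueOn f U) {x : En n} {r : ℝ} (hr : 0 ≤ r)
    (hxr : closedBall x r ⊆ U) : Integrable (fun y => f (x + r • y)) (ballMeasure n) :=
  integrable_ballMeasure (hf.continuousOn.comp (by fun_prop) fun _ hy =>
    hxr (add_smul_mem_closedBall hr hy))

theorem sub (hf : MeanValueOn f U) (hg : MeanValueOn g U) :
    MeanValueOn (fun x => f x - g x) U where
  continuousOn := hf.continuousOn.sub hg.continuousOn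
  integral_eq x r hr hxr := by
    rw [integral_sub (hf.integrable_comp_add_smul hr.le hxr)
      (hg.integrable_comp_add_smul hr.le hxr), hf.integral_eq hr hxr, hg.integral_eq hr hxr]

theorem clm_comp [CompleteSpace E] [CompleteSpace F] (hf : MeanValueOn f U) (L : E →L[ℝ] F) :
    MeanValueOn (fun x => L (f x)) U where
  continuousOn := L.continuous.comp_continuousOn hf.continuousOn
  integral_eq x r hr hxr := by
    rw [L.integral_comp_comm (hf.integrable_comp_add_smul hr.le hxr), hf.integral_eq hr hxr]

end MeanValueOn

section InteriorEstimate

theorem ballDensity_neg (y : En n) : ballDensity (-y) = ballDensity y := by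
  simp only [ballDensity, ballWeight, norm_neg]

open scoped Convolution in
theorem MeanValueOn.exists_eventuallyEq_convolution (hf : MeanValueOn f U) (hU : IsOpen U)
    (hBU : closedBall 0 1 ⊆ U) : ∃ R, closedBall 0 R ⊆ U ∧ f =ᶠ[𝓝 0]
      ballDensity ⋆[ContinuousLinearMap.lsmul ℝ ℝ, volume] (closedBall 0 R).indicator f := by
  obtain ⟨R', hR', hR'U⟩ := exists_ball_subset_of_closedBall_subset hU zero_le_one hBU
  obtain ⟨R, hR, hRR'⟩ := exists_between hR'
  have hRU : closedBall 0 R ⊆ U := (closedBall_subset_ball hRR').trans hR'U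
  refine ⟨R, hRU, ?_⟩
  filter_upwards [ball_mem_nhds 0 (sub_pos.2 hR)] with z hz
  have hzR : closedBall z 1 ⊆ closedBall 0 R :=
    closedBall_subset_closedBall' (by linarith [mem_ball.1 hz])
  rw [convolution_def, ← integral_neg_eq_self, ← hf.integral_eq one_pos (hzR.trans hRU),
    integral_ballMeasure]
  refine integral_congr_ae (ae_of_all _ fun t => ?_)
  by_cases ht : t ∈ ball (0 : En n) 1
  · have hzt : z + t ∈ closedBall 0 R :=
      hzR (by simpa using (mem_ball_zero_iff.1 ht).le)
    simp [ballDensity_neg, indicator_of_mem hzt]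
  · simp [ballDensity_neg, ballDensity_eq_zero ht]

theorem MeanValueOn.locallyIntegrable_indicator_closedBall (hf : MeanValueOn f U) {R : ℝ}
    (hRU : closedBall 0 R ⊆ U) : LocallyIntegrable ((closedBall 0 R).indicator f) :=
  (((hf.continuousOn.mono hRU).integrableOn_compact
    (isCompact_closedBall 0 R)).integrable_indicator measurableSet_closedBall).locallyIntegrable

/-- The constant in the gradient estimate for functions with the mean value property. -/
def gradientConst (n : ℕ) : ℝ := ∫ y : En n, ‖fderiv ℝ ballDensity y‖

theorem gradientConst_nonneg : 0 ≤ gradientConst n := integral_nonneg fun _ => norm_nonneg _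

theorem MeanValueOn.contDiffAt_zero [CompleteSpace E] (hf : MeanValueOn f U) (hU : IsOpen U)
    (hBU : closedBall 0 1 ⊆ U) {k : ℕ∞} : ContDiffAt ℝ k f 0 := by
  obtain ⟨R, hRU, hconv⟩ := hf.exists_eventuallyEq_convolution hU hBU
  exact (hasCompactSupport_ballDensity.contDiff_convolution_left _ contDiff_ballDensity
    (hf.locallyIntegrable_indicator_closedBall hRU)).contDiffAt.congr_of_eventuallyEq hconv

theorem fderiv_ballDensity_eq_zero {y : En n} (hy : y ∉ closedBall (0 : En n) 1) :
    fderiv ℝ ballDensity y = 0 := by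
  have hzero : ballDensity =ᶠ[𝓝 y] fun _ => 0 := by
    filter_upwards [isClosed_closedBall.isOpen_compl.mem_nhds hy] with z hz
    exact ballDensity_eq_zero fun h => hz (ball_subset_closedBall h)
  rw [hzero.fderiv_eq, fderiv_fun_const, Pi.zero_apply]

theorem integrable_norm_fderiv_ballDensity :
    Integrable fun y : En n => ‖fderiv ℝ ballDensity y‖ :=
  (contDiff_ballDensity (k := 1)).continuous_fderiv one_ne_zero |>.norm
    |>.integrable_of_hasCompactSupport (hasCompactSupport_ballDensity.fderiv ℝ).norm

theorem MeanValueOn.norm_fderiv_zero_le [CompleteSpace E] (hf : MeanValueOn f U)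
    (hU : IsOpen U) (hBU : closedBall 0 1 ⊆ U) {M : ℝ} (hM : ∀ y ∈ closedBall 0 1, ‖f y‖ ≤ M) :
    ‖fderiv ℝ f 0‖ ≤ gradientConst n * M := by
  obtain ⟨R, hRU, hconv⟩ := hf.exists_eventuallyEq_convolution hU hBU
  have hL (A : En n →L[ℝ] ℝ) (e : E) :
      ‖(ContinuousLinearMap.lsmul ℝ ℝ).precompL (En n) A e‖ ≤ ‖A‖ * ‖e‖ :=
    ContinuousLinearMap.opNorm_le_bound _ (by positivity) fun y => by
      rw [ContinuousLinearMap.precompL_apply, ContinuousLinearMap.lsmul_apply, norm_smul,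
        mul_right_comm]
      gcongr
      exact A.le_opNorm y
  rw [hconv.fderiv_eq, (hasCompactSupport_ballDensity.hasFDerivAt_convolution_left _
    contDiff_ballDensity (hf.locallyIntegrable_indicator_closedBall hRU) 0).fderiv, convolution_def,
    gradientConst, ← integral_mul_const]
  refine norm_integral_le_of_norm_le (integrable_norm_fderiv_ballDensity.mul_const M)
    (ae_of_all _ fun t => (hL _ _).trans ?_)
  by_cases ht : t ∈ closedBall (0 : En n) 1
  · gcongr
    exact (norm_indicator_le_norm_self f _).trans (hM _ (by simpa using ht))
  · rw [fderiv_ballDensity_eq_zero ht, norm_zero, zero_mul, zero_mul]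

theorem MeanValueOn.contDiffOn [CompleteSpace E] (hf : MeanValueOn f U) (hU : IsOpen U)
    {k : ℕ∞} : ContDiffOn ℝ k f U := by
  intro x hx
  obtain ⟨r, hr, hrU⟩ := nhds_basis_closedBall.mem_iff.1 (hU.mem_nhds hx)
  have h := (hf.comp_add_smul x hr).contDiffAt_zero (hU.preimage (by fun_prop)) (k := k)
    fun y hy => hrU (add_smul_mem_closedBall hr.le hy)
  have hcomp : ContDiffAt ℝ k ((fun y => f (x + r • y)) ∘ fun z => r⁻¹ • (z - x)) x :=
    ContDiffAt.comp x (by simpa using h) (by fun_prop)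
  refine (hcomp.congr_of_eventuallyEq (Eventually.of_forall fun z => ?_)).contDiffWithinAt
  simp [smul_inv_smul₀ hr.ne']

theorem MeanValueOn.norm_fderiv_le [CompleteSpace E] (hf : MeanValueOn f U) (hU : IsOpen U)
    {x : En n} {r M : ℝ} (hr : 0 < r) (hxr : closedBall x r ⊆ U)
    (hM : ∀ y ∈ closedBall x r, ‖f y‖ ≤ M) : ‖fderiv ℝ f x‖ ≤ gradientConst n / r * M := by
  have h := (hf.comp_add_smul x hr).norm_fderiv_zero_le (hU.preimage (by fun_prop))
    (fun y hy => mem_preimage.2 (hxr (add_smul_mem_closedBall hr.le hy)))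
    fun y hy => hM _ (add_smul_mem_closedBall hr.le hy)
  simp only [fderiv_comp_const_add_smul f x r, smul_zero, add_zero, norm_smul,
    Real.norm_of_nonneg hr.le] at h
  rwa [div_mul_eq_mul_div, le_div_iff₀' hr]

end InteriorEstimate

protected theorem MeanValueOn.fderiv [CompleteSpace E] (hf : MeanValueOn f U) (hU : IsOpen U) :
    MeanValueOn (fderiv ℝ f) U where
  continuousOn := (hf.contDiffOn hU (k := 1)).continuousOn_fderiv_of_isOpen hU le_rfl
  integral_eq x r hr hxr := by
    obtain ⟨R, hR, hRU⟩ := exists_ball_subset_of_closedBall_subset hU hr.le hxr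
    have hmem (z : En n) (hz : z ∈ ball x (R - r)) (y : En n) (hy : y ∈ closedBall 0 1) :
        z + r • y ∈ U :=
      hRU (closedBall_subset_ball' (by linarith [mem_ball.1 hz])
        (add_smul_mem_closedBall hr.le hy))
    have hf' := (hf.contDiffOn hU (k := 1)).continuousOn_fderiv_of_isOpen hU le_rfl
    have hderiv := hasFDerivAt_setIntegral_of_isCompact (μ := ballMeasure n)
      (isCompact_closedBall 0 1) measurableSet_closedBall (isOpen_ball (x := x) (ε := R - r))
      (F := fun z y => f (z + r • y)) (F' := fun z y => fderiv ℝ f (z + r • y))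
      (fun z hz => hf.continuousOn.comp (by fun_prop) (hmem z hz))
      (hf'.comp (f := fun p : En n × En n => p.1 + r • p.2) (by fun_prop)
        fun p hp => hmem p.1 hp.1 p.2 hp.2)
      (fun z hz y hy => (((hf.contDiffOn hU (k := 1)).differentiableOn one_ne_zero).differentiableAt
        (hU.mem_nhds (hmem z hz y hy))).hasFDerivAt.comp z ((hasFDerivAt_id z).add_const _))
      (mem_ball_self (sub_pos.2 hR))
    simp only [restrict_ballMeasure] at hderiv
    refine (hderiv.congr_of_eventuallyEq ?_).fderiv.symm
    filter_upwards [ball_mem_nhds x (sub_pos.2 hR)] with z hz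
    exact (hf.integral_eq hr ((closedBall_subset_ball' (by linarith [mem_ball.1 hz])).trans
      hRU)).symm

protected theorem MeanValueOn.iteratedFDeriv [CompleteSpace E] (hf : MeanValueOn f U)
    (hU : IsOpen U) : ∀ k : ℕ, MeanValueOn (iteratedFDeriv ℝ k f) U
  | 0 => hf.clm_comp (continuousMultilinearCurryFin0 ℝ (En n)
      E).symm.toContinuousLinearEquiv.toContinuousLinearMap
  | k + 1 => ((hf.iteratedFDeriv hU k).fderiv hU).clm_comp (continuousMultilinearCurryLeftEquiv ℝ
      (fun _ : Fin (k + 1) => En n) E).symm.toContinuousLinearEquiv.toContinuousLinearMap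

theorem MeanValueOn.norm_iteratedFDeriv_le [CompleteSpace E] (hf : MeanValueOn f U)
    (hU : IsOpen U) {r M : ℝ} (hr : 0 < r) (k : ℕ) {x : En n} (hxr : closedBall x r ⊆ U)
    (hM : ∀ y ∈ closedBall x r, ‖f y‖ ≤ M) :
    ‖iteratedFDeriv ℝ k f x‖ ≤ (2 ^ k * gradientConst n / r) ^ k * M := by
  induction k generalizing x r with
  | zero => simpa using hM x (mem_closedBall_self hr.le)
  | succ k ih =>
    have hM₀ : 0 ≤ M := (norm_nonneg _).trans (hM x (mem_closedBall_self hr.le))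
    have hg := gradientConst_nonneg (n := n)
    have hhalf (y) (hy : y ∈ closedBall x (r / 2)) : closedBall y (r / 2) ⊆ closedBall x r :=
      closedBall_subset_closedBall' (by linarith [mem_closedBall.1 hy])
    have hle := (hf.iteratedFDeriv hU k).norm_fderiv_le hU (half_pos hr)
      ((closedBall_subset_closedBall (by linarith)).trans hxr) fun y hy =>
        ih (half_pos hr) ((hhalf y hy).trans hxr) fun z hz => hM z (hhalf y hy hz)
    rw [norm_fderiv_iteratedFDeriv] at hle
    have htwo : (1 : ℝ) ≤ 2 ^ k := one_le_pow₀ one_le_two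
    calc _ ≤ gradientConst n / (r / 2) * ((2 ^ k * gradientConst n / (r / 2)) ^ k * M) := hle
      _ = 1 * (2 * gradientConst n / r) * ((2 ^ (k + 1) * gradientConst n / r) ^ k * M) := by
        congr 1 <;> field_simp; ring
      _ ≤ 2 ^ k * (2 * gradientConst n / r) * ((2 ^ (k + 1) * gradientConst n / r) ^ k * M) := by
        gcongr
      _ = _ := by ring

theorem MeanValueOn.norm_sub_le [CompleteSpace E] (hf : MeanValueOn f U) (hU : IsOpen U)
    {x y : En n} {r s M : ℝ} (hr : 0 < r) (hxr : closedBall x (s + r) ⊆ U)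
    (hM : ∀ z ∈ closedBall x (s + r), ‖f z‖ ≤ M) (hy : y ∈ closedBall x s) :
    ‖f y - f x‖ ≤ gradientConst n / r * M * ‖y - x‖ := by
  have hs : 0 ≤ s := dist_nonneg.trans (mem_closedBall.1 hy)
  have hball (z) (hz : z ∈ closedBall x s) : closedBall z r ⊆ closedBall x (s + r) :=
    closedBall_subset_closedBall' (by linarith [mem_closedBall.1 hz])
  exact (convex_closedBall x s).norm_image_sub_le_of_norm_fderiv_le
    (fun z hz => ((hf.contDiffOn hU (k := 1)).differentiableOn one_ne_zero).differentiableAt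
      (hU.mem_nhds (hxr (hball z hz (mem_closedBall_self hr.le)))))
    (fun z hz => hf.norm_fderiv_le hU hr ((hball z hz).trans hxr) fun w hw => hM w (hball z hz hw))
    (mem_closedBall_self hs) hy

end MeanValue

section Limits

variable {E : Type*} [NormedAddCommGroup E] [NormedSpace ℝ E] {U : Set (En n)}
  {ι : Type*} {l : Filter ι} {u : ι → En n → E} {w : En n → E}

theorem tendsto_integral_ballMeasure [l.NeBot] (hu : ∀ i, ContinuousOn (u i) (closedBall 0 1))
    (h : TendstoUniformlyOn u w l (closedBall 0 1)) :
    Tendsto (fun i => ∫ y, u i y ∂ballMeasure n) l (𝓝 (∫ y, w y ∂ballMeasure n)) := by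
  have hw : ContinuousOn w (closedBall 0 1) := h.continuousOn (Frequently.of_forall hu)
  rw [Metric.tendsto_nhds]
  intro ε hε
  filter_upwards [Metric.tendstoUniformlyOn_iff.1 h (ε / 2) (half_pos hε)] with i hi
  rw [dist_eq_norm, ← integral_sub (integrable_ballMeasure (hu i)) (integrable_ballMeasure hw)]
  refine (norm_integral_le_of_norm_le_const (C := ε / 2) ?_).trans_lt ?_
  · filter_upwards [ae_ballMeasure_mem_closedBall] with y hy
    rw [← dist_eq_norm, dist_comm]
    exact (hi _ hy).le
  · simpa using half_lt_self hε

theorem MeanValueOn.of_tendstoUniformlyOn [l.NeBot] (hu : ∀ i, MeanValueOn (u i) U)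
    (h : TendstoUniformlyOn u w l U) : MeanValueOn w U where
  continuousOn := h.continuousOn (Frequently.of_forall fun i => (hu i).continuousOn)
  integral_eq x r hr hxr := by
    have hmem (y) (hy : y ∈ closedBall (0 : En n) 1) : x + r • y ∈ U :=
      hxr (add_smul_mem_closedBall hr.le hy)
    have hlim : Tendsto (fun i => u i x) l (𝓝 (∫ y, w (x + r • y) ∂ballMeasure n)) := by
      simp_rw [← (hu _).integral_eq hr hxr]
      exact tendsto_integral_ballMeasure
        (fun i => (hu i).continuousOn.comp (by fun_prop) hmem)
        ((h.comp fun y => x + r • y).mono hmem)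
    exact tendsto_nhds_unique hlim
      (h.tendsto_at (hxr (mem_closedBall_self hr.le)))

theorem MeanValueOn.tendsto_iteratedFDeriv [l.NeBot] [CompleteSpace E]
    (hu : ∀ i, MeanValueOn (u i) U) (hU : IsOpen U) (h : TendstoUniformlyOn u w l U) (k : ℕ)
    {x : En n} (hx : x ∈ U) :
    Tendsto (fun i => iteratedFDeriv ℝ k (u i) x) l (𝓝 (iteratedFDeriv ℝ k w x)) := by
  obtain ⟨r, hr, hrU⟩ := nhds_basis_closedBall.mem_iff.1 (hU.mem_nhds hx)
  have hw := MeanValueOn.of_tendstoUniformlyOn hu h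
  have hsmooth {f : En n → E} (hf : MeanValueOn f U) : ContDiffAt ℝ k f x :=
    (hf.contDiffOn hU (k := k)).contDiffAt (hU.mem_nhds hx)
  let C := (2 ^ k * gradientConst n / r) ^ k
  have hC : 0 ≤ C := by
    have := gradientConst_nonneg (n := n)
    positivity
  rw [Metric.tendsto_nhds]
  intro ε hε
  filter_upwards [Metric.tendstoUniformlyOn_iff.1 h (ε / (C + 1)) (by positivity)] with i hi
  have hle := ((hu i).sub hw).norm_iteratedFDeriv_le hU hr k hrU fun y hy => by
    rw [← dist_eq_norm, dist_comm]
    exact (hi y (hrU hy)).le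
  rw [fun_iteratedFDeriv_sub_apply (hsmooth (hu i)) (hsmooth hw), ← dist_eq_norm] at hle
  calc _ ≤ C * (ε / (C + 1)) := hle
    _ < (C + 1) * (ε / (C + 1)) := by gcongr; linarith
    _ = ε := by field_simp

end Limits

section HarmonicOfMeanValue

theorem continuousOn_laplacianAt {f : En n → ℝ} {U : Set (En n)} (hU : IsOpen U)
    (hf : ContDiffOn ℝ 2 f U) : ContinuousOn (laplacianAt f) U := by
  have hf₁ : ContDiffOn ℝ 1 (fderiv ℝ f) U := hf.fderiv_of_isOpen hU le_rfl
  have hf₂ : ContinuousOn (fderiv ℝ (fderiv ℝ f)) U :=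
    hf₁.continuousOn_fderiv_of_isOpen hU le_rfl
  refine (continuousOn_finsetSum Finset.univ fun i _ => ((hf₂.clm_apply
    continuousOn_const).clm_apply continuousOn_const)).congr
    fun x _ => laplacianAt_eq_sum_fderiv f x

theorem integral_ballPotential_pos : 0 < ∫ y : En n, ballPotential y :=
  continuous_ballPotential.integral_pos_of_hasCompactSupport_nonneg_nonzero
    (HasCompactSupport.intro (isCompact_closedBall 0 1) fun _ hy =>
      ballPotential_eq_zero fun h => hy (ball_subset_closedBall h))
    (fun y => by
      by_cases hy : y ∈ ball (0 : En n) 1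
      · exact (ballPotential_pos hy).le
      · exact (ballPotential_eq_zero hy).ge)
    (x := 0) (ballPotential_pos (mem_ball_self one_pos)).ne'

theorem setIntegral_ballPotential_mul (φ : En n → ℝ) :
    ∫ y in closedBall 0 1, ballPotential y * φ y = ∫ y, ballPotential y * φ y :=
  setIntegral_eq_integral_of_forall_compl_eq_zero fun y hy => by
    rw [ballPotential_eq_zero fun h => hy (ball_subset_closedBall h), zero_mul]

theorem hasDerivAt_integral_comp_add_smul {f : En n → ℝ} {x : En n} {R r : ℝ}
    (hf : ContDiffOn ℝ 1 f (ball x R)) (hr : |r| < R) :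
    HasDerivAt (fun s => ∫ y, f (x + s • y) ∂ballMeasure n)
      (∫ y, fderiv ℝ f (x + r • y) y ∂ballMeasure n) r := by
  have hmem (s : ℝ) (hs : s ∈ Ioo (-R) R) (y : En n) (hy : y ∈ closedBall 0 1) :
      x + s • y ∈ ball x R :=
    add_smul_mem_ball (abs_lt.2 hs) hy
  have hf' : ContinuousOn (fderiv ℝ f) (ball x R) :=
    hf.continuousOn_fderiv_of_isOpen isOpen_ball le_rfl
  have h := hasDerivAt_setIntegral_of_isCompact (μ := ballMeasure n)
    (isCompact_closedBall 0 1) measurableSet_closedBall isOpen_Ioo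
    (F := fun s y => f (x + s • y)) (F' := fun s y => fderiv ℝ f (x + s • y) y)
    (fun s hs => hf.continuousOn.comp (by fun_prop) (hmem s hs))
    ((hf'.comp (f := fun p : ℝ × En n => x + p.1 • p.2) (by fun_prop)
      fun p hp => hmem p.1 hp.1 p.2 hp.2).clm_apply continuousOn_snd)
    (fun s hs y hy => by
      have hfy := ((hf.differentiableOn one_ne_zero).differentiableAt
        (isOpen_ball.mem_nhds (hmem s hs y hy))).hasFDerivAt
      exact (hfy.comp_hasDerivAt s (((hasDerivAt_id s).smul_const y).const_add x)).congr_deriv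
        (by rw [one_smul]))
    (abs_lt.1 hr)
  simpa only [restrict_ballMeasure] using h

theorem integral_fderiv_comp_add_smul {f : En n → ℝ} {x : En n} {R r : ℝ}
    (hf : ContDiffOn ℝ 2 f (ball x R)) (hr : r ∈ Ioo 0 R) :
    ∫ y, fderiv ℝ f (x + r • y) y ∂ballMeasure n
      = r * ∫ y, ballPotential y * laplacianAt f (x + r • y) := by
  have hmem (y : En n) (hy : y ∈ closedBall 0 1) : x + r • y ∈ ball x R :=
    add_smul_mem_ball (by rw [abs_of_pos hr.1]; exact hr.2) hy
  have hgreen := integral_fderiv_self_ballMeasure (f := fun y => f (x + r • y))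
    (U := (fun y => x + r • y) ⁻¹' ball x R) (isOpen_ball.preimage (by fun_prop))
    (fun y hy => mem_preimage.2 (hmem y hy)) (hf.comp (by fun_prop) fun y hy => hy)
  have hlap : ∫ y, ballPotential y * laplacianAt (fun y => f (x + r • y)) y
      = r ^ 2 * ∫ y, ballPotential y * laplacianAt f (x + r • y) := by
    rw [← integral_const_mul]
    refine integral_congr_ae (ae_of_all _ fun y => ?_)
    by_cases hy : y ∈ ball (0 : En n) 1
    · simp only
      rw [laplacianAt_comp_const_add_smul (hf.contDiffAt
        (isOpen_ball.mem_nhds (hmem y (ball_subset_closedBall hy)))), mul_left_comm]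
    · simp only [ballPotential_eq_zero hy, zero_mul, mul_zero]
  simp only [fderiv_comp_const_add_smul f x r, _root_.smul_apply, smul_eq_mul, integral_const_mul,
    hlap] at hgreen
  refine mul_left_cancel₀ hr.1.ne' (hgreen.trans ?_)
  ring

theorem MeanValueOn.integral_ballPotential_mul_laplacianAt {f : En n → ℝ} {x : En n} {R r : ℝ}
    (hf : MeanValueOn f (ball x R)) (hr : r ∈ Ioo 0 R) :
    ∫ y, ballPotential y * laplacianAt f (x + r • y) = 0 := by
  have hderiv := hasDerivAt_integral_comp_add_smul (hf.contDiffOn isOpen_ball (k := 1))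
    (abs_lt.2 ⟨by linarith [hr.1, hr.2], hr.2⟩)
  rw [integral_fderiv_comp_add_smul (hf.contDiffOn isOpen_ball (k := 2)) hr] at hderiv
  have hconst : HasDerivAt (fun s => ∫ y, f (x + s • y) ∂ballMeasure n) 0 r := by
    refine (hasDerivAt_const r (f x)).congr_of_eventuallyEq ?_
    filter_upwards [isOpen_Ioo.mem_nhds hr] with s hs
    exact hf.integral_eq hs.1 (closedBall_subset_ball hs.2)
  exact (mul_eq_zero.1 (hderiv.unique hconst)).resolve_left hr.1.ne'

theorem MeanValueOn.harmonicOnSet {f : En n → ℝ} {U : Set (En n)} (hf : MeanValueOn f U)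
    (hU : IsOpen U) : HarmonicOnSet f U := by
  refine ⟨hf.contDiffOn hU (k := 2), fun x hx => ?_⟩
  obtain ⟨R, hR, hRU⟩ := Metric.isOpen_iff.1 hU x hx
  have hlap : ContinuousOn (laplacianAt f) (ball x R) :=
    continuousOn_laplacianAt isOpen_ball ((hf.contDiffOn hU (k := 2)).mono hRU)
  have hcont := continuousOn_setIntegral_of_isCompact (μ := volume)
    (F := fun s y => ballPotential y * laplacianAt f (x + s • y))
    (isCompact_closedBall 0 1) measurableSet_closedBall
    ((continuous_ballPotential.comp continuous_snd).continuousOn.mul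
      (continuousOn_comp_add_smul hlap continuous_id
        (S := Ioo (-R) R) fun s hs => abs_lt.2 hs))
  simp only [setIntegral_ballPotential_mul fun y => laplacianAt f (x + _ • y)] at hcont
  have hlim := ((hcont.continuousAt (Ioo_mem_nhds (neg_neg_of_pos hR) hR)).tendsto).mono_left
    (nhdsWithin_le_nhds (s := Ioi 0))
  have hzero := tendsto_nhds_unique hlim (tendsto_const_nhds.congr' (by
    filter_upwards [Ioo_mem_nhdsGT hR] with s hs
    exact ((hf.mono hRU).integral_ballPotential_mul_laplacianAt hs).symm))
  simp only [zero_smul, add_zero, integral_mul_const] at hzero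
  exact (mul_eq_zero.1 hzero).resolve_left integral_ballPotential_pos.ne'

end HarmonicOfMeanValue

section UniqueContinuation

theorem sq_integral_mul_le {α : Type*} [MeasurableSpace α] {μ : Measure α} {f g : α → ℝ}
    (hf : Integrable (fun y => f y ^ 2) μ) (hfg : Integrable (fun y => f y * g y) μ)
    (hg : Integrable (fun y => g y ^ 2) μ) :
    (∫ y, f y * g y ∂μ) ^ 2 ≤ (∫ y, f y ^ 2 ∂μ) * ∫ y, g y ^ 2 ∂μ := by
  have hquad (t : ℝ) : 0 ≤ (∫ y, g y ^ 2 ∂μ) * (t * t) + 2 * (∫ y, f y * g y ∂μ) * t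
      + ∫ y, f y ^ 2 ∂μ := by
    have hcross := (hfg.const_mul 2).mul_const t
    have hsum : Integrable (fun y => g y ^ 2 * (t * t) + 2 * (f y * g y) * t) μ :=
      (hg.mul_const _).add hcross
    rw [← integral_const_mul, ← integral_mul_const, ← integral_mul_const,
      ← integral_add (hg.mul_const _) hcross, ← integral_add hsum hf]
    refine integral_nonneg fun y => (sq_nonneg (g y * t + f y)).trans_eq ?_
    ring
  have := discrim_le_zero hquad
  rw [discrim] at this
  nlinarith

theorem mul_pow_le_mul_pow_of_sq_le {a : ℕ → ℝ} (h0 : ∀ j, 0 ≤ a j)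
    (h : ∀ j, a (j + 1) ^ 2 ≤ a j * a (j + 2)) (j : ℕ) : a 0 * a 1 ^ j ≤ a j * a 0 ^ j := by
  rcases (h0 0).eq_or_lt with ha₀ | ha₀
  · simpa [← ha₀] using mul_nonneg (h0 j) (pow_nonneg le_rfl j)
  rcases (h0 1).eq_or_lt with ha₁ | ha₁
  · rcases j.eq_zero_or_pos with rfl | hj
    · simp
    · simpa [← ha₁, hj.ne'] using mul_nonneg (h0 j) (pow_nonneg ha₀.le j)
  have hratio (j : ℕ) : 0 < a j ∧ a 1 * a j ≤ a (j + 1) * a 0 := by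
    induction j with
    | zero => exact ⟨ha₀, le_rfl⟩
    | succ j ih =>
      obtain ⟨hj, hle⟩ := ih
      have hj' : 0 < a (j + 1) := pos_of_mul_pos_left ((mul_pos ha₁ hj).trans_le hle) ha₀.le
      refine ⟨hj', le_of_mul_le_mul_right ?_ hj'⟩
      calc a 1 * a (j + 1) * a (j + 1) ≤ a 1 * (a j * a (j + 2)) := by nlinarith [h j]
        _ ≤ a (j + 1) * a 0 * a (j + 2) := by nlinarith [h0 (j + 2)]
        _ = a (j + 1 + 1) * a 0 * a (j + 1) := by ring
  induction j with
  | zero => simp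
  | succ j ih =>
    calc a 0 * a 1 ^ (j + 1) = a 1 * (a 0 * a 1 ^ j) := by ring
      _ ≤ a 1 * (a j * a 0 ^ j) := by gcongr
      _ = a 1 * a j * a 0 ^ j := by ring
      _ ≤ a (j + 1) * a 0 * a 0 ^ j := by gcongr ?_ * _; exact (hratio j).2
      _ = a (j + 1) * a 0 ^ (j + 1) := by ring

/-- The mean of `v²` over the ball of radius `r` around `x`, in the weight of `ballMeasure`; its
logarithmic convexity in `log r` controls the decay of harmonic functions near their zeros. -/
def ballEnergy (v : En n → ℝ) (x : En n) (r : ℝ) : ℝ := ∫ y, v (x + r • y) ^ 2 ∂ballMeasure n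

variable {v : En n → ℝ} {U : Set (En n)}

theorem ballEnergy_nonneg (v : En n → ℝ) (x : En n) (r : ℝ) : 0 ≤ ballEnergy v x r :=
  integral_nonneg fun _ => sq_nonneg _

theorem HarmonicOnSet.ballEnergy_sq_le {x : En n} {R s t s' : ℝ} (hv : HarmonicOnSet v (ball x R))
    (hs : s ∈ Ioo 0 R) (ht : t ∈ Ioo 0 R) (hs' : s' ∈ Ioo 0 R) (hst : t * t = s * s') :
    ballEnergy v x t ^ 2 ≤ ballEnergy v x s * ballEnergy v x s' := by
  have hcont {r : ℝ} (hr : r ∈ Ioo 0 R) :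
      ContinuousOn (fun y => v (x + r • y)) (closedBall 0 1) :=
    hv.1.continuousOn.comp (by fun_prop) fun y hy =>
      add_smul_mem_ball (by rw [abs_of_pos hr.1]; exact hr.2) hy
  have hcs := sq_integral_mul_le (integrable_ballMeasure ((hcont hs).pow 2))
    (integrable_ballMeasure ((hcont hs).mul (hcont hs')))
    (integrable_ballMeasure ((hcont hs').pow 2))
  rwa [← hv.integral_mul_dilation hv ht ht hs hs'.2 hst,
    integral_congr_ae (ae_of_all _ fun y => (pow_two (v (x + t • y))).symm)] at hcs

theorem eqOn_zero_of_ballEnergy_eq_zero {x : En n} {r : ℝ} (hr : 0 < r)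
    (hv : ContinuousOn v (closedBall x r)) (h : ballEnergy v x r = 0) : EqOn v 0 (ball x r) := by
  intro z hz
  have hcont : ContinuousOn (fun y => v (x + r • y) ^ 2) (closedBall 0 1) :=
    (hv.comp (by fun_prop) fun y hy => add_smul_mem_closedBall hr.le hy).pow 2
  have hmem : r⁻¹ • (z - x) ∈ ball (0 : En n) 1 := by
    rw [mem_ball_zero_iff, norm_smul, norm_inv, Real.norm_of_nonneg hr.le, inv_mul_eq_div,
      div_lt_one hr, ← dist_eq_norm]
    exact hz
  have := eqOn_zero_of_integral_ballMeasure_eq_zero hcont (fun _ _ => sq_nonneg _) h hmem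
  simpa [smul_inv_smul₀ hr.ne'] using this

theorem HarmonicOnSet.ballEnergy_mul_pow_le {x : En n} {R r : ℝ} (hv : HarmonicOnSet v (ball x R))
    (hr : r ∈ Ioo 0 R) (j : ℕ) :
    ballEnergy v x r * ballEnergy v x (r / 2) ^ j
      ≤ ballEnergy v x (r / 2 ^ j) * ballEnergy v x r ^ j := by
  have hmem (j : ℕ) : r / 2 ^ j ∈ Ioo 0 R :=
    ⟨div_pos hr.1 (by positivity),
      (div_le_self hr.1.le (one_le_pow₀ one_le_two)).trans_lt hr.2⟩
  simpa using mul_pow_le_mul_pow_of_sq_le (fun j => ballEnergy_nonneg v x (r / 2 ^ j))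
    (fun j => hv.ballEnergy_sq_le (hmem j) (hmem (j + 1)) (hmem (j + 2)) (by ring)) j

theorem HarmonicOnSet.eqOn_zero_ball_half {x : En n} {R r : ℝ} (hv : HarmonicOnSet v (ball x R))
    (hr : r ∈ Ioo 0 R) (h : v =ᶠ[𝓝 x] 0) : EqOn v 0 (ball x (r / 2)) := by
  obtain ⟨δ, hδ, hvδ⟩ := Metric.eventually_nhds_iff_ball.1 h
  obtain ⟨j, hj⟩ := pow_unbounded_of_one_lt (r / δ) one_lt_two
  have hr₀ := hr.1
  have hjδ : |r / 2 ^ j| < δ := by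
    rw [abs_of_pos (by positivity), div_lt_iff₀ (by positivity)]
    rwa [div_lt_iff₀ hδ, mul_comm] at hj
  have hzero : ballEnergy v x (r / 2 ^ j) = 0 := by
    refine integral_eq_zero_of_ae (ae_ballMeasure_mem_closedBall.mono fun y hy => ?_)
    simp [hvδ _ (add_smul_mem_ball hjδ hy)]
  have hmul := hv.ballEnergy_mul_pow_le hr j
  rw [hzero, zero_mul] at hmul
  have hcont := hv.1.continuousOn.mono (closedBall_subset_ball hr.2)
  rcases mul_eq_zero.1 (hmul.antisymm
    (mul_nonneg (ballEnergy_nonneg v x r) (pow_nonneg (ballEnergy_nonneg v x _) j))) with h0 | h0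
  · exact (eqOn_zero_of_ballEnergy_eq_zero hr₀ hcont h0).mono (ball_subset_ball (by linarith))
  · exact eqOn_zero_of_ballEnergy_eq_zero (half_pos hr₀)
      (hcont.mono (closedBall_subset_closedBall (by linarith))) (eq_zero_of_pow_eq_zero h0)

theorem HarmonicOnSet.eqOn_zero (hU : IsOpen U) (hUc : IsPreconnected U) (hv : HarmonicOnSet v U)
    {x : En n} (hx : x ∈ U) (h0 : v =ᶠ[𝓝 x] 0) : EqOn v 0 U := by
  suffices hsub : U ⊆ {z | v =ᶠ[𝓝 z] 0} from fun z hz => (hsub hz).self_of_nhds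
  refine hUc.subset_of_closure_inter_subset isOpen_setOfPred_eventually_nhds ⟨x, hx, h0⟩
    fun z hz => ?_
  obtain ⟨R, hR, hRU⟩ := Metric.isOpen_iff.1 hU z hz.2
  obtain ⟨s, hs, hsz⟩ := Metric.mem_closure_iff.1 hz.1 (R / 8) (by positivity)
  have hsU : ball s (7 * R / 8) ⊆ U :=
    (ball_subset_ball' (by rw [dist_comm]; linarith)).trans hRU
  have hball := (hv.mono hsU).eqOn_zero_ball_half (r := R / 2) ⟨by linarith, by linarith⟩ hs
  exact hball.eventuallyEq_of_mem (isOpen_ball.mem_nhds (mem_ball.2 (by linarith)))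

theorem HarmonicOnSet.ballEnergy_pos (hU : IsOpen U) (hUc : IsPreconnected U)
    (hv : HarmonicOnSet v U) (hne : ∃ x ∈ U, v x ≠ 0) {x : En n} {r : ℝ} (hr : 0 < r)
    (hx : closedBall x r ⊆ U) : 0 < ballEnergy v x r := by
  refine (ballEnergy_nonneg v x r).lt_of_ne' fun h => ?_
  obtain ⟨z, hz, hvz⟩ := hne
  exact hvz (hv.eqOn_zero hU hUc (hx (mem_closedBall_self hr.le))
    ((eqOn_zero_of_ballEnergy_eq_zero hr (hv.1.continuousOn.mono hx) h).eventuallyEq_of_mem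
      (ball_mem_nhds x hr)) hz)

theorem continuousOn_ballEnergy {K : Set (En n)} {r : ℝ} (hr : 0 ≤ r) (hv : ContinuousOn v U)
    (hK : ∀ x ∈ K, closedBall x r ⊆ U) : ContinuousOn (fun x => ballEnergy v x r) K := by
  have hjoint : ContinuousOn (fun p : En n × En n => v (p.1 + r • p.2) ^ 2)
      (K ×ˢ closedBall 0 1) :=
    (hv.comp (f := fun p : En n × En n => p.1 + r • p.2) (by fun_prop)
      fun p hp => hK p.1 hp.1 (add_smul_mem_closedBall hr hp.2)).pow 2
  simpa only [restrict_ballMeasure, ballEnergy] using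
    continuousOn_setIntegral_of_isCompact (μ := ballMeasure n) (isCompact_closedBall 0 1)
      measurableSet_closedBall (F := fun x y => v (x + r • y) ^ 2) hjoint

theorem exists_ballEnergy_le_sq {x : En n} {r : ℝ} (hr : 0 ≤ r)
    (hv : ContinuousOn v (closedBall x r)) :
    ∃ y ∈ closedBall x r, ballEnergy v x r ≤ v y ^ 2 := by
  obtain ⟨y, hy, hmax⟩ := (isCompact_closedBall x r).exists_isMaxOn
    ⟨x, mem_closedBall_self hr⟩ (hv.pow 2)
  refine ⟨y, hy, ?_⟩
  calc ballEnergy v x r ≤ ∫ _, v y ^ 2 ∂ballMeasure n :=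
        integral_mono_ae (integrable_ballMeasure ((hv.comp (by fun_prop) fun y hy =>
          add_smul_mem_closedBall hr hy).pow 2)) (integrable_const _)
          (ae_ballMeasure_mem_closedBall.mono fun z hz => by
            simpa using hmax (add_smul_mem_closedBall hr hz))
    _ = v y ^ 2 := by simp

theorem HarmonicOnSet.exists_ballEnergy_bounds (hU : IsOpen U) (hUc : IsPreconnected U)
    (hv : HarmonicOnSet v U) (hne : ∃ x ∈ U, v x ≠ 0) {K : Set (En n)} (hK : IsCompact K)
    {r : ℝ} (hr : 0 < r) (hKr : ∀ x ∈ K, closedBall x r ⊆ U) :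
    ∃ m > 0, ∃ M, ∀ x ∈ K, m ≤ ballEnergy v x r ∧ ballEnergy v x r ≤ M := by
  have hcont := continuousOn_ballEnergy hr.le hv.1.continuousOn hKr
  obtain ⟨M, hM⟩ := hK.bddAbove_image hcont
  rcases K.eq_empty_or_nonempty with rfl | hKne
  · exact ⟨1, one_pos, 0, by simp⟩
  obtain ⟨z, hz, hmin⟩ := hK.exists_isMinOn hKne hcont
  exact ⟨_, hv.ballEnergy_pos hU hUc hne hr (hKr z hz), M,
    fun x hx => ⟨hmin hx, hM (mem_image_of_mem _ hx)⟩⟩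

theorem HarmonicOnSet.exists_pow_le_ballEnergy (hU : IsOpen U) (hUc : IsPreconnected U)
    (hv : HarmonicOnSet v U) (hne : ∃ x ∈ U, v x ≠ 0) {K : Set (En n)} (hK : IsCompact K)
    {r R : ℝ} (hr : r ∈ Ioo 0 R) (hKR : ∀ x ∈ K, ball x R ⊆ U) :
    ∃ m > 0, ∃ N : ℕ, ∀ x ∈ K, ∀ j : ℕ,
      m * ((1 / 2) ^ j) ^ (2 * N) ≤ ballEnergy v x (r / 2 ^ j) := by
  have hr₀ := hr.1
  have hKr (x) (hx : x ∈ K) : closedBall x r ⊆ U := (closedBall_subset_ball hr.2).trans (hKR x hx)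
  obtain ⟨m, hm, M, hmM⟩ := hv.exists_ballEnergy_bounds hU hUc hne hK hr₀ hKr
  obtain ⟨m', hm', _, hm'M⟩ := hv.exists_ballEnergy_bounds hU hUc hne hK (half_pos hr₀)
    fun x hx => (closedBall_subset_closedBall (by linarith)).trans (hKr x hx)
  rcases K.eq_empty_or_nonempty with rfl | ⟨z, hz⟩
  · exact ⟨1, one_pos, 0, by simp⟩
  have hM : 0 < M := hm.trans_le ((hmM z hz).1.trans (hmM z hz).2)
  obtain ⟨N, hN⟩ := exists_pow_lt_of_lt_one (div_pos hm' hM) (by norm_num : (1 / 4 : ℝ) < 1)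
  refine ⟨m, hm, N, fun x hx j => ?_⟩
  have hE := hm.trans_le (hmM x hx).1
  calc m * ((1 / 2) ^ j) ^ (2 * N) = m * ((1 / 4) ^ N) ^ j := by
        rw [← pow_mul, ← pow_mul, mul_left_comm, pow_mul, mul_comm j N]
        norm_num
    _ ≤ m * (m' / M) ^ j := by gcongr
    _ ≤ ballEnergy v x r * (ballEnergy v x (r / 2) / ballEnergy v x r) ^ j := by
        have := (hm'M x hx).1
        have := hmM x hx
        gcongr
        exacts [this.1, ballEnergy_nonneg _ _ _, this.2]
    _ ≤ ballEnergy v x (r / 2 ^ j) := by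
        rw [div_pow, ← mul_div_assoc, div_le_iff₀ (pow_pos hE j)]
        exact (hv.mono (hKR x hx)).ballEnergy_mul_pow_le hr j

theorem HarmonicOnSet.exists_pow_le_abs (hU : IsOpen U) (hUc : IsPreconnected U)
    (hv : HarmonicOnSet v U) (hne : ∃ x ∈ U, v x ≠ 0) {K : Set (En n)} (hK : IsCompact K)
    (hKU : K ⊆ U) :
    ∃ c > 0, ∃ N : ℕ, ∃ δ > 0, ∀ x ∈ K, ∀ ρ ∈ Ioc 0 δ,
      ∃ y ∈ closedBall x ρ, c * ρ ^ N ≤ |v y| := by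
  obtain ⟨R, hR, hRU⟩ := hK.exists_cthickening_subset_open hU hKU
  have hball (x) (hx : x ∈ K) : closedBall x R ⊆ U :=
    (closedBall_subset_cthickening hx R).trans hRU
  obtain ⟨m, hm, N, hE⟩ := hv.exists_pow_le_ballEnergy hU hUc hne hK
    (r := R / 2) (R := R) ⟨by positivity, by linarith⟩
    fun x hx => ball_subset_closedBall.trans (hball x hx)
  refine ⟨√m / R ^ N, by positivity, N, R / 2, by positivity, fun x hx ρ ⟨hρ, hρR⟩ => ?_⟩
  obtain ⟨j, hj, hj'⟩ := exists_nat_pow_near_of_lt_one (x := ρ / (R / 2)) (by positivity)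
    (div_le_one_of_le₀ hρR (by positivity)) (by norm_num : (0 : ℝ) < 1 / 2) (by norm_num)
  have hjρ : R / 2 / 2 ^ (j + 1) ≤ ρ := by
    rw [lt_div_iff₀ (by positivity), one_div_pow] at hj
    exact (by rw [div_eq_inv_mul, ← one_div]; exact hj.le)
  have hjR : R / 2 / 2 ^ (j + 1) ≤ R :=
    hjρ.trans (hρR.trans (by linarith))
  obtain ⟨y, hy, hvy⟩ := exists_ballEnergy_le_sq (by positivity)
    (hv.1.continuousOn.mono ((closedBall_subset_closedBall hjR).trans (hball x hx)))
  refine ⟨y, closedBall_subset_closedBall hjρ hy, ?_⟩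
  have hsq : (√m * ((1 / 2) ^ (j + 1)) ^ N) ^ 2 ≤ v y ^ 2 := by
    rw [mul_pow, Real.sq_sqrt hm.le, ← pow_mul, mul_comm N 2]
    exact (hE x hx (j + 1)).trans hvy
  calc √m / R ^ N * ρ ^ N = √m * (ρ / R) ^ N := by rw [div_pow]; ring
    _ ≤ √m * ((1 / 2) ^ (j + 1)) ^ N := by
        gcongr
        rw [pow_succ, div_le_iff₀ hR]
        rw [div_le_iff₀ (half_pos hR)] at hj'
        linarith
    _ ≤ |v y| := (le_abs_self _).trans (sq_le_sq.1 hsq)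

end UniqueContinuation

section Rescaling

theorem ballWeight_le_one (y : En n) : ballWeight y ≤ 1 := by
  rw [ballWeight, expNegInvGlue]
  split_ifs with h
  · exact zero_le_one
  · exact Real.exp_le_one_iff.2 (neg_nonpos.2 (inv_nonneg.2 (not_le.1 h).le))

theorem integral_comp_add_smul_ballMeasure {r : ℝ} (hr : 0 < r) (x : En n) (F : En n → ℝ) :
    ∫ y, F (x + r • y) ∂ballMeasure n
      = ∫ w, (r ^ n)⁻¹ * (ballDensity (r⁻¹ • (w - x)) * F w) := by
  have hscale := Measure.integral_comp_smul (volume : Measure (En n))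
    (fun y => ballDensity y * F (x + r • y)) r⁻¹
  rw [integral_ballMeasure, integral_const_mul,
    ← integral_add_right_eq_self (fun w => ballDensity (r⁻¹ • (w - x)) * F w) x]
  simp only [smul_inv_smul₀ hr.ne', finrank_euclideanSpace, Fintype.card_fin, inv_pow, inv_inv,
    abs_of_pos (pow_pos hr n), smul_eq_mul] at hscale
  simp only [add_sub_cancel_right]
  simp only [add_comm _ x, hscale, smul_eq_mul]
  rw [inv_mul_cancel_left₀ (pow_pos hr n).ne']

theorem integrable_rescaled_ballDensity_mul {r : ℝ} (hr : 0 < r) {x : En n} {F : En n → ℝ}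
    (hF : ContinuousOn F (closedBall x r)) :
    Integrable fun w => (r ^ n)⁻¹ * (ballDensity (r⁻¹ • (w - x)) * F w) := by
  have hint := integrable_ballDensity_mul (f := fun y => F (x + r • y))
    (hF.comp (by fun_prop) fun y hy => add_smul_mem_closedBall hr.le hy)
  refine (((hint.comp_smul (inv_ne_zero hr.ne')).comp_sub_right x).congr
    (ae_of_all _ fun w => ?_)).const_mul _
  simp [smul_inv_smul₀ hr.ne']

theorem ballDensity_inv_smul_sub_eq_zero {x w : En n} {r : ℝ} (hr : 0 < r)
    (hw : w ∉ closedBall x r) : ballDensity (r⁻¹ • (w - x)) = 0 := by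
  refine ballDensity_eq_zero fun h => hw ?_
  rw [mem_ball_zero_iff, norm_smul, norm_inv, Real.norm_of_nonneg hr.le, inv_mul_eq_div,
    div_lt_one hr, ← dist_eq_norm] at h
  exact h.le

theorem mul_ballDensity_le_ballDensity {x y w : En n} {ρ r θ : ℝ} (hρ : 0 < ρ) (hr : 0 < r)
    (hsub : closedBall y ρ ⊆ closedBall x (θ * r)) :
    expNegInvGlue (1 - θ ^ 2) * ballDensity (ρ⁻¹ • (w - y))
      ≤ ballDensity (r⁻¹ • (w - x)) := by
  by_cases hw : w ∈ closedBall y ρ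
  · have hle : ‖r⁻¹ • (w - x)‖ ≤ θ := by
      rw [norm_smul, norm_inv, Real.norm_of_nonneg hr.le, inv_mul_eq_div, div_le_iff₀ hr,
        ← dist_eq_norm]
      exact hsub hw
    have hweight : expNegInvGlue (1 - θ ^ 2) ≤ ballWeight (r⁻¹ • (w - x)) :=
      expNegInvGlue.monotone (by gcongr)
    rw [ballDensity, ballDensity, ← mul_div_assoc]
    exact div_le_div_of_nonneg_right ((mul_le_of_le_one_right (expNegInvGlue.nonneg _)
      (ballWeight_le_one _)).trans hweight) integral_ballWeight_pos.le
  · rw [ballDensity_inv_smul_sub_eq_zero hρ hw, mul_zero]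
    exact ballDensity_nonneg _

theorem integral_comp_add_smul_le_of_subset {F : En n → ℝ} {x y : En n} {ρ r θ : ℝ} (hρ : 0 < ρ)
    (hr : 0 < r) (hθ : θ ∈ Ico 0 1) (hF : ContinuousOn F (closedBall x r))
    (hF0 : ∀ z ∈ closedBall x r, 0 ≤ F z) (hsub : closedBall y ρ ⊆ closedBall x (θ * r)) :
    expNegInvGlue (1 - θ ^ 2) * (ρ / r) ^ n * ∫ z, F (y + ρ • z) ∂ballMeasure n
      ≤ ∫ z, F (x + r • z) ∂ballMeasure n := by
  have hsub' : closedBall y ρ ⊆ closedBall x r :=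
    hsub.trans (closedBall_subset_closedBall (by nlinarith [hθ.2]))
  rw [integral_comp_add_smul_ballMeasure hρ, integral_comp_add_smul_ballMeasure hr,
    ← integral_const_mul]
  refine integral_mono
    ((integrable_rescaled_ballDensity_mul hρ (hF.mono hsub')).const_mul _)
    (integrable_rescaled_ballDensity_mul hr hF) fun w => ?_
  have hkernel := mul_ballDensity_le_ballDensity (w := w) hρ hr hsub
  have hcancel : expNegInvGlue (1 - θ ^ 2) * (ρ / r) ^ n
        * ((ρ ^ n)⁻¹ * (ballDensity (ρ⁻¹ • (w - y)) * F w))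
      = (r ^ n)⁻¹ * (expNegInvGlue (1 - θ ^ 2) * ballDensity (ρ⁻¹ • (w - y)) * F w) := by
    rw [div_pow]
    field_simp [pow_ne_zero n hρ.ne', pow_ne_zero n hr.ne']
  rw [hcancel]
  by_cases hw : w ∈ closedBall x r
  · have := hF0 w hw
    gcongr
  · simp [ballDensity_inv_smul_sub_eq_zero hr hw,
      ballDensity_inv_smul_sub_eq_zero hρ fun h => hw (hsub' h)]

end Rescaling

section Growth

variable {u v : En n → ℝ} {U : Set (En n)}

theorem MeanValueOn.half_norm_le_of_isMaxOn {E : Type*} [NormedAddCommGroup E] [NormedSpace ℝ E]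
    [CompleteSpace E] {f : En n → E} (hf : MeanValueOn f U) (hU : IsOpen U) {x y z : En n} {s : ℝ}
    (N : ℕ) (hs : closedBall x s ⊆ U) (hz : z ∈ closedBall x s)
    (hmax : IsMaxOn (fun w => ‖f w‖ * (s - dist w x) ^ N) (closedBall x s) z)
    (hy : dist y z ≤ (8 * (gradientConst n + 1) * 2 ^ N)⁻¹ * (s - dist z x)) :
    ‖f z‖ / 2 ≤ ‖f y‖ := by
  have hG := gradientConst_nonneg (n := n)
  have hd : 0 ≤ s - dist z x := sub_nonneg.2 (mem_closedBall.1 hz)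
  set d := s - dist z x
  rcases hd.eq_or_lt with hd₀ | hd₀
  · rw [← hd₀, mul_zero, dist_le_zero] at hy
    rw [hy]
    linarith [norm_nonneg (f z)]
  have hκ : (8 * (gradientConst n + 1) * 2 ^ N)⁻¹ ≤ 1 / 4 := by
    rw [inv_le_comm₀ (by positivity) (by norm_num)]
    nlinarith [one_le_pow₀ (one_le_two (α := ℝ)) (n := N)]
  have hball (w) (hw : w ∈ closedBall z (d / 4 + d / 4)) : d / 2 ≤ s - dist w x := by
    linarith [mem_closedBall.1 hw, dist_triangle w z x]
  have hsub : closedBall z (d / 4 + d / 4) ⊆ closedBall x s := fun w hw =>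
    mem_closedBall.2 (by linarith [hball w hw])
  have hbound (w) (hw : w ∈ closedBall z (d / 4 + d / 4)) : ‖f w‖ ≤ 2 ^ N * ‖f z‖ := by
    refine le_of_mul_le_mul_right ?_ (pow_pos (half_pos hd₀) N)
    calc ‖f w‖ * (d / 2) ^ N ≤ ‖f w‖ * (s - dist w x) ^ N := by gcongr; exact hball w hw
      _ ≤ ‖f z‖ * d ^ N := hmax (hsub hw)
      _ = 2 ^ N * ‖f z‖ * (d / 2) ^ N := by rw [div_pow]; field_simp
  have hdiff : ‖f y - f z‖ ≤ ‖f z‖ / 2 := by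
    calc ‖f y - f z‖ ≤ gradientConst n / (d / 4) * (2 ^ N * ‖f z‖) * ‖y - z‖ :=
          hf.norm_sub_le hU (by positivity) (hsub.trans hs) hbound
            (mem_closedBall.2 (hy.trans (by nlinarith)))
      _ ≤ (gradientConst n + 1) / (d / 4) * (2 ^ N * ‖f z‖)
            * ((8 * (gradientConst n + 1) * 2 ^ N)⁻¹ * d) := by
          rw [← dist_eq_norm y z]; gcongr; linarith
      _ = ‖f z‖ / 2 := by field_simp; ring
  have := norm_sub_norm_le (f z) (f y)
  rw [norm_sub_rev] at this
  linarith

theorem MeanValueOn.mul_abs_le_integral_abs_mul {x : En n} {ρ m : ℝ} (hv : MeanValueOn v U)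
    (hρ : 0 < ρ) (hx : closedBall x ρ ⊆ U) (hu : ContinuousOn u U) (hm : 0 ≤ m)
    (hmu : ∀ z ∈ closedBall x ρ, m ≤ |u z|) :
    m * |v x| ≤ ∫ y, |u (x + ρ • y) * v (x + ρ • y)| ∂ballMeasure n := by
  have hcont {w : En n → ℝ} (hw : ContinuousOn w U) :
      ContinuousOn (fun y => w (x + ρ • y)) (closedBall 0 1) :=
    hw.comp (by fun_prop) fun y hy => hx (add_smul_mem_closedBall hρ.le hy)
  calc m * |v x| = m * |∫ y, v (x + ρ • y) ∂ballMeasure n| := by rw [hv.integral_eq hρ hx]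
    _ ≤ m * ∫ y, |v (x + ρ • y)| ∂ballMeasure n := by gcongr; exact abs_integral_le_integral_abs
    _ = ∫ y, m * |v (x + ρ • y)| ∂ballMeasure n := (integral_const_mul _ _).symm
    _ ≤ ∫ y, |u (x + ρ • y) * v (x + ρ • y)| ∂ballMeasure n := by
        refine integral_mono_ae (integrable_ballMeasure (continuousOn_const.mul
          (hcont hv.continuousOn).abs)) (integrable_ballMeasure
          ((hcont hu).mul (hcont hv.continuousOn)).abs)
          (ae_ballMeasure_mem_closedBall.mono fun y hy => ?_)
        simp only [abs_mul]
        gcongr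
        exact hmu _ (add_smul_mem_closedBall hρ.le hy)

theorem MeanValueOn.mul_abs_le_integral_abs_mul_of_subset {x y : En n} {ρ r θ m : ℝ}
    (hv : MeanValueOn v U) (hρ : 0 < ρ) (hr : 0 < r) (hθ : θ ∈ Ico 0 1) (hx : closedBall x r ⊆ U)
    (hsub : closedBall y ρ ⊆ closedBall x (θ * r)) (hu : ContinuousOn u U) (hm : 0 ≤ m)
    (hmu : ∀ z ∈ closedBall y ρ, m ≤ |u z|) :
    expNegInvGlue (1 - θ ^ 2) * (ρ / r) ^ n * (m * |v y|)
      ≤ ∫ z, |u (x + r • z) * v (x + r • z)| ∂ballMeasure n := by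
  have hle : closedBall x (θ * r) ⊆ closedBall x r :=
    closedBall_subset_closedBall (by nlinarith [hθ.2])
  refine le_trans ?_ (integral_comp_add_smul_le_of_subset (F := fun z => |u z * v z|) hρ hr hθ
    ((hu.mul hv.continuousOn).abs.mono hx) (fun _ _ => abs_nonneg _) hsub)
  have := expNegInvGlue.nonneg (1 - θ ^ 2)
  gcongr
  exact hv.mul_abs_le_integral_abs_mul hρ ((hsub.trans hle).trans hx) hu hm hmu

/-- The weight `(s - dist z x) ^ (N + n + 1)` vanishes faster at the boundary than `v` can decay, so
the mass of `u * v` near a maximum point of the weighted `|u|` controls that maximum. -/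
theorem HarmonicOnSet.abs_mul_pow_le_integral {x z : En n} {s t R c τ : ℝ} {N : ℕ}
    (hu : HarmonicOnSet u (ball x R)) (hv : HarmonicOnSet v (ball x R)) (hs : 0 < s) (hst : s < t)
    (htR : t < R) (hτ : 0 < τ) (hτG : 2 * τ ≤ (8 * (gradientConst n + 1) * 2 ^ (N + n + 1))⁻¹)
    (hc : 0 < c) (hvN : ∀ w ∈ closedBall x s, ∀ ρ ∈ Ioc 0 (τ * s),
      ∃ y ∈ closedBall w ρ, c * ρ ^ N ≤ |v y|) (hz : z ∈ closedBall x s) :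
    expNegInvGlue (1 - (s / t) ^ 2) * (τ / t) ^ n * (c * τ ^ N)
        * (|u z| * (s - dist z x) ^ (N + n + 1))
      ≤ 2 * s * ∫ y, |u (x + t • y) * v (x + t • y)| ∂ballMeasure n := by
  have hsU : closedBall x s ⊆ ball x R := closedBall_subset_ball (hst.trans htR)
  have hG := gradientConst_nonneg (n := n)
  have ht := hs.trans hst
  have he := expNegInvGlue.nonneg (1 - (s / t) ^ 2)
  obtain ⟨w, hw, hmax⟩ := (isCompact_closedBall x s).exists_isMaxOn
    ⟨x, mem_closedBall_self hs.le⟩ (f := fun z => ‖u z‖ * (s - dist z x) ^ (N + n + 1))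
    ((hu.1.continuousOn.mono hsU).norm.mul (by fun_prop))
  refine (mul_le_mul_of_nonneg_left (hmax hz) (by positivity)).trans ?_
  dsimp only
  have hd : 0 ≤ s - dist w x := sub_nonneg.2 (mem_closedBall.1 hw)
  have hds : s - dist w x ≤ s := sub_le_self _ dist_nonneg
  rcases hd.eq_or_lt with hd₀ | hd₀
  · rw [← hd₀, zero_pow (Nat.succ_ne_zero _), mul_zero, mul_zero]
    exact mul_nonneg (by positivity) (integral_nonneg fun _ => abs_nonneg _)
  set d := s - dist w x
  obtain ⟨y, hy, hvy⟩ := hvN w hw (τ * d) ⟨by positivity, by gcongr⟩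
  have hball (z) (hz : z ∈ closedBall y (τ * d)) : dist z w ≤ 2 * τ * d := by
    linarith [mem_closedBall.1 hz, mem_closedBall.1 hy, dist_triangle z y w]
  have hτ₁ : 2 * τ ≤ 1 := hτG.trans (inv_le_one_of_one_le₀ (by
    nlinarith [one_le_pow₀ (one_le_two (α := ℝ)) (n := N + n + 1)]))
  have hsub : closedBall y (τ * d) ⊆ closedBall x (s / t * t) := fun z hz => by
    rw [div_mul_cancel₀ _ ht.ne', mem_closedBall]
    nlinarith [hball z hz, dist_triangle z w x]
  have hint := (hv.meanValueOn isOpen_ball).mul_abs_le_integral_abs_mul_of_subset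
    (m := |u w| / 2) (mul_pos hτ hd₀) ht ⟨by positivity, (div_lt_one ht).2 hst⟩
    (closedBall_subset_ball htR) hsub hu.1.continuousOn (by positivity) fun z hz =>
      (hu.meanValueOn isOpen_ball).half_norm_le_of_isMaxOn isOpen_ball _ hsU hw hmax
        ((hball z hz).trans (by gcongr))
  calc expNegInvGlue (1 - (s / t) ^ 2) * (τ / t) ^ n * (c * τ ^ N) * (‖u w‖ * d ^ (N + n + 1))
      = 2 * d * (expNegInvGlue (1 - (s / t) ^ 2) * (τ * d / t) ^ n
          * (|u w| / 2 * (c * (τ * d) ^ N))) := by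
        simp only [Real.norm_eq_abs, pow_succ, pow_add, div_pow, mul_pow]; ring
    _ ≤ 2 * s * ∫ y, |u (x + t • y) * v (x + t • y)| ∂ballMeasure n := by
        gcongr
        exact le_trans (by gcongr) hint

theorem HarmonicOnSet.exists_abs_le_integral {x : En n} {r t R : ℝ}
    (hv : HarmonicOnSet v (ball x R)) (hne : ∃ y ∈ ball x R, v y ≠ 0) (hr : 0 < r) (hrt : r < t)
    (htR : t < R) :
    ∃ C, ∀ u, HarmonicOnSet u (ball x R) → ∀ z ∈ closedBall x r,
      |u z| ≤ C * ∫ y, |u (x + t • y) * v (x + t • y)| ∂ballMeasure n := by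
  obtain ⟨s, hrs, hst⟩ := exists_between hrt
  have hs := hr.trans hrs
  have ht := hs.trans hst
  obtain ⟨c, hc, N, δ, hδ, hvN⟩ := hv.exists_pow_le_abs isOpen_ball
    (convex_ball x R).isPreconnected hne (isCompact_closedBall x s)
    (closedBall_subset_ball (hst.trans htR))
  have hG := gradientConst_nonneg (n := n)
  set κ := (8 * (gradientConst n + 1) * 2 ^ (N + n + 1))⁻¹
  have hκ : 0 < κ := by positivity
  set τ := min (κ / 2) (δ / s)
  have hτ₀ : 0 < τ := lt_min (half_pos hκ) (div_pos hδ hs)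
  have he : 0 < expNegInvGlue (1 - (s / t) ^ 2) := expNegInvGlue.pos_of_pos (sub_pos.2
    (pow_lt_one₀ (by positivity) ((div_lt_one ht).2 hst) two_ne_zero))
  refine ⟨2 * s / (expNegInvGlue (1 - (s / t) ^ 2) * (τ / t) ^ n * (c * τ ^ N)
    * (s - r) ^ (N + n + 1)), fun u hu z hz => ?_⟩
  have := sub_pos.2 hrs
  rw [div_mul_eq_mul_div, le_div_iff₀ (by positivity)]
  refine le_trans ?_ (hu.abs_mul_pow_le_integral hv hs hst htR hτ₀
    (by linarith [min_le_left (κ / 2) (δ / s)]) hc (fun w hw ρ hρ => hvN w hw ρ ⟨hρ.1,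
      hρ.2.trans ((le_div_iff₀ hs).1 (min_le_right _ _))⟩)
    (closedBall_subset_closedBall hrs.le hz))
  rw [mul_comm |u z|, mul_assoc (_ * _), mul_comm (_ ^ _) |u z|]
  gcongr
  exact mem_closedBall.1 hz

theorem HarmonicOnSet.exists_abs_le_mul {x : En n} {r t R : ℝ} (hv : HarmonicOnSet v (ball x R))
    (hne : ∃ y ∈ ball x R, v y ≠ 0) (hr : 0 < r) (ht : 0 < t) (hrR : r < R) (htR : t < R)
    (hrt : r * r < t * R) :
    ∃ C, ∀ u, HarmonicOnSet u (ball x R) → (∀ y ∈ ball x R, 0 ≤ u y * v y) → ∀ M,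
      (∀ y ∈ closedBall x t, |u y| ≤ M) → ∀ z ∈ closedBall x r, |u z| ≤ C * M := by
  obtain ⟨ρ, hrρ, hρ⟩ := exists_between (show r < min R √(t * R) from
    lt_min hrR (Real.lt_sqrt_of_sq_lt (by rwa [pow_two])))
  have hρR := hρ.trans_le (min_le_left _ _)
  have hρ₀ := hr.trans hrρ
  have hρt : ρ * ρ / t < R := by
    rw [div_lt_iff₀ ht, mul_comm R, ← pow_two]
    exact (Real.lt_sqrt hρ₀.le).1 (hρ.trans_le (min_le_right _ _))
  obtain ⟨C, hC⟩ := hv.exists_abs_le_integral hne hr hrρ hρR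
  have hvt : closedBall x (ρ * ρ / t) ⊆ ball x R := closedBall_subset_ball hρt
  obtain ⟨V, hV⟩ := (isCompact_closedBall x (ρ * ρ / t)).exists_bound_of_continuousOn
    (hv.1.continuousOn.mono hvt)
  refine ⟨|C| * V, fun u hu huv M hM z hz => (hC u hu z hz).trans ?_⟩
  have hM₀ : 0 ≤ M := (abs_nonneg _).trans (hM x (mem_closedBall_self ht.le))
  have hcont {w : En n → ℝ} (hw : HarmonicOnSet w (ball x R)) {a : ℝ} (ha : 0 ≤ a) (haR : a < R) :
      ContinuousOn (fun y => w (x + a • y)) (closedBall 0 1) :=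
    hw.1.continuousOn.comp (by fun_prop) fun y hy =>
      closedBall_subset_ball haR (add_smul_mem_closedBall ha hy)
  have habs : ∫ y, |u (x + ρ • y) * v (x + ρ • y)| ∂ballMeasure n
      = ∫ y, u (x + t • y) * v (x + (ρ * ρ / t) • y) ∂ballMeasure n := by
    rw [← hu.integral_mul_dilation hv ⟨hρ₀, hρR⟩ ⟨hρ₀, hρR⟩ ⟨ht, htR⟩ hρt
      (mul_div_cancel₀ _ ht.ne').symm]
    exact integral_congr_ae (ae_ballMeasure_mem_closedBall.mono fun y hy => abs_of_nonneg
      (huv _ (closedBall_subset_ball hρR (add_smul_mem_closedBall hρ₀.le hy))))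
  calc C * ∫ y, |u (x + ρ • y) * v (x + ρ • y)| ∂ballMeasure n
      ≤ |C| * ∫ y, u (x + t • y) * v (x + (ρ * ρ / t) • y) ∂ballMeasure n := by
        rw [← habs]; gcongr; exact le_abs_self C
    _ ≤ |C| * ∫ _, M * V ∂ballMeasure n := by
        refine mul_le_mul_of_nonneg_left (integral_mono_ae (integrable_ballMeasure
          ((hcont hu ht.le htR).mul (hcont hv (by positivity) hρt))) (integrable_const _)
          (ae_ballMeasure_mem_closedBall.mono fun y hy => (le_abs_self _).trans ?_))
          (abs_nonneg C)
        rw [abs_mul]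
        exact mul_le_mul (hM _ (add_smul_mem_closedBall ht.le hy))
          (hV _ (add_smul_mem_closedBall (by positivity) hy)) (abs_nonneg _) hM₀
    _ = |C| * V * M := by
        rw [integral_const, probReal_univ, one_smul]; ring

theorem HarmonicOnSet.exists_abs_le_mul_of_le {x : En n} {r r' R : ℝ}
    (hv : HarmonicOnSet v (ball x R)) (hne : ∃ y ∈ ball x R, v y ≠ 0) (hr : 0 < r)
    (hr' : 0 < r') (hrR : 2 * r < R) :
    ∃ C, ∀ u, HarmonicOnSet u (ball x R) → (∀ y ∈ ball x R, 0 ≤ u y * v y) → ∀ M,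
      (∀ y ∈ closedBall x r', |u y| ≤ M) → ∀ z ∈ closedBall x r, |u z| ≤ C * M := by
  have key (j : ℕ) : ∃ C, ∀ u, HarmonicOnSet u (ball x R) → (∀ y ∈ ball x R, 0 ≤ u y * v y) →
      ∀ M, (∀ y ∈ closedBall x (r / 2 ^ j), |u y| ≤ M) → ∀ z ∈ closedBall x r, |u z| ≤ C * M := by
    induction j with
    | zero => exact ⟨1, fun u _ _ M hM z hz => by simpa using hM z (by simpa using hz)⟩
    | succ j ih =>
      obtain ⟨C, hC⟩ := ih
      have hle : r / 2 ^ j ≤ r := div_le_self hr.le (one_le_pow₀ one_le_two)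
      have hpos : 0 < r / 2 ^ j := by positivity
      have hsucc : r / 2 ^ (j + 1) = r / 2 ^ j / 2 := by rw [pow_succ, div_div]
      obtain ⟨C', hC'⟩ := hv.exists_abs_le_mul hne hpos (half_pos hpos) (by linarith)
        (by linarith) (by nlinarith)
      refine ⟨C * C', fun u hu huv M hM z hz => ?_⟩
      rw [mul_assoc]
      exact hC u hu huv _ (hC' u hu huv M (hsucc ▸ hM)) z hz
  obtain ⟨j, hj⟩ := exists_pow_lt_of_lt_one (div_pos hr' hr) (one_half_lt_one (α := ℝ))
  obtain ⟨C, hC⟩ := key j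
  have hjr : r / 2 ^ j ≤ r' := by
    rw [div_eq_mul_inv, ← inv_pow, ← one_div, mul_comm]
    exact ((lt_div_iff₀ hr).1 hj).le
  exact ⟨C, fun u hu huv M hM => hC u hu huv M fun y hy =>
    hM y (closedBall_subset_closedBall hjr hy)⟩

end Growth

section Compactness

theorem exists_subseq_tendstoUniformlyOn {α β : Type*} [TopologicalSpace α] [MetricSpace β]
    [Zero β] {u : ℕ → α → β} {X : Set α} {K : Set β} (hX : IsCompact X) (hK : IsCompact K)
    (hu : EquicontinuousOn u X) (huK : ∀ j, MapsTo (u j) X K) :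
    ∃ (f : α → β) (φ : ℕ → ℕ), StrictMono φ ∧
      TendstoUniformlyOn (fun j => u (φ j)) f atTop X := by
  have : CompactSpace X := isCompact_iff_compactSpace.1 hX
  let F (j : ℕ) : BoundedContinuousFunction X β :=
    BoundedContinuousFunction.mkOfCompact ⟨X.domRestrict (u j), (hu.continuousOn j).domRestrict⟩
  have hF : IsCompact (closure (range F)) := by
    refine BoundedContinuousFunction.arzela_ascoli K hK _ ?_ ?_
    · rintro _ x ⟨j, rfl⟩
      exact huK j x.2
    · intro x V hV
      filter_upwards [(equicontinuous_restrict_iff u).2 hu x V hV] with y hy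
      rintro ⟨_, j, rfl⟩
      exact hy j
  obtain ⟨G, -, φ, hφ, hlim⟩ := hF.tendsto_subseq fun j => subset_closure (mem_range_self j)
  classical
  refine ⟨fun x => if h : x ∈ X then G ⟨x, h⟩ else 0, φ, hφ, ?_⟩
  rw [tendstoUniformlyOn_iff_tendstoUniformly_comp_coe]
  convert BoundedContinuousFunction.tendsto_iff_tendstoUniformly.1 hlim using 1
  · rfl
  · funext x
    simp

theorem MeanValueOn.exists_subseq_tendstoUniformlyOn {u : ℕ → En n → ℝ} {U : Set (En n)}
    (hu : ∀ j, MeanValueOn (u j) U) (hU : IsOpen U) {x : En n} {r s S : ℝ} (hs : 0 < s)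
    (hx : closedBall x (r + s) ⊆ U) (hS : ∀ j, ∀ y ∈ closedBall x (r + s), |u j y| ≤ S) :
    ∃ (f : En n → ℝ) (φ : ℕ → ℕ), StrictMono φ ∧
      TendstoUniformlyOn (fun j => u (φ j)) f atTop (closedBall x r) := by
  have hball (z) (hz : z ∈ closedBall x r) : closedBall z s ⊆ closedBall x (r + s) :=
    closedBall_subset_closedBall' (by linarith [mem_closedBall.1 hz])
  have hlip (j) : LipschitzOnWith (Real.toNNReal (gradientConst n / s * S)) (u j)
      (closedBall x r) := by
    refine (convex_closedBall x r).lipschitzOnWith_of_nnnorm_fderiv_le (𝕜 := ℝ)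
      (fun z hz => ?_) fun z hz => ?_
    · exact (((hu j).contDiffOn hU (k := 1)).differentiableOn one_ne_zero).differentiableAt
        (hU.mem_nhds ((hball z hz).trans hx (mem_closedBall_self hs.le)))
    · rw [← norm_toNNReal]
      exact Real.toNNReal_le_toNNReal ((hu j).norm_fderiv_le hU hs ((hball z hz).trans hx)
        fun w hw => hS j w (hball z hz hw))
  refine _root_.exists_subseq_tendstoUniformlyOn (isCompact_closedBall x r)
    (isCompact_Icc (a := -S) (b := S))
    (LipschitzOnWith.uniformEquicontinuousOn u _ hlip).equicontinuousOn
    fun j y hy => abs_le.1 (hS j y (closedBall_subset_closedBall (by linarith) hy))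

end Compactness

section Vanishing

universe w

theorem norm_le_mul_pow_of_iteratedFDeriv_eq_zero {E F : Type w} [NormedAddCommGroup E]
    [NormedSpace ℝ E] [NormedAddCommGroup F] [NormedSpace ℝ F] {f : E → F} {x : E} {R M : ℝ}
    {k : ℕ} (hf : ContDiffOn ℝ k f (ball x R)) (hx : ∀ j < k, iteratedFDeriv ℝ j f x = 0)
    (hM : ∀ y ∈ ball x R, ‖iteratedFDeriv ℝ k f y‖ ≤ M) {y : E} (hy : y ∈ ball x R) :
    ‖f y‖ ≤ M * ‖y - x‖ ^ k := by
  induction k generalizing F y with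
  | zero => simpa using hM y hy
  | succ k ih =>
    have hsub : closedBall x ‖y - x‖ ⊆ ball x R :=
      closedBall_subset_ball (by rwa [← dist_eq_norm])
    have hderiv (z) (hz : z ∈ closedBall x ‖y - x‖) : ‖fderiv ℝ f z‖ ≤ M * ‖y - x‖ ^ k := by
      have hM₀ : 0 ≤ M := (norm_nonneg _).trans (hM y hy)
      calc ‖fderiv ℝ f z‖ ≤ M * ‖z - x‖ ^ k := by
            refine ih (hf.fderiv_of_isOpen isOpen_ball (by norm_cast)) (fun j hj => ?_)
              (fun w hw => ?_) (hsub hz)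
            · rw [← norm_eq_zero, norm_iteratedFDeriv_fderiv, hx _ (by lia), norm_zero]
            · rw [norm_iteratedFDeriv_fderiv]
              exact hM w hw
        _ ≤ M * ‖y - x‖ ^ k := by
            gcongr
            exact mem_closedBall_iff_norm.1 hz
    have h := (convex_closedBall x ‖y - x‖).norm_image_sub_le_of_norm_fderiv_le (𝕜 := ℝ)
      (fun z hz => (hf.differentiableOn (by simp)).differentiableAt
        (isOpen_ball.mem_nhds (hsub hz))) hderiv (mem_closedBall_self (norm_nonneg _))
        (mem_closedBall_iff_norm.2 le_rfl)
    have h₀ : f x = 0 := norm_eq_zero.1 (by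
      rw [← norm_iteratedFDeriv_zero (𝕜 := ℝ), hx 0 k.succ_pos, norm_zero])
    rwa [h₀, sub_zero, mul_assoc, ← pow_succ] at h

theorem isBigO_pow_of_iteratedFDeriv_eq_zero {E F : Type w} [NormedAddCommGroup E]
    [NormedSpace ℝ E] [NormedAddCommGroup F] [NormedSpace ℝ F] {f : E → F} {x : E} {k : ℕ}
    (hf : ContDiffAt ℝ k f x) (hx : ∀ j < k, iteratedFDeriv ℝ j f x = 0) :
    f =O[𝓝 x] fun y => ‖y - x‖ ^ k := by
  have hbound : ∀ᶠ y in 𝓝 x, ‖iteratedFDeriv ℝ k f y‖ ≤ ‖iteratedFDeriv ℝ k f x‖ + 1 :=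
    (hf.continuousAt_iteratedFDeriv le_rfl).norm.eventually_le_const (lt_add_one _)
  obtain ⟨R, hR, h⟩ := Metric.eventually_nhds_iff_ball.1
    ((hf.eventually (by simp)).and hbound)
  refine Asymptotics.IsBigO.of_bound (‖iteratedFDeriv ℝ k f x‖ + 1) ?_
  filter_upwards [ball_mem_nhds x hR] with y hy
  rw [norm_pow, norm_norm]
  exact norm_le_mul_pow_of_iteratedFDeriv_eq_zero
    (fun z hz => (h z hz).1.contDiffWithinAt) hx (fun z hz => (h z hz).2) hy

theorem HarmonicOnSet.contDiffAt {v : En n → ℝ} {U : Set (En n)} {x : En n}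
    (hv : HarmonicOnSet v U) (hU : IsOpen U) (hx : x ∈ U) (k : ℕ) : ContDiffAt ℝ k v x :=
  ((hv.meanValueOn hU).contDiffOn hU (k := k)).contDiffAt (hU.mem_nhds hx)

theorem HarmonicOnSet.exists_iteratedFDeriv_ne_zero {v : En n → ℝ} {U : Set (En n)} {x : En n}
    (hv : HarmonicOnSet v U) (hU : IsOpen U) (hUc : IsPreconnected U) (hne : ∃ y ∈ U, v y ≠ 0)
    (hx : x ∈ U) : ∃ k, iteratedFDeriv ℝ k v x ≠ 0 := by
  by_contra! h
  obtain ⟨c, hc, N, δ, hδ, hvN⟩ := hv.exists_pow_le_abs hU hUc hne isCompact_singleton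
    (singleton_subset_iff.2 hx)
  obtain ⟨C, hC, hO⟩ := (isBigO_pow_of_iteratedFDeriv_eq_zero
    (hv.contDiffAt hU hx (N + 1)) fun j _ => h j).exists_pos
  obtain ⟨ε, hε, hball⟩ := nhds_basis_closedBall.mem_iff.1 hO.bound
  set ρ := min (min δ ε) (c / (2 * C))
  have hρ : 0 < ρ := by positivity
  obtain ⟨y, hy, hvy⟩ := hvN x rfl ρ ⟨hρ, (min_le_left _ _).trans (min_le_left _ _)⟩
  have hupper : |v y| ≤ C * ρ ^ (N + 1) := by
    have := hball (closedBall_subset_closedBall ((min_le_left _ _).trans (min_le_right _ _)) hy)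
    rw [mem_ofPred_eq, norm_pow, norm_norm, Real.norm_eq_abs] at this
    exact this.trans (by gcongr; exact mem_closedBall_iff_norm.1 hy)
  have hCρ : C * ρ ≤ c / 2 := by
    calc C * ρ ≤ C * (c / (2 * C)) := by gcongr; exact min_le_right _ _
      _ = c / 2 := by field_simp
  have : C * ρ ^ (N + 1) ≤ c / 2 * ρ ^ N := by
    rw [pow_succ', ← mul_assoc]
    gcongr
  nlinarith [pow_pos hρ N]

end Vanishing

section BlowUp

theorem iteratedFDeriv_comp_const_add_smul {E F : Type*} [NormedAddCommGroup E]
    [NormedSpace ℝ E] [NormedAddCommGroup F] [NormedSpace ℝ F] (f : E → F) (x y : E) {s : ℝ}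
    (hs : s ≠ 0) (k : ℕ) :
    iteratedFDeriv ℝ k (fun y => f (x + s • y)) y = s ^ k • iteratedFDeriv ℝ k f (x + s • y) := by
  have h := (ContinuousLinearEquiv.smulLeft (M₁ := E)
    (Units.mk0 s hs)).iteratedFDerivWithin_comp_right (fun y => f (x + y))
    (uniqueDiffOn_univ (𝕜 := ℝ)) (mem_univ _) (x := y) k
  simp only [preimage_univ, iteratedFDerivWithin_univ] at h
  rw [iteratedFDeriv_comp_add_left] at h
  refine h.trans ?_
  ext v
  simpa using (iteratedFDeriv ℝ k f (x + s • y)).map_smul_univ (fun _ => s) v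

/-- The blow-up of `f` at `x` with exponent `k` and scale `s`. -/
def blowUp (f : En n → ℝ) (x : En n) (k : ℕ) (s : ℝ) (y : En n) : ℝ :=
  (s ^ k)⁻¹ * f (x + s • y)

variable {f v : En n → ℝ} {U : Set (En n)} {x : En n} {m k : ℕ}

theorem iteratedFDeriv_blowUp_zero (hf : ContDiffAt ℝ k f x) {s : ℝ} (hs : s ≠ 0) :
    iteratedFDeriv ℝ k (blowUp f x k s) 0 = iteratedFDeriv ℝ k f x := by
  have h : blowUp f x k s = (s ^ k)⁻¹ • fun y => f (x + s • y) := rfl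
  have hx : x + s • (0 : En n) = x := by rw [smul_zero, add_zero]
  have hcd : ContDiffAt ℝ k (fun y : En n => f (x + s • y)) 0 :=
    ContDiffAt.comp 0 (hx.symm ▸ hf) (by fun_prop)
  rw [h, iteratedFDeriv_const_smul_apply hcd, iteratedFDeriv_comp_const_add_smul f x 0 hs k, hx,
    inv_smul_smul₀ (pow_ne_zero k hs)]

theorem harmonicOnSet_blowUp (hv : HarmonicOnSet v U) (hU : IsOpen U) (x : En n) (k : ℕ)
    (s : ℝ) : HarmonicOnSet (blowUp v x k s) ((fun y => x + s • y) ⁻¹' U) :=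
  (hv.comp_add_smul hU x s).const_mul (hU.preimage (by fun_prop)) _

theorem abs_blowUp_le {C s : ℝ} (hs : 0 < s) {y : En n}
    (h : |f (x + s • y)| ≤ C * ‖s • y‖ ^ k) : |blowUp f x k s y| ≤ C * ‖y‖ ^ k := by
  rw [blowUp, abs_mul, abs_of_pos (by positivity), inv_mul_le_iff₀ (by positivity)]
  calc |f (x + s • y)| ≤ C * ‖s • y‖ ^ k := h
    _ = s ^ k * (C * ‖y‖ ^ k) := by rw [norm_smul, Real.norm_of_nonneg hs.le]; ring

theorem HarmonicOnSet.exists_tendsto_blowUp (hv : HarmonicOnSet v U) (hU : IsOpen U)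
    (hx : x ∈ U) (hlt : ∀ j < k, iteratedFDeriv ℝ j v x = 0)
    (hk : iteratedFDeriv ℝ k v x ≠ 0) :
    ∃ σ > 0, ∀ s : ℕ → ℝ, (∀ j, s j ∈ Ioc 0 σ) → ∃ (F : En n → ℝ) (φ : ℕ → ℕ), StrictMono φ ∧
      TendstoUniformlyOn (fun j => blowUp v x k (s (φ j))) F atTop (closedBall 0 1) ∧
      HarmonicOnSet F (ball 0 1) ∧ ∃ y ∈ ball 0 1, F y ≠ 0 := by
  obtain ⟨C, hC, hO⟩ := (isBigO_pow_of_iteratedFDeriv_eq_zero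
    (hv.contDiffAt hU hx k) hlt).exists_pos
  obtain ⟨R, hR, hball⟩ := Metric.eventually_nhds_iff_ball.1
    ((hU.eventually_mem hx).and hO.bound)
  refine ⟨R / 3, by positivity, fun s hs => ?_⟩
  have hmem (j) {y : En n} (hy : y ∈ ball 0 3) : x + s j • y ∈ ball x R := by
    have := hs j
    rw [mem_ball_zero_iff] at hy
    rw [mem_ball_iff_norm, add_sub_cancel_left, norm_smul, Real.norm_of_nonneg this.1.le]
    nlinarith [this.1, this.2]
  have hmv (j) : MeanValueOn (blowUp v x k (s j)) (ball 0 3) :=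
    ((harmonicOnSet_blowUp hv hU x k (s j)).mono
      fun y hy => (hball _ (hmem j hy)).1).meanValueOn isOpen_ball
  have hle : closedBall (0 : En n) (1 + 1) ⊆ ball 0 3 := closedBall_subset_ball (by norm_num)
  have hbound (j) (y : En n) (hy : y ∈ closedBall 0 (1 + 1)) :
      |blowUp v x k (s j) y| ≤ C * 2 ^ k := by
    refine (abs_blowUp_le (hs j).1 (by simpa using (hball _ (hmem j (hle hy))).2)).trans ?_
    gcongr
    exact (mem_closedBall_zero_iff.1 hy).trans_eq one_add_one_eq_two
  obtain ⟨F, φ, hφ, hF⟩ := MeanValueOn.exists_subseq_tendstoUniformlyOn hmv isOpen_ball one_pos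
    hle hbound
  have hmv' (j) : MeanValueOn (blowUp v x k (s (φ j))) (ball 0 1) :=
    (hmv _).mono (ball_subset_ball (by norm_num))
  have hF' := hF.mono ball_subset_closedBall
  refine ⟨F, φ, hφ, hF, (MeanValueOn.of_tendstoUniformlyOn hmv' hF').harmonicOnSet isOpen_ball,
    ?_⟩
  by_contra! h0
  have hlim := MeanValueOn.tendsto_iteratedFDeriv hmv' isOpen_ball hF' k (mem_ball_self one_pos)
  simp only [iteratedFDeriv_blowUp_zero (hv.contDiffAt hU hx k) (hs _).1.ne'] at hlim
  have hF0 : F =ᶠ[𝓝 0] fun _ => 0 :=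
    eventuallyEq_of_mem (isOpen_ball.mem_nhds (mem_ball_self one_pos)) h0
  rw [(hF0.iteratedFDeriv ℝ k).self_of_nhds, iteratedFDeriv_fun_zero] at hlim
  exact hk (tendsto_nhds_unique tendsto_const_nhds hlim)

theorem HarmonicOnSet.eqOn_zero_or_eqOn_zero (hf : HarmonicOnSet f U) (hv : HarmonicOnSet v U)
    (hU : IsOpen U) (hUc : IsPreconnected U) (hfv : EqOn (f * v) 0 U) :
    EqOn f 0 U ∨ EqOn v 0 U := by
  refine or_iff_not_imp_left.2 fun h => ?_
  obtain ⟨y, hy, hfy⟩ : ∃ y ∈ U, f y ≠ 0 := by simpa [EqOn] using h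
  refine hv.eqOn_zero hU hUc hy ?_
  filter_upwards [hU.mem_nhds hy,
    (hf.1.continuousOn.continuousAt (hU.mem_nhds hy)).eventually_ne hfy] with z hz hfz
  exact (mul_eq_zero.1 (hfv hz)).resolve_left hfz

theorem HarmonicOnSet.exists_abs_integral_mul_le (hf : HarmonicOnSet f U)
    (hv : HarmonicOnSet v U) (hU : IsOpen U) (hx : x ∈ U)
    (hlt : ∀ j < m, iteratedFDeriv ℝ j f x = 0) :
    ∃ C, ∃ δ > 0, ∀ s ∈ Ioc 0 δ,
      |∫ y, f (x + s • y) * v (x + s • y) ∂ballMeasure n| ≤ C * (s ^ 2) ^ m := by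
  obtain ⟨A, hA, hO⟩ := (isBigO_pow_of_iteratedFDeriv_eq_zero
    (hf.contDiffAt hU hx m) hlt).exists_pos
  obtain ⟨R, hR, hball⟩ := Metric.eventually_nhds_iff_ball.1
    ((hU.eventually_mem hx).and hO.bound)
  have hsub : ball x R ⊆ U := fun y hy => (hball y hy).1
  set t := R / 2
  have ht : t ∈ Ioo 0 R := ⟨by positivity, half_lt_self hR⟩
  obtain ⟨B, hB⟩ := (isCompact_closedBall x t).exists_bound_of_continuousOn
    (hv.1.continuousOn.mono ((closedBall_subset_ball ht.2).trans hsub))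
  have ht₀ := ht.1
  refine ⟨A * (t⁻¹) ^ m * B, t / 2, by positivity, fun s hs => ?_⟩
  have hs₀ := hs.1
  have hst : s ^ 2 / t ∈ Ioo 0 R := by
    refine ⟨by positivity, (div_lt_iff₀ ht₀).2 ?_⟩
    nlinarith [hs.2, ht.2]
  rw [(hf.mono hsub).integral_mul_dilation (hv.mono hsub) (t := s) (s' := s ^ 2 / t) (t' := t)
    ⟨hs₀, by linarith [hs.2, ht.2]⟩ ⟨hs₀, by linarith [hs.2, ht.2]⟩ hst ht.2
    (by field_simp)]
  have hbound (y : En n) (hy : y ∈ closedBall 0 1) :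
      ‖f (x + (s ^ 2 / t) • y) * v (x + t • y)‖ ≤ A * (t⁻¹) ^ m * B * (s ^ 2) ^ m := by
    have hfy := (hball _ (add_smul_mem_ball (by rw [abs_of_pos hst.1]; exact hst.2) hy)).2
    have hy₁ := mem_closedBall_zero_iff.1 hy
    rw [add_sub_cancel_left, norm_pow, norm_norm, norm_smul, Real.norm_of_nonneg hst.1.le] at hfy
    calc ‖f (x + (s ^ 2 / t) • y) * v (x + t • y)‖
        ≤ A * (s ^ 2 / t * ‖y‖) ^ m * B := by
          rw [norm_mul]
          gcongr
          exact hB _ (add_smul_mem_closedBall ht₀.le hy)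
      _ ≤ A * (s ^ 2 / t * 1) ^ m * B := by
          have : 0 ≤ B := (norm_nonneg _).trans (hB x (mem_closedBall_self ht₀.le))
          gcongr
      _ = A * (t⁻¹) ^ m * B * (s ^ 2) ^ m := by ring
  exact (norm_integral_le_of_norm_le_const
    (ae_ballMeasure_mem_closedBall.mono hbound)).trans_eq (by rw [probReal_univ, mul_one])

theorem abs_integral_blowUp_mul_le {C s : ℝ} (hs : s ∈ Ioc 0 1) (hkm : k < m)
    (h : |∫ y, f (x + s • y) * v (x + s • y) ∂ballMeasure n| ≤ C * (s ^ 2) ^ m) :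
    |∫ y, blowUp f x m s y * blowUp v x k s y ∂ballMeasure n| ≤ C * s := by
  have hs₀ := hs.1
  have hC : 0 ≤ C := nonneg_of_mul_nonneg_left ((abs_nonneg _).trans h) (by positivity)
  have heq : ∫ y, blowUp f x m s y * blowUp v x k s y ∂ballMeasure n
      = (s ^ (m + k))⁻¹ * ∫ y, f (x + s • y) * v (x + s • y) ∂ballMeasure n := by
    rw [← integral_const_mul]
    congr with y
    simp only [blowUp]
    ring
  rw [heq, abs_mul, abs_of_pos (by positivity), inv_mul_le_iff₀ (by positivity)]
  calc _ ≤ C * (s ^ 2) ^ m := h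
    _ ≤ C * s ^ (m + k + 1) := by
        rw [← pow_mul]
        gcongr C * ?_
        exact pow_le_pow_of_le_one hs₀.le hs.2 (by lia)
    _ = s ^ (m + k) * (C * s) := by ring

theorem HarmonicOnSet.exists_tendsto_blowUp_pair (hf : HarmonicOnSet f U)
    (hv : HarmonicOnSet v U) (hU : IsOpen U) (hx : x ∈ U)
    (hlt : ∀ j < m, iteratedFDeriv ℝ j f x = 0) (hm : iteratedFDeriv ℝ m f x ≠ 0)
    (hvlt : ∀ j < k, iteratedFDeriv ℝ j v x = 0) (hk : iteratedFDeriv ℝ k v x ≠ 0)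
    {δ : ℝ} (hδ : 0 < δ) :
    ∃ (a : ℕ → ℝ) (F G : En n → ℝ), (∀ j, a j ∈ Ioc 0 δ) ∧ Tendsto a atTop (𝓝 0) ∧
      TendstoUniformlyOn (fun j => blowUp f x m (a j)) F atTop (closedBall 0 1) ∧
      TendstoUniformlyOn (fun j => blowUp v x k (a j)) G atTop (closedBall 0 1) ∧
      (HarmonicOnSet F (ball 0 1) ∧ ∃ y ∈ ball 0 1, F y ≠ 0) ∧
      HarmonicOnSet G (ball 0 1) ∧ ∃ y ∈ ball 0 1, G y ≠ 0 := by
  obtain ⟨σ, hσ, hfσ⟩ := hf.exists_tendsto_blowUp hU hx hlt hm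
  obtain ⟨τ, hτ, hvτ⟩ := hv.exists_tendsto_blowUp hU hx hvlt hk
  set ρ := min (min σ τ) δ
  have hρ : 0 < ρ := by positivity
  let s (j : ℕ) : ℝ := ρ / (j + 1 : ℕ)
  have hs (j) : s j ∈ Ioc 0 ρ := ⟨by positivity, div_le_self hρ.le (by simp)⟩
  have hs₀ : Tendsto s atTop (𝓝 0) :=
    (tendsto_add_atTop_iff_nat 1).2 (tendsto_const_div_atTop_nhds_zero_nat ρ)
  obtain ⟨F, φ, hφ, hF, hF'⟩ := hfσ s fun j => Ioc_subset_Ioc_right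
    ((min_le_left _ _).trans (min_le_left _ _)) (hs j)
  obtain ⟨G, ψ, hψ, hG, hG'⟩ := hvτ (s ∘ φ) fun j => Ioc_subset_Ioc_right
    ((min_le_left _ _).trans (min_le_right _ _)) (hs _)
  exact ⟨fun j => s (φ (ψ j)), F, G, fun j => Ioc_subset_Ioc_right (min_le_right _ _) (hs _),
    hs₀.comp (hφ.comp hψ).tendsto_atTop, fun V hV => hψ.tendsto_atTop.eventually (hF V hV), hG,
    hF', hG'⟩

theorem HarmonicOnSet.continuousOn_blowUp (hv : HarmonicOnSet v U) (hU : IsOpen U) {s : ℝ}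
    (hs : 0 ≤ s) (hxs : closedBall x s ⊆ U) : ContinuousOn (blowUp v x k s) (closedBall 0 1) :=
  (harmonicOnSet_blowUp hv hU x k s).1.continuousOn.mono fun _ hy =>
    hxs (add_smul_mem_closedBall hs hy)

theorem blowUp_mul_blowUp_nonneg {s : ℝ} (hs : 0 ≤ s) {y : En n}
    (h : 0 ≤ f (x + s • y) * v (x + s • y)) : 0 ≤ blowUp f x m s y * blowUp v x k s y := by
  rw [blowUp, blowUp, mul_mul_mul_comm]
  positivity

/-- If `m > k`, the blow-ups of `f` and `v` would have nonzero harmonic limits `F`, `G` with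
`F * G ≥ 0`, while by `HarmonicOnSet.integral_mul_dilation` the integral of `f * v` at scale `s`
is `O(s ^ (2 * m))`, of smaller order than `s ^ (m + k)`, so that `∫ F * G = 0`. -/
theorem HarmonicOnSet.order_le_of_mul_nonneg (hf : HarmonicOnSet f U) (hv : HarmonicOnSet v U)
    (hU : IsOpen U) (hx : x ∈ U) (hfv : ∀ y ∈ U, 0 ≤ f y * v y)
    (hlt : ∀ j < m, iteratedFDeriv ℝ j f x = 0) (hm : iteratedFDeriv ℝ m f x ≠ 0)
    (hvlt : ∀ j < k, iteratedFDeriv ℝ j v x = 0) (hk : iteratedFDeriv ℝ k v x ≠ 0) : m ≤ k := by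
  by_contra! hkm
  obtain ⟨C, δ, hδ, hC⟩ := hf.exists_abs_integral_mul_le hv hU hx hlt
  obtain ⟨R, hR, hRU⟩ := nhds_basis_closedBall.mem_iff.1 (hU.mem_nhds hx)
  obtain ⟨a, F, G, ha, ha₀, hF, hG, ⟨hFh, yF, hyF, hFy⟩, hGh, yG, hyG, hGy⟩ :=
    hf.exists_tendsto_blowUp_pair hv hU hx hlt hm hvlt hk (δ := min (min δ R) 1) (by positivity)
  have haR (j) : closedBall x (a j) ⊆ U := (closedBall_subset_closedBall
    ((ha j).2.trans ((min_le_left _ _).trans (min_le_right _ _)))).trans hRU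
  have hfc (j) : ContinuousOn (blowUp f x m (a j)) (closedBall 0 1) :=
    hf.continuousOn_blowUp hU (ha j).1.le (haR j)
  have hvc (j) : ContinuousOn (blowUp v x k (a j)) (closedBall 0 1) :=
    hv.continuousOn_blowUp hU (ha j).1.le (haR j)
  have hFc : ContinuousOn F (closedBall 0 1) := hF.continuousOn (Frequently.of_forall hfc)
  have hGc : ContinuousOn G (closedBall 0 1) := hG.continuousOn (Frequently.of_forall hvc)
  have hFG : TendstoUniformlyOn (fun j y => blowUp f x m (a j) y * blowUp v x k (a j) y)
      (fun y => F y * G y) atTop (closedBall 0 1) := by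
    have hK := isCompact_closedBall (0 : En n) 1
    rw [← tendstoLocallyUniformlyOn_iff_tendstoUniformlyOn_of_compact hK] at hF hG ⊢
    exact hF.mul₀ hG hFc hGc
  have hint : ∫ y, F y * G y ∂ballMeasure n = 0 := by
    refine tendsto_nhds_unique (tendsto_integral_ballMeasure
      (fun j => (hfc j).mul (hvc j)) hFG) (squeeze_zero_norm (a := fun j => C * a j)
      (fun j => abs_integral_blowUp_mul_le (Ioc_subset_Ioc_right (min_le_right _ _) (ha j)) hkm
        (hC _ (Ioc_subset_Ioc_right ((min_le_left _ _).trans (min_le_left _ _)) (ha j)))) ?_)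
    simpa using ha₀.const_mul C
  have hnonneg (y) (hy : y ∈ closedBall (0 : En n) 1) : 0 ≤ F y * G y :=
    ge_of_tendsto' (hFG.tendsto_at hy) fun j => blowUp_mul_blowUp_nonneg (ha j).1.le
      (hfv _ (haR j (add_smul_mem_closedBall (ha j).1.le hy)))
  rcases hFh.eqOn_zero_or_eqOn_zero hGh isOpen_ball (convex_ball 0 1).isPreconnected
    (eqOn_zero_of_integral_ballMeasure_eq_zero (hFc.mul hGc) hnonneg hint) with h | h
  exacts [hFy (h hyF), hGy (h hyG)]

theorem HarmonicOnSet.iteratedFDeriv_ne_zero_of_mul_nonneg (hf : HarmonicOnSet f U)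
    (hv : HarmonicOnSet v U) (hU : IsOpen U) (hUc : IsPreconnected U) (hx : x ∈ U)
    (hne : ∃ y ∈ U, f y ≠ 0) (hfv : ∀ y ∈ U, 0 ≤ f y * v y)
    (hlt : ∀ j < k, iteratedFDeriv ℝ j v x = 0) (hk : iteratedFDeriv ℝ k v x ≠ 0) :
    iteratedFDeriv ℝ k f x ≠ 0 := by
  classical
  have hm := hf.exists_iteratedFDeriv_ne_zero hU hUc hne hx
  have hmlt (j) (hj : j < Nat.find hm) : iteratedFDeriv ℝ j f x = 0 :=
    not_not.1 (Nat.find_min hm hj)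
  have hvf (y) (hy : y ∈ U) : 0 ≤ v y * f y := mul_comm (f y) (v y) ▸ hfv y hy
  have heq : Nat.find hm = k := le_antisymm
    (hf.order_le_of_mul_nonneg hv hU hx hfv hmlt (Nat.find_spec hm) hlt hk)
    (hv.order_le_of_mul_nonneg hf hU hx hvf hlt hk hmlt (Nat.find_spec hm))
  exact heq ▸ Nat.find_spec hm

end BlowUp

section Comparison

variable {v : En n → ℝ} {U V K : Set (En n)} {x : En n}

theorem HarmonicOnSet.exists_ne_zero_of_subset (hv : HarmonicOnSet v U) (hU : IsOpen U)
    (hUc : IsPreconnected U) (hne : ∃ y ∈ U, v y ≠ 0) (hV : IsOpen V) (hVU : V ⊆ U)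
    (hx : x ∈ V) : ∃ y ∈ V, v y ≠ 0 := by
  by_contra! h
  obtain ⟨y, hy, hvy⟩ := hne
  exact hvy (hv.eqOn_zero hU hUc (hVU hx) (eventuallyEq_of_mem (hV.mem_nhds hx) h) hy)

theorem HarmonicOnSet.subset_sUnion_abs_le_mul (hv : HarmonicOnSet v U) (hU : IsOpen U)
    (hUc : IsPreconnected U) (hne : ∃ y ∈ U, v y ≠ 0) (hx : x ∈ U) (hV : V ∈ 𝓝 x) :
    U ⊆ ⋃₀ {W | IsOpen W ∧ ∃ C, ∀ u, HarmonicOnSet u U → (∀ y ∈ U, 0 ≤ u y * v y) →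
      ∀ M, (∀ y ∈ V, |u y| ≤ M) → ∀ z ∈ W, |u z| ≤ C * M} := by
  refine hUc.subset_of_closure_inter_subset (isOpen_sUnion fun W hW => hW.1)
    ⟨x, hx, interior V, ⟨isOpen_interior, 1, fun u _ _ M hM z hz => ?_⟩,
      mem_interior_iff_mem_nhds.2 hV⟩ ?_
  · simpa using hM z (interior_subset hz)
  rintro z ⟨hz, hzU⟩
  obtain ⟨R, hR, hRU⟩ := Metric.isOpen_iff.1 hU z hzU
  obtain ⟨y, ⟨W, ⟨hWo, C, hC⟩, hyW⟩, hzy⟩ := Metric.mem_closure_iff.1 hz (R / 8) (by positivity)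
  have hyR : ball y (7 * R / 8) ⊆ U :=
    (ball_subset_ball' (by rw [dist_comm]; linarith)).trans hRU
  obtain ⟨r, hr, hrW⟩ := nhds_basis_closedBall.mem_iff.1 (hWo.mem_nhds hyW)
  obtain ⟨C', hC'⟩ := (hv.mono hyR).exists_abs_le_mul_of_le (hv.exists_ne_zero_of_subset hU hUc
    hne isOpen_ball hyR (mem_ball_self (by positivity))) (r := R / 4) (by positivity) hr
    (by linarith)
  refine ⟨ball y (R / 4), ⟨isOpen_ball, C' * C, fun u hu huv M hM w hw => ?_⟩,
    mem_ball.2 (by linarith)⟩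
  rw [mul_assoc]
  exact hC' u (hu.mono hyR) (fun p hp => huv p (hyR hp)) _
    (fun p hp => hC u hu huv M hM p (hrW hp)) w (ball_subset_closedBall hw)

theorem HarmonicOnSet.exists_abs_le_mul_of_isCompact (hv : HarmonicOnSet v U) (hU : IsOpen U)
    (hUc : IsPreconnected U) (hne : ∃ y ∈ U, v y ≠ 0) (hx : x ∈ U) (hV : V ∈ 𝓝 x)
    (hK : IsCompact K) (hKU : K ⊆ U) :
    ∃ C, ∀ u, HarmonicOnSet u U → (∀ y ∈ U, 0 ≤ u y * v y) →
      ∀ M, (∀ y ∈ V, |u y| ≤ M) → ∀ z ∈ K, |u z| ≤ C * M := by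
  have hM₀ {u : En n → ℝ} {M} (hM : ∀ y ∈ V, |u y| ≤ M) : 0 ≤ M :=
    (abs_nonneg _).trans (hM x (mem_of_mem_nhds hV))
  refine hK.induction_on ⟨0, by simp⟩ (fun s t hst ⟨C, hC⟩ =>
    ⟨C, fun u hu huv M hM z hz => hC u hu huv M hM z (hst hz)⟩) ?_ fun z hz => ?_
  · rintro s t ⟨C, hC⟩ ⟨C', hC'⟩
    refine ⟨max C C', fun u hu huv M hM z hz => ?_⟩
    have := hM₀ hM
    rcases hz with hz | hz
    · exact (hC u hu huv M hM z hz).trans (by gcongr; exact le_max_left _ _)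
    · exact (hC' u hu huv M hM z hz).trans (by gcongr; exact le_max_right _ _)
  · obtain ⟨W, ⟨hWo, hW⟩, hzW⟩ := hv.subset_sUnion_abs_le_mul hU hUc hne hx hV (hKU hz)
    exact ⟨W, mem_nhdsWithin_of_mem_nhds (hWo.mem_nhds hzW), hW⟩

end Comparison

section LocalBound

variable {v : En n → ℝ} {U : Set (En n)} {x : En n} {R : ℝ} {k : ℕ}

theorem exists_pos_abs_mul_le_one {α : Type*} [TopologicalSpace α] {K : Set α} {u : α → ℝ}
    {z : α} (hK : IsCompact K) (hu : ContinuousOn u K) (hz : z ∈ K) (huz : u z ≠ 0) :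
    ∃ c > 0, (∀ y ∈ K, |c * u y| ≤ 1) ∧ ∃ y ∈ K, |c * u y| = 1 := by
  obtain ⟨y, hy, hmax⟩ := hK.exists_isMaxOn ⟨z, hz⟩ hu.abs
  have hpos : 0 < |u y| := (abs_pos.2 huz).trans_le (hmax hz)
  refine ⟨|u y|⁻¹, inv_pos.2 hpos, fun w hw => ?_, y, hy, ?_⟩
  · rw [abs_mul, abs_of_pos (inv_pos.2 hpos), inv_mul_le_iff₀ hpos, mul_one]
    exact hmax hw
  · rw [abs_mul, abs_of_pos (inv_pos.2 hpos), inv_mul_cancel₀ hpos.ne']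

theorem HarmonicOnSet.exists_pos_mul_normalized {u : En n → ℝ} {r C : ℝ}
    (hu : HarmonicOnSet u (ball x R)) (hr : 0 < r) (hrR : r < R) (hC : 0 < C)
    (hlt : ∃ y ∈ closedBall x r, C * ‖iteratedFDeriv ℝ k u x‖ < |u y|) :
    ∃ c > 0, (∀ y ∈ closedBall x r, |c * u y| ≤ 1) ∧ (∃ y ∈ closedBall x r, |c * u y| = 1) ∧
      ‖iteratedFDeriv ℝ k (fun y => c * u y) x‖ ≤ 1 / C := by
  obtain ⟨z, hz, hlt⟩ := hlt
  have huz : u z ≠ 0 := abs_pos.1 (lt_of_le_of_lt (by positivity) hlt)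
  obtain ⟨c, hc, hle, heq⟩ := exists_pos_abs_mul_le_one (isCompact_closedBall x r)
    (hu.1.continuousOn.mono (closedBall_subset_ball hrR)) hz huz
  refine ⟨c, hc, hle, heq, ?_⟩
  have hD : iteratedFDeriv ℝ k (fun y => c * u y) x = c • iteratedFDeriv ℝ k u x :=
    iteratedFDeriv_const_smul_apply' (a := c) (f := u)
      (hu.contDiffAt isOpen_ball (mem_ball_self (hr.trans hrR)) k)
  rw [hD, norm_smul, Real.norm_of_nonneg hc.le, le_div_iff₀ hC]
  calc c * ‖iteratedFDeriv ℝ k u x‖ * C = c * (C * ‖iteratedFDeriv ℝ k u x‖) := by ring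
    _ ≤ c * |u z| := by gcongr
    _ = |c * u z| := by rw [abs_mul, abs_of_pos hc]
    _ ≤ 1 := hle z hz

theorem HarmonicOnSet.not_tendsto_iteratedFDeriv_zero (hv : HarmonicOnSet v (ball x R))
    (hR : 0 < R) (hlt : ∀ j < k, iteratedFDeriv ℝ j v x = 0) (hk : iteratedFDeriv ℝ k v x ≠ 0)
    (hne : ∃ y ∈ ball x R, v y ≠ 0) {w : ℕ → En n → ℝ}
    (hw : ∀ j, HarmonicOnSet (w j) (ball x R)) (hwv : ∀ j, ∀ y ∈ ball x R, 0 ≤ w j y * v y)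
    (hle : ∀ j, ∀ y ∈ closedBall x (R / 8), |w j y| ≤ 1)
    (heq : ∀ j, ∃ y ∈ closedBall x (R / 8), |w j y| = 1) :
    ¬ Tendsto (fun j => iteratedFDeriv ℝ k (w j) x) atTop (𝓝 0) := by
  intro hw₀
  obtain ⟨C, hC⟩ := hv.exists_abs_le_mul_of_le hne (r := R / 4 + R / 8) (r' := R / 8)
    (by positivity) (by positivity) (by linarith)
  obtain ⟨f, φ, hφ, hlim⟩ := MeanValueOn.exists_subseq_tendstoUniformlyOn
    (fun j => (hw j).meanValueOn isOpen_ball) isOpen_ball (by positivity)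
    (closedBall_subset_ball (by linarith)) fun j => hC (w j) (hw j) (hwv j) 1 (hle j)
  replace hlim := hlim.mono ball_subset_closedBall
  have hsub : ball x (R / 4) ⊆ ball x R := ball_subset_ball (by linarith)
  have hx : x ∈ ball x (R / 4) := mem_ball_self (by positivity)
  have hmv (j) : MeanValueOn (w (φ j)) (ball x (R / 4)) :=
    ((hw _).mono hsub).meanValueOn isOpen_ball
  have hf := (MeanValueOn.of_tendstoUniformlyOn hmv hlim).harmonicOnSet isOpen_ball
  have hfne : ∃ y ∈ ball x (R / 4), f y ≠ 0 := by
    obtain ⟨j, hj⟩ := (Metric.tendstoUniformlyOn_iff.1 hlim 1 one_pos).exists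
    obtain ⟨y, hy, hy₁⟩ := heq (φ j)
    have hy' : y ∈ ball x (R / 4) := closedBall_subset_ball (by linarith) hy
    refine ⟨y, hy', fun h0 => ?_⟩
    simpa [h0, hy₁] using hj y hy'
  have hfv (y) (hy : y ∈ ball x (R / 4)) : 0 ≤ f y * v y :=
    ge_of_tendsto' ((hlim.tendsto_at hy).mul_const (v y)) fun j => hwv _ y (hsub hy)
  exact hf.iteratedFDeriv_ne_zero_of_mul_nonneg (hv.mono hsub) isOpen_ball
    (convex_ball _ _).isPreconnected hx hfne hfv hlt hk
    (tendsto_nhds_unique (MeanValueOn.tendsto_iteratedFDeriv hmv isOpen_ball hlim k hx)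
      (hw₀.comp hφ.tendsto_atTop))

theorem HarmonicOnSet.exists_abs_le_mul_norm_iteratedFDeriv (hv : HarmonicOnSet v (ball x R))
    (hR : 0 < R) (hne : ∃ y ∈ ball x R, v y ≠ 0) (hlt : ∀ j < k, iteratedFDeriv ℝ j v x = 0)
    (hk : iteratedFDeriv ℝ k v x ≠ 0) :
    ∃ C, ∀ u, HarmonicOnSet u (ball x R) → (∀ y ∈ ball x R, 0 ≤ u y * v y) →
      ∀ y ∈ closedBall x (R / 8), |u y| ≤ C * ‖iteratedFDeriv ℝ k u x‖ := by
  by_contra! hcon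
  choose u hu huv hulk using fun j : ℕ => hcon (j + 1)
  choose c hc hle heq hD using fun j => (hu j).exists_pos_mul_normalized (by positivity)
    (by linarith) (by positivity) (hulk j)
  refine hv.not_tendsto_iteratedFDeriv_zero hR hlt hk hne (w := fun j y => c j * u j y)
    (fun j => (hu j).const_mul isOpen_ball (c j)) (fun j y hy => ?_) hle heq
    (squeeze_zero_norm hD tendsto_one_div_add_atTop_nhds_zero_nat)
  rw [mul_assoc]
  exact mul_nonneg (hc j).le (huv j y hy)

theorem HarmonicOnSet.exists_abs_le_mul_norm_iteratedFDeriv_of_isCompact {K : Set (En n)}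
    (hv : HarmonicOnSet v U) (hU : IsOpen U) (hUc : IsPreconnected U) (hne : ∃ y ∈ U, v y ≠ 0)
    (hK : IsCompact K) (hKU : K ⊆ U) (hx : x ∈ U) (hlt : ∀ j < k, iteratedFDeriv ℝ j v x = 0)
    (hk : iteratedFDeriv ℝ k v x ≠ 0) :
    ∃ C > 0, ∀ u, HarmonicOnSet u U → (∀ y ∈ U, 0 ≤ u y * v y) →
      ∀ y ∈ K, |u y| ≤ C * ‖iteratedFDeriv ℝ k u x‖ := by
  obtain ⟨R, hR, hRU⟩ := Metric.isOpen_iff.1 hU x hx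
  obtain ⟨C, hC⟩ := (hv.mono hRU).exists_abs_le_mul_norm_iteratedFDeriv hR
    (hv.exists_ne_zero_of_subset hU hUc hne isOpen_ball hRU (mem_ball_self hR)) hlt hk
  obtain ⟨C', hC'⟩ := hv.exists_abs_le_mul_of_isCompact hU hUc hne hx
    (closedBall_mem_nhds x (by positivity : 0 < R / 8)) hK hKU
  refine ⟨max (C' * C) 1, by positivity, fun u hu huv y hy => ?_⟩
  calc |u y| ≤ C' * (C * ‖iteratedFDeriv ℝ k u x‖) := hC' u hu huv _
        (hC u (hu.mono hRU) fun z hz => huv z (hRU hz)) y hy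
    _ = C' * C * ‖iteratedFDeriv ℝ k u x‖ := by ring
    _ ≤ _ := by
        gcongr
        exact le_max_left _ _

end LocalBound

section Indicator

theorem mem_nhds_or_compl_mem_nhds {X : Type*} [TopologicalSpace X] {A : Set X} {z : X}
    (hz : z ∉ frontier A) : A ∈ 𝓝 z ∨ Aᶜ ∈ 𝓝 z := by
  simpa only [frontier_eq_inter_compl_interior, mem_inter_iff, mem_compl_iff, not_and_or, not_not,
    mem_interior_iff_mem_nhds] using hz

theorem continuousAt_indicator_of_frontier {X F : Type*} [TopologicalSpace X]
    [NormedAddCommGroup F] {f : X → F} {A : Set X} {z : X} (hf : ContinuousAt f z)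
    (hz : z ∈ frontier A → f z = 0) : ContinuousAt (A.indicator f) z := by
  by_cases h : z ∈ frontier A
  · have hAz : A.indicator f z = 0 := by simp [hz h]
    rw [ContinuousAt, hAz]
    exact squeeze_zero_norm (fun y => norm_indicator_le_norm_self f y)
      (by simpa [hz h] using hf.norm.tendsto)
  rcases mem_nhds_or_compl_mem_nhds h with hA | hA
  · exact hf.congr (eventuallyEq_of_mem hA (eqOn_indicator (s := A)).symm)
  · exact continuousAt_const.congr (eventuallyEq_of_mem hA (eqOn_indicator' (s := A)).symm)

variable {E F : Type*} [NormedAddCommGroup E] [NormedSpace ℝ E] [NormedAddCommGroup F]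
  [NormedSpace ℝ F] {f : E → F} {A U : Set E} {z : E}

theorem hasFDerivAt_indicator_of_frontier {f' : E → E →L[ℝ] F} (hf : HasFDerivAt f (f' z) z)
    (hz : z ∈ frontier A → f z = 0 ∧ f' z = 0) :
    HasFDerivAt (A.indicator f) (A.indicator f' z) z := by
  by_cases h : z ∈ frontier A
  · obtain ⟨hfz, hfz'⟩ := hz h
    have hAz : A.indicator f z = 0 := by simp [hfz]
    have hAz' : A.indicator f' z = 0 := by simp [hfz']
    rw [hfz', hasFDerivAt_iff_isLittleO] at hf
    rw [hAz', hasFDerivAt_iff_isLittleO]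
    refine Asymptotics.IsBigO.trans_isLittleO (.of_bound 1 (.of_forall fun y => ?_)) hf
    simpa [hfz, hAz] using norm_indicator_le_norm_self f y
  rcases mem_nhds_or_compl_mem_nhds h with hA | hA
  · rw [indicator_of_mem (mem_of_mem_nhds hA)]
    exact hf.congr_of_eventuallyEq (eventuallyEq_of_mem hA (eqOn_indicator (s := A)))
  · rw [indicator_of_notMem (mem_of_mem_nhds hA)]
    exact (hasFDerivAt_const 0 z).congr_of_eventuallyEq
      (eventuallyEq_of_mem hA (eqOn_indicator' (s := A)))

theorem fderiv_indicator_of_frontier (hf : DifferentiableAt ℝ f z)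
    (hz : z ∈ frontier A → f z = 0 ∧ fderiv ℝ f z = 0) :
    fderiv ℝ (A.indicator f) z = A.indicator (fderiv ℝ f) z :=
  (hasFDerivAt_indicator_of_frontier hf.hasFDerivAt hz).fderiv

theorem contDiffOn_one_indicator (hU : IsOpen U) (hf : ContDiffOn ℝ 1 f U)
    (hA : ∀ z ∈ U ∩ frontier A, f z = 0 ∧ fderiv ℝ f z = 0) :
    ContDiffOn ℝ 1 (A.indicator f) U := by
  have hderiv (z) (hz : z ∈ U) : HasFDerivAt (A.indicator f) (A.indicator (fderiv ℝ f) z) z :=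
    hasFDerivAt_indicator_of_frontier
      ((hf.contDiffAt (hU.mem_nhds hz)).differentiableAt one_ne_zero).hasFDerivAt
      fun h => hA z ⟨hz, h⟩
  refine (contDiffOn_succ_iff_fderiv_of_isOpen (n := 0) hU).2
    ⟨fun z hz => (hderiv z hz).differentiableAt.differentiableWithinAt, by simp,
      contDiffOn_zero.2 fun z hz => ContinuousAt.continuousWithinAt ?_⟩
  refine (continuousAt_indicator_of_frontier ((hf.continuousOn_fderiv_of_isOpen hU
    le_rfl).continuousAt (hU.mem_nhds hz)) fun h => (hA z ⟨hz, h⟩).2).congr ?_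
  filter_upwards [hU.mem_nhds hz] with y hy using (hderiv y hy).fderiv.symm

end Indicator

section Damp

variable {E : Type*} [NormedAddCommGroup E] [InnerProductSpace ℝ E] {e : ℝ}

/-- The vector `p` shortened by the factor `‖p‖² / (‖p‖² + e²)`: a smooth approximation of the
identity, uniformly within `e`, whose derivative vanishes at the origin. -/
def damp (e : ℝ) (p : E) : E := (‖p‖ ^ 2 / (‖p‖ ^ 2 + e ^ 2)) • p

theorem norm_sub_damp_le (he : 0 < e) (p : E) : ‖p - damp e p‖ ≤ e := by
  have hpos : 0 < ‖p‖ ^ 2 + e ^ 2 := by positivity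
  have hsub : p - damp e p = (e ^ 2 / (‖p‖ ^ 2 + e ^ 2)) • p := by
    rw [damp, sub_eq_iff_eq_add, ← add_smul, ← add_div, add_comm (e ^ 2), div_self hpos.ne',
      one_smul]
  rw [hsub, norm_smul, Real.norm_of_nonneg (by positivity), div_mul_eq_mul_div, div_le_iff₀ hpos]
  nlinarith [sq_nonneg (‖p‖ - e), norm_nonneg p]

theorem hasFDerivAt_damp (he : e ≠ 0) (p : E) :
    HasFDerivAt (damp e) ((‖p‖ ^ 2 / (‖p‖ ^ 2 + e ^ 2)) • ContinuousLinearMap.id ℝ E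
      + (2 * e ^ 2 / (‖p‖ ^ 2 + e ^ 2) ^ 2) • (innerSL ℝ p).smulRight p) p := by
  have hfactor : HasDerivAt (fun t : ℝ => t / (t + e ^ 2)) (e ^ 2 / (‖p‖ ^ 2 + e ^ 2) ^ 2)
      (‖p‖ ^ 2) :=
    ((hasDerivAt_id _).div ((hasDerivAt_id _).add_const _) (by positivity)).congr_deriv (by simp)
  refine ((hfactor.comp_hasFDerivAt p (hasStrictFDerivAt_norm_sq p).hasFDerivAt).smul
    (hasFDerivAt_id p)).congr_fderiv ?_
  ext w
  simp [smul_smul]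
  ring_nf

theorem contDiff_damp (he : e ≠ 0) : ContDiff ℝ 1 (damp e : E → E) :=
  ((contDiff_norm_sq ℝ).div ((contDiff_norm_sq ℝ).add contDiff_const)
    fun p => by positivity).smul contDiff_id

end Damp

section Flux

variable {v : En n → ℝ} {U A : Set (En n)} {y : En n} {e : ℝ}

open scoped Gradient

theorem HarmonicOnSet.contDiffOn_gradient (hU : IsOpen U) (hv : HarmonicOnSet v U) :
    ContDiffOn ℝ 1 (∇ v) U :=
  (toDual ℝ (En n)).symm.toContinuousLinearEquiv.contDiff.comp_contDiffOn (hv.contDiffOn_fderiv hU)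

theorem fderiv_gradient_apply (hv : DifferentiableAt ℝ (fderiv ℝ v) y) (w : En n) (i : Fin n) :
    fderiv ℝ (∇ v) y w i = fderiv ℝ (fderiv ℝ v) y w (EuclideanSpace.single i 1) := by
  have h : HasFDerivAt (∇ v) _ y :=
    (toDual ℝ (En n)).symm.toContinuousLinearEquiv.hasFDerivAt.comp y hv.hasFDerivAt
  rw [h.fderiv, ← toDual_symm_apply (𝕜 := ℝ), EuclideanSpace.inner_single_right]
  simp

theorem sum_fderiv_gradient_apply_single (hv : DifferentiableAt ℝ (fderiv ℝ v) y) :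
    ∑ i, fderiv ℝ (∇ v) y (EuclideanSpace.single i 1) i = laplacianAt v y := by
  simp only [fderiv_gradient_apply hv, laplacianAt_eq_sum_fderiv]

/-- The divergence at `y` of `damp e ∘ G`, where `G` is a divergence-free vector field with value
`p` and derivative `L` at `y`. -/
def dampDivergence (e : ℝ) (p : En n) (L : En n →L[ℝ] En n) : ℝ :=
  2 * e ^ 2 / (‖p‖ ^ 2 + e ^ 2) ^ 2 * ⟪p, L p⟫_ℝ

theorem sum_fderiv_damp_apply_single (he : e ≠ 0) (p : En n) (L : En n →L[ℝ] En n)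
    (hL : ∑ i, L (EuclideanSpace.single i 1) i = 0) :
    ∑ i, fderiv ℝ (damp e) p (L (EuclideanSpace.single i 1)) i = dampDivergence e p L := by
  have hinner : ∑ i, p i * ⟪p, L (EuclideanSpace.single i 1)⟫_ℝ = ⟪p, L p⟫_ℝ :=
    sum_coord_mul_apply_single (innerSL ℝ p ∘L L) p
  have hterm (i : Fin n) : fderiv ℝ (damp e) p (L (EuclideanSpace.single i 1)) i
      = ‖p‖ ^ 2 / (‖p‖ ^ 2 + e ^ 2) * L (EuclideanSpace.single i 1) i
        + 2 * e ^ 2 / (‖p‖ ^ 2 + e ^ 2) ^ 2 * (p i * ⟪p, L (EuclideanSpace.single i 1)⟫_ℝ) := by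
    rw [(hasFDerivAt_damp he p).fderiv]
    simp only [_root_.add_apply, _root_.smul_apply, ContinuousLinearMap.id_apply,
      ContinuousLinearMap.smulRight_apply, innerSL_apply_apply, PiLp.add_apply, PiLp.smul_apply,
      smul_eq_mul, mul_comm (p i)]
  simp only [hterm, Finset.sum_add_distrib, ← Finset.mul_sum, hL, hinner, mul_zero, zero_add,
    dampDivergence]

theorem abs_dampDivergence_le (he : e ≠ 0) (p : En n) (L : En n →L[ℝ] En n) :
    |dampDivergence e p L| ≤ 2 * ‖L‖ := by
  have hinner : |⟪p, L p⟫_ℝ| ≤ ‖p‖ ^ 2 * ‖L‖ := calc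
    |⟪p, L p⟫_ℝ| ≤ ‖p‖ * ‖L p‖ := abs_real_inner_le_norm p (L p)
    _ ≤ ‖p‖ * (‖L‖ * ‖p‖) := by
        gcongr
        exact L.le_opNorm p
    _ = ‖p‖ ^ 2 * ‖L‖ := by ring
  rw [dampDivergence, abs_mul, abs_of_nonneg (by positivity), div_mul_eq_mul_div,
    div_le_iff₀ (by positivity)]
  have hsq : e ^ 2 * ‖p‖ ^ 2 ≤ (‖p‖ ^ 2 + e ^ 2) ^ 2 := by
    nlinarith [sq_nonneg ‖p‖, sq_nonneg e]
  nlinarith [mul_le_mul_of_nonneg_left hinner (sq_nonneg e),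
    mul_le_mul_of_nonneg_right hsq (norm_nonneg L)]

theorem continuous_dampDivergence (he : e ≠ 0) :
    Continuous fun q : En n × (En n →L[ℝ] En n) => dampDivergence e q.1 q.2 :=
  (continuous_const.div (by fun_prop) fun q => by positivity).mul
    (continuous_fst.inner (continuous_snd.clm_apply continuous_fst))

theorem tendsto_dampDivergence (p : En n) (L : En n →L[ℝ] En n) :
    Tendsto (fun e => dampDivergence e p L) (𝓝 0) (𝓝 0) := by
  rcases eq_or_ne p 0 with rfl | hp
  · simp [dampDivergence]
  · have hcont : Continuous fun e => dampDivergence e p L :=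
      ((by fun_prop : Continuous fun e : ℝ => 2 * e ^ 2).div (by fun_prop)
        fun e => by positivity).mul continuous_const
    exact hcont.tendsto' _ _ (by simp [dampDivergence])

theorem HarmonicOnSet.hasFDerivAt_gradient (hU : IsOpen U) (hv : HarmonicOnSet v U)
    (hy : y ∈ U) : HasFDerivAt (∇ v) (fderiv ℝ (∇ v) y) y :=
  (((hv.contDiffOn_gradient hU).contDiffAt (hU.mem_nhds hy)).differentiableAt
    one_ne_zero).hasFDerivAt

theorem HarmonicOnSet.hasFDerivAt_damp_gradient (hU : IsOpen U) (hv : HarmonicOnSet v U)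
    (he : e ≠ 0) (hy : y ∈ U) :
    HasFDerivAt (damp e ∘ ∇ v) (fderiv ℝ (damp e) (∇ v y) ∘L fderiv ℝ (∇ v) y) y :=
  ((hasFDerivAt_damp he (∇ v y)).differentiableAt.hasFDerivAt).comp y
    (hv.hasFDerivAt_gradient hU hy)

theorem HarmonicOnSet.damp_gradient_eq_zero (hU : IsOpen U) (hv : HarmonicOnSet v U)
    (he : e ≠ 0) (hy : y ∈ U) (hcrit : fderiv ℝ v y = 0) :
    (damp e ∘ ∇ v) y = 0 ∧ fderiv ℝ (damp e ∘ ∇ v) y = 0 := by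
  have hgrad : ∇ v y = 0 := by simp [gradient, hcrit]
  rw [(hv.hasFDerivAt_damp_gradient hU he hy).fderiv, (hasFDerivAt_damp he _).fderiv]
  simp [hgrad, damp]

theorem HarmonicOnSet.contDiffOn_indicator_damp_gradient (hU : IsOpen U)
    (hv : HarmonicOnSet v U) (hA : ∀ z ∈ U ∩ frontier A, fderiv ℝ v z = 0) (he : e ≠ 0) :
    ContDiffOn ℝ 1 (A.indicator (damp e ∘ ∇ v)) U :=
  contDiffOn_one_indicator hU ((contDiff_damp he).comp_contDiffOn (hv.contDiffOn_gradient hU))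
    fun z hz => hv.damp_gradient_eq_zero hU he hz.1 (hA z hz)

theorem HarmonicOnSet.sum_fderiv_indicator_damp_gradient (hU : IsOpen U)
    (hv : HarmonicOnSet v U) (hA : ∀ z ∈ U ∩ frontier A, fderiv ℝ v z = 0) (he : e ≠ 0)
    (hy : y ∈ U) :
    ∑ i, fderiv ℝ (fun z => A.indicator (damp e ∘ ∇ v) z i) y (EuclideanSpace.single i 1)
      = A.indicator (fun z => dampDivergence e (∇ v z) (fderiv ℝ (∇ v) z)) y := by
  have hdamp := hv.hasFDerivAt_damp_gradient hU he hy
  have hind := hasFDerivAt_indicator_of_frontier (A := A)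
    hdamp.differentiableAt.hasFDerivAt
    fun h => hv.damp_gradient_eq_zero hU he hy (hA y ⟨hy, h⟩)
  have hcoord (i : Fin n) : fderiv ℝ (fun z => A.indicator (damp e ∘ ∇ v) z i) y
      = EuclideanSpace.proj i ∘L A.indicator (fderiv ℝ (damp e ∘ ∇ v)) y :=
    ((EuclideanSpace.proj (𝕜 := ℝ) i).hasFDerivAt.comp y hind).fderiv
  have htrace := sum_fderiv_gradient_apply_single (hv.hasFDerivAt_fderiv hU hy).differentiableAt
  rw [hv.2 y hy] at htrace
  simp only [hcoord]
  by_cases hyA : y ∈ A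
  · simp only [indicator_of_mem hyA, hdamp.fderiv]
    exact sum_fderiv_damp_apply_single he _ _ htrace
  · simp [indicator_of_notMem hyA]

theorem HarmonicOnSet.integral_inner_indicator_damp_gradient (hU : IsOpen U)
    (hBU : closedBall 0 1 ⊆ U) (hv : HarmonicOnSet v U)
    (hA : ∀ z ∈ U ∩ frontier A, fderiv ℝ v z = 0) (he : e ≠ 0) :
    ∫ y, ⟪A.indicator (damp e ∘ ∇ v) y, y⟫_ℝ ∂ballMeasure n
      = ∫ y, ballPotential y
        * A.indicator (fun z => dampDivergence e (∇ v z) (fderiv ℝ (∇ v) z)) y := by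
  have h := integral_sum_coord_mul_ballMeasure hU hBU fun i =>
    (EuclideanSpace.proj (𝕜 := ℝ) i).contDiff.comp_contDiffOn
      (hv.contDiffOn_indicator_damp_gradient hU hA he)
  simp only [PiLp.inner_apply, real_inner_eq_re_inner]
  refine .trans ?_ (h.trans (integral_congr_ae (ae_of_all _ fun y => ?_)))
  · rfl
  by_cases hy : y ∈ ball (0 : En n) 1
  · exact congrArg (ballPotential y * ·) (hv.sum_fderiv_indicator_damp_gradient hU hA he
      (hBU (ball_subset_closedBall hy)))
  · simp only [ballPotential_eq_zero hy, zero_mul]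

theorem HarmonicOnSet.abs_integral_indicator_fderiv_sub_le (hU : IsOpen U)
    (hBU : closedBall 0 1 ⊆ U) (hv : HarmonicOnSet v U)
    (hA : ∀ z ∈ U ∩ frontier A, fderiv ℝ v z = 0) (he : 0 < e) :
    |∫ y, A.indicator (fderiv ℝ v) y y ∂ballMeasure n - ∫ y, ballPotential y
      * A.indicator (fun z => dampDivergence e (∇ v z) (fderiv ℝ (∇ v) z)) y| ≤ e := by
  have hX := (hv.contDiffOn_indicator_damp_gradient hU hA he.ne').continuousOn.mono hBU
  have hderiv : ContinuousOn (A.indicator (fderiv ℝ v)) (closedBall 0 1) := fun z hz =>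
    (continuousAt_indicator_of_frontier
      ((hv.contDiffOn_fderiv hU).continuousOn.continuousAt (hU.mem_nhds (hBU hz)))
      fun h => hA z ⟨hBU hz, h⟩).continuousWithinAt
  rw [← hv.integral_inner_indicator_damp_gradient hU hBU hA he.ne',
    ← integral_sub (integrable_ballMeasure (hderiv.clm_apply (continuousOn_id' _)))
      (integrable_ballMeasure (hX.inner (continuousOn_id' _))), ← Real.norm_eq_abs]
  refine (norm_integral_le_of_norm_le_const (C := e)
    (ae_ballMeasure_mem_closedBall.mono fun y hy => ?_)).trans_eq (by simp)
  rw [mem_closedBall_zero_iff] at hy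
  by_cases hyA : y ∈ A
  · rw [indicator_of_mem hyA, indicator_of_mem hyA, ← inner_gradient_left, ← inner_sub_left]
    calc _ ≤ ‖∇ v y - damp e (∇ v y)‖ * ‖y‖ := norm_inner_le_norm _ _
      _ ≤ e * 1 := by
        gcongr
        exact norm_sub_damp_le he _
      _ = e := mul_one e
  · simpa [hyA] using he.le

theorem HarmonicOnSet.continuousOn_indicator_dampDivergence (hU : IsOpen U)
    (hv : HarmonicOnSet v U) (hA : ∀ z ∈ U ∩ frontier A, fderiv ℝ v z = 0) (he : e ≠ 0) :
    ContinuousOn (A.indicator fun z => dampDivergence e (∇ v z) (fderiv ℝ (∇ v) z)) U := by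
  have hgrad := hv.contDiffOn_gradient hU
  have hpair := hgrad.continuousOn.prodMk (hgrad.continuousOn_fderiv_of_isOpen hU le_rfl)
  intro z hz
  refine (continuousAt_indicator_of_frontier
    ((continuous_dampDivergence he).continuousAt.comp
      (hpair.continuousAt (hU.mem_nhds hz))) fun h => ?_).continuousWithinAt
  have hzero : ∇ v z = 0 := by rw [gradient, hA z ⟨hz, h⟩, map_zero]
  rw [Function.comp_apply, hzero]
  simp [dampDivergence]

theorem HarmonicOnSet.tendsto_integral_dampDivergence (hU : IsOpen U)
    (hBU : closedBall 0 1 ⊆ U) (hv : HarmonicOnSet v U)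
    (hA : ∀ z ∈ U ∩ frontier A, fderiv ℝ v z = 0) :
    Tendsto (fun e => ∫ y, ballPotential y
      * A.indicator (fun z => dampDivergence e (∇ v z) (fderiv ℝ (∇ v) z)) y) (𝓝[>] 0) (𝓝 0) := by
  have hbound : Integrable fun y => ballPotential y * (2 * ‖fderiv ℝ (∇ v) y‖) :=
    integrable_ballPotential_mul (continuousOn_const.mul
      (((hv.contDiffOn_gradient hU).continuousOn_fderiv_of_isOpen hU le_rfl).mono hBU).norm)
  rw [show 𝓝 (0 : ℝ) = 𝓝 (∫ _ : En n, (0 : ℝ)) by rw [integral_zero]]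
  refine tendsto_integral_filter_of_dominated_convergence _ ?_ ?_ hbound.norm
    (ae_of_all _ fun y => ?_)
  · filter_upwards [self_mem_nhdsWithin] with e he
    exact (integrable_ballPotential_mul ((hv.continuousOn_indicator_dampDivergence hU hA
      (ne_of_gt he)).mono hBU)).aestronglyMeasurable
  · filter_upwards [self_mem_nhdsWithin] with e he
    refine ae_of_all _ fun y => ?_
    simp only [norm_mul]
    gcongr
    refine (norm_indicator_le_norm_self _ _).trans ?_
    simpa using abs_dampDivergence_le (ne_of_gt he) (∇ v y) (fderiv ℝ (∇ v) y)
  · by_cases hyA : y ∈ A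
    · simpa [hyA] using ((tendsto_dampDivergence (∇ v y) (fderiv ℝ (∇ v) y)).const_mul
        (ballPotential y)).mono_left nhdsWithin_le_nhds
    · simp [hyA]

/-- The critical points of `v` may form a large part of the frontier of `A`, so the divergence
theorem is applied to the damped gradient, whose cut-off to `A` is still continuously
differentiable. -/
theorem HarmonicOnSet.integral_indicator_fderiv_eq_zero (hU : IsOpen U)
    (hBU : closedBall 0 1 ⊆ U) (hv : HarmonicOnSet v U)
    (hA : ∀ z ∈ U ∩ frontier A, fderiv ℝ v z = 0) :
    ∫ y, A.indicator (fderiv ℝ v) y y ∂ballMeasure n = 0 := by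
  have hid : Tendsto (fun e : ℝ => e) (𝓝[>] 0) (𝓝 0) := tendsto_id.mono_left nhdsWithin_le_nhds
  have hlim := ((tendsto_const_nhds (x := ∫ y, A.indicator (fderiv ℝ v) y y ∂ballMeasure n)).sub
    (hv.tendsto_integral_dampDivergence hU hBU hA)).abs
  rw [sub_zero] at hlim
  refine abs_nonpos_iff.1 (le_of_tendsto_of_tendsto hlim hid ?_)
  filter_upwards [self_mem_nhdsWithin] with e he
  exact hv.abs_integral_indicator_fderiv_sub_le hU hBU hA he

theorem HarmonicOnSet.integral_indicator_fderiv_comp_add_smul_eq_zero {x : En n} {R s : ℝ}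
    (hv : HarmonicOnSet v (ball x R)) (hA : ∀ z ∈ ball x R ∩ frontier A, fderiv ℝ v z = 0)
    (hs : s ∈ Ioo 0 R) :
    ∫ y, A.indicator (fderiv ℝ v) (x + s • y) y ∂ballMeasure n = 0 := by
  let φ (y : En n) : En n := x + s • y
  have hφ : Continuous φ := by fun_prop
  have hderiv (y : En n) : fderiv ℝ (fun y => v (φ y)) y = s • fderiv ℝ v (φ y) :=
    congrFun (fderiv_comp_const_add_smul v x s) y
  have hball : closedBall 0 1 ⊆ φ ⁻¹' ball x R := fun y hy =>
    mem_preimage.2 (add_smul_mem_ball ((abs_of_pos hs.1).trans_lt hs.2) hy)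
  have hcrit : ∀ y ∈ φ ⁻¹' ball x R ∩ frontier (φ ⁻¹' A), fderiv ℝ (fun y => v (φ y)) y = 0 :=
    fun y hy => by rw [hderiv, hA _ ⟨hy.1, hφ.frontier_preimage_subset A hy.2⟩, smul_zero]
  have h := (hv.comp_add_smul isOpen_ball x s).integral_indicator_fderiv_eq_zero
    (isOpen_ball.preimage hφ) hball hcrit
  have hscale (y : En n) : (φ ⁻¹' A).indicator (fderiv ℝ fun y => v (x + s • y)) y y
      = s * A.indicator (fderiv ℝ v) (φ y) y := by
    by_cases hy : φ y ∈ A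
    · rw [indicator_of_mem (mem_preimage.2 hy), indicator_of_mem hy, hderiv]
      rfl
    · simp [hy]
  simp only [hscale, integral_const_mul] at h
  exact (mul_eq_zero.1 h).resolve_left hs.1.ne'

theorem HarmonicOnSet.indicator {A : Set (En n)} (hU : IsOpen U) (hv : HarmonicOnSet v U)
    (hA : ∀ z ∈ U ∩ frontier A, v z = 0 ∧ fderiv ℝ v z = 0) :
    HarmonicOnSet (A.indicator v) U := by
  have hC1 : ContDiffOn ℝ 1 (A.indicator v) U :=
    contDiffOn_one_indicator hU (hv.1.of_le one_le_two) hA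
  refine MeanValueOn.harmonicOnSet ⟨hC1.continuousOn, fun x r hr hxr => ?_⟩ hU
  obtain ⟨R, hR, hRU⟩ := exists_ball_subset_of_closedBall_subset hU hr.le hxr
  have hderiv (s : ℝ) (hs : s ∈ Ioo 0 r) :
      HasDerivAt (fun s => ∫ y, A.indicator v (x + s • y) ∂ballMeasure n) 0 s := by
    have hsR : |s| < R := abs_lt.2 ⟨by linarith [hs.1, hs.2], by linarith [hs.2]⟩
    refine (hasDerivAt_integral_comp_add_smul (hC1.mono hRU) hsR).congr_deriv ?_
    rw [← (hv.mono hRU).integral_indicator_fderiv_comp_add_smul_eq_zero (A := A)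
      (fun z hz => (hA z ⟨hRU hz.1, hz.2⟩).2) ⟨hs.1, by linarith [hs.2]⟩]
    refine integral_congr_ae (ae_ballMeasure_mem_closedBall.mono fun y hy => ?_)
    have hyU := hRU (add_smul_mem_ball (x := x) hsR hy)
    dsimp only
    rw [fderiv_indicator_of_frontier (hv.hasFDerivAt hU hyU).differentiableAt
      fun h => hA _ ⟨hyU, h⟩]
  have hcont : ContinuousOn (fun s => ∫ y, A.indicator v (x + s • y) ∂ballMeasure n) (Icc 0 r) :=
    (continuousOn_integral_comp_add_smul (hC1.continuousOn.mono hRU)).mono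
      fun s hs => ⟨by linarith [hs.1], by linarith [hs.2]⟩
  obtain ⟨_, _, hslope⟩ := exists_hasDerivAt_eq_slope _ _ hr hcont hderiv
  simpa [sub_eq_zero] using (div_eq_zero_iff.1 hslope.symm).resolve_right (by simpa using hr.ne')

end Flux

section Sign

variable {u v f : En n → ℝ} {U : Set (En n)} {z : En n}

theorem pos_or_neg_of_isPreconnected {α : Type*} [TopologicalSpace α] {S : Set α} {g : α → ℝ}
    (hS : IsPreconnected S) (hg : ContinuousOn g S) (hne : ∀ a ∈ S, g a ≠ 0) :
    (∀ a ∈ S, 0 < g a) ∨ ∀ a ∈ S, g a < 0 := by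
  by_contra! ⟨⟨a, ha, hga⟩, b, hb, hgb⟩
  obtain ⟨c, hc, hgc⟩ := hS.intermediate_value ha hb hg ⟨hga, hgb⟩
  exact hne c hc hgc

theorem exists_mem_nhds_forall_isPreconnected_inter_preimage {E : Type*} [NormedAddCommGroup E]
    [NormedSpace ℝ E] [CompleteSpace E] {g : E → ℝ} {g' : E →L[ℝ] ℝ} {a : E} {V : Set E}
    (hg : HasStrictFDerivAt g g' a) (hg' : g' ≠ 0) (hV : V ∈ 𝓝 a) :
    ∃ W ∈ 𝓝 a, W ⊆ V ∧ ∀ I : Set ℝ, Convex ℝ I → IsPreconnected (W ∩ g ⁻¹' I) := by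
  have hrange : g'.range = ⊤ :=
    Module.Dual.range_eq_top_of_ne_zero fun h => hg' (ContinuousLinearMap.coe_injective h)
  let φ := hg.implicitToOpenPartialHomeomorph g g' hrange
  have ha : a ∈ φ.source := hg.mem_implicitToOpenPartialHomeomorph_source hrange
  obtain ⟨r, hr, hrV⟩ := Metric.mem_nhds_iff.1
    (inter_mem (φ.open_target.mem_nhds (φ.map_source ha)) (φ.tendsto_symm ha hV))
  have htarget : ball (φ a) r ⊆ φ.target := fun p hp => (hrV hp).1
  refine ⟨φ.symm '' ball (φ a) r, ?_, image_subset_iff.2 fun p hp => (hrV hp).2, fun I hI => ?_⟩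
  · rw [← φ.symm_map_nhds_eq ha]
    exact image_mem_map (ball_mem_nhds _ hr)
  have himage : φ.symm '' ball (φ a) r ∩ g ⁻¹' I
      = φ.symm '' (ball (φ a) r ∩ Prod.fst ⁻¹' I) := by
    rw [← image_inter_preimage]
    refine congrArg _ (Set.ext fun p => and_congr_right fun hp => ?_)
    have hfst : g (φ.symm p) = p.1 := congrArg Prod.fst (φ.right_inv (htarget hp))
    rw [mem_preimage, mem_preimage, mem_preimage, hfst]
  rw [himage]
  exact ((convex_ball _ _).inter (hI.linear_preimage (LinearMap.fst ℝ ℝ _))).isPreconnected.image _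
    (φ.continuousOn_symm.mono (inter_subset_left.trans htarget))

theorem HarmonicOnSet.eventuallyEq_zero_of_nonneg (hU : IsOpen U) (hf : HarmonicOnSet f U)
    (hz : z ∈ U) (hfz : f z = 0) (h0 : ∀ᶠ y in 𝓝 z, 0 ≤ f y) : f =ᶠ[𝓝 z] 0 := by
  obtain ⟨r, hr, hball⟩ := Metric.eventually_nhds_iff_ball.1 ((hU.eventually_mem hz).and h0)
  have hs : r / 2 ∈ Ioo 0 r := ⟨half_pos hr, half_lt_self hr⟩
  have hmem : ∀ y ∈ closedBall (0 : En n) 1, z + (r / 2) • y ∈ ball z r :=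
    fun y => add_smul_mem_ball (by rw [abs_of_pos hs.1]; exact hs.2)
  have hfr : HarmonicOnSet f (ball z r) := hf.mono fun y hy => (hball y hy).1
  have hzero := eqOn_zero_of_integral_ballMeasure_eq_zero
    (hfr.1.continuousOn.comp (by fun_prop) hmem) (fun y hy => (hball _ (hmem y hy)).2)
    ((hfr.integral_eq hs).trans hfz)
  filter_upwards [ball_mem_nhds z hs.1] with y hy
  have hy' : (r / 2)⁻¹ • (y - z) ∈ ball (0 : En n) 1 := by
    rw [mem_ball_zero_iff, norm_smul, norm_inv, Real.norm_of_nonneg hs.1.le, ← dist_eq_norm,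
      inv_mul_lt_one₀ hs.1]
    exact hy
  simpa [smul_smul, hr.ne'] using hzero hy'

theorem HarmonicOnSet.eventually_mul_nonneg_or_nonpos (hU : IsOpen U) (hu : HarmonicOnSet u U)
    (hv : HarmonicOnSet v U) (hZ : ∀ y ∈ U, u y = 0 ↔ v y = 0) (hz : z ∈ U) (hvz : v z = 0)
    (hd : fderiv ℝ v z ≠ 0) :
    (∀ᶠ y in 𝓝 z, 0 ≤ u y * v y) ∨ ∀ᶠ y in 𝓝 z, u y * v y ≤ 0 := by
  obtain ⟨W, hW, hWU, hconn⟩ := exists_mem_nhds_forall_isPreconnected_inter_preimage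
    ((hv.1.contDiffAt (hU.mem_nhds hz)).hasStrictFDerivAt two_ne_zero) hd (hU.mem_nhds hz)
  have hu0 : ¬u =ᶠ[𝓝 z] 0 := fun h => hd <| by
    have hv0 : v =ᶠ[𝓝 z] 0 := by
      filter_upwards [h, hU.mem_nhds hz] with y hy hyU using (hZ y hyU).1 hy
    rw [hv0.fderiv_eq, fderiv_zero, Pi.zero_apply]
  have huz := (hZ z hz).2 hvz
  have hsign (I : Set ℝ) (hI : Convex ℝ I) (hI0 : (0 : ℝ) ∉ I) :=
    pos_or_neg_of_isPreconnected (hconn I hI)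
      (hu.1.continuousOn.mono (inter_subset_left.trans hWU))
      fun y hy h => hI0 ((hZ y (hWU hy.1)).1 h ▸ hy.2)
  have hW0 : ∀ y ∈ W, v y = 0 → u y = 0 := fun y hy => (hZ y (hWU hy)).2
  rcases hsign (Ioi 0) (convex_Ioi 0) self_notMem_Ioi with hpos | hpos <;>
    rcases hsign (Iio 0) (convex_Iio 0) self_notMem_Iio with hneg | hneg
  · refine absurd (hu.eventuallyEq_zero_of_nonneg hU hz huz ?_) hu0
    filter_upwards [hW] with y hy
    rcases lt_trichotomy (v y) 0 with h | h | h
    exacts [(hneg y ⟨hy, h⟩).le, (hW0 y hy h).ge, (hpos y ⟨hy, h⟩).le]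
  · left
    filter_upwards [hW] with y hy
    rcases lt_trichotomy (v y) 0 with h | h | h
    exacts [(mul_pos_of_neg_of_neg (hneg y ⟨hy, h⟩) h).le, by simp [h],
      (mul_pos (hpos y ⟨hy, h⟩) h).le]
  · right
    filter_upwards [hW] with y hy
    rcases lt_trichotomy (v y) 0 with h | h | h
    exacts [(mul_neg_of_pos_of_neg (hneg y ⟨hy, h⟩) h).le, by simp [h],
      (mul_neg_of_neg_of_pos (hpos y ⟨hy, h⟩) h).le]
  · have hu' := (hu.const_mul hU (-1)).eventuallyEq_zero_of_nonneg hU hz (by simp [huz]) ?_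
    · exact absurd (hu'.mono fun y hy => by simpa using hy) hu0
    filter_upwards [hW] with y hy
    rw [neg_one_mul, neg_nonneg]
    rcases lt_trichotomy (v y) 0 with h | h | h
    exacts [(hneg y ⟨hy, h⟩).le, (hW0 y hy h).le, (hpos y ⟨hy, h⟩).le]

theorem HarmonicOnSet.critical_or_eventually_mul_nonneg_or_nonpos (hU : IsOpen U)
    (hu : HarmonicOnSet u U) (hv : HarmonicOnSet v U) (hZ : ∀ y ∈ U, u y = 0 ↔ v y = 0)
    (hz : z ∈ U) :
    (v z = 0 ∧ fderiv ℝ v z = 0) ∨ (∀ᶠ y in 𝓝 z, 0 ≤ u y * v y) ∨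
      ∀ᶠ y in 𝓝 z, u y * v y ≤ 0 := by
  by_cases hvz : v z = 0
  · by_cases hd : fderiv ℝ v z = 0
    · exact .inl ⟨hvz, hd⟩
    · exact .inr (hu.eventually_mul_nonneg_or_nonpos hU hv hZ hz hvz hd)
  · have hcont : ContinuousAt (fun y => u y * v y) z :=
      (hu.hasFDerivAt hU hz).continuousAt.mul (hv.hasFDerivAt hU hz).continuousAt
    rcases (mul_ne_zero (mt (hZ z hz).1 hvz) hvz).lt_or_gt with h | h
    · exact .inr (.inr ((hcont.eventually_lt continuousAt_const h).mono fun _ => le_of_lt))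
    · exact .inr (.inl ((continuousAt_const.eventually_lt hcont h).mono fun _ => le_of_lt))

theorem HarmonicOnSet.not_eventually_mul_nonpos (hU : IsOpen U) (hUc : IsPreconnected U)
    (hv : HarmonicOnSet v U) (hne : ∃ y ∈ U, v y ≠ 0) (hZ : ∀ y ∈ U, u y = 0 ↔ v y = 0)
    (hz : z ∈ U) (hpos : ∀ᶠ y in 𝓝 z, 0 ≤ u y * v y) : ¬∀ᶠ y in 𝓝 z, u y * v y ≤ 0 := by
  intro hneg
  obtain ⟨y, hy, hvy⟩ := hne
  refine hvy (hv.eqOn_zero hU hUc hz ?_ hy)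
  filter_upwards [hpos, hneg, hU.mem_nhds hz] with w hw hw' hwU
  exact (mul_eq_zero.1 (hw'.antisymm hw)).elim (hZ w hwU).1 id

theorem HarmonicOnSet.indicator_mul_nonneg (hU : IsOpen U) (hUc : IsPreconnected U)
    (hu : HarmonicOnSet u U) (hv : HarmonicOnSet v U) (hne : ∃ y ∈ U, v y ≠ 0)
    (hZ : ∀ y ∈ U, u y = 0 ↔ v y = 0) :
    HarmonicOnSet ({z | ∀ᶠ y in 𝓝 z, 0 ≤ u y * v y}.indicator v) U := by
  refine hv.indicator hU ?_
  rintro z ⟨hz, hzA⟩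
  rw [isOpen_setOfPred_eventually_nhds.frontier_eq] at hzA
  refine (hu.critical_or_eventually_mul_nonneg_or_nonpos hU hv hZ hz).resolve_right fun h => ?_
  rcases h with h | h
  · exact hzA.2 h
  obtain ⟨w, ⟨hwneg, hwU⟩, hwpos⟩ := mem_closure_iff_nhds.1 hzA.1 _
    (inter_mem h.eventually_nhds (hU.mem_nhds hz))
  exact hv.not_eventually_mul_nonpos hU hUc hne hZ hwU hwpos hwneg

/-- If `u * v` were nonnegative near one point and nonpositive near another, cutting `v` off to the
first region would produce a harmonic function that violates unique continuation. -/
theorem HarmonicOnSet.mul_nonneg_or_nonpos (hU : IsOpen U) (hUc : IsPreconnected U)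
    (hu : HarmonicOnSet u U) (hv : HarmonicOnSet v U) (hne : ∃ y ∈ U, v y ≠ 0)
    (hZ : ∀ y ∈ U, u y = 0 ↔ v y = 0) :
    (∀ y ∈ U, 0 ≤ u y * v y) ∨ ∀ y ∈ U, u y * v y ≤ 0 := by
  have hlocal (y : En n) (hy : y ∈ U) :=
    hu.critical_or_eventually_mul_nonneg_or_nonpos hU hv hZ hy
  let A : Set (En n) := {z | ∀ᶠ y in 𝓝 z, 0 ≤ u y * v y}
  by_cases hneg : ∃ z ∈ U, ∀ᶠ y in 𝓝 z, u y * v y ≤ 0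
  · obtain ⟨z, hz, hzneg⟩ := hneg
    have hzero : EqOn (A.indicator v) 0 U :=
        (hu.indicator_mul_nonneg hU hUc hv hne hZ).eqOn_zero hU hUc hz <| by
      filter_upwards [hzneg.eventually_nhds, hU.mem_nhds hz] with w hw hwU
      have hwA : w ∉ A := fun hpos => hv.not_eventually_mul_nonpos hU hUc hne hZ hwU hpos hw
      exact indicator_of_notMem hwA v
    refine .inr fun y hy => ?_
    rcases hlocal y hy with h | h | h
    · simp [h.1]
    · have hyA : y ∈ A := h
      have hvy : v y = 0 := (indicator_of_mem hyA v).symm.trans (hzero hy)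
      simp [hvy]
    · exact h.self_of_nhds
  · refine .inl fun y hy => ?_
    rcases hlocal y hy with h | h | h
    · simp [h.1]
    · exact h.self_of_nhds
    · exact absurd ⟨y, hy, h⟩ hneg

end Sign

end

open Topology in
theorem stmt17_general {n k : ℕ} {U K : Set (En n)} {v : En n → ℝ} {x₀ : En n} (hU : IsOpen U)
    (hUc : IsPreconnected U) (hv : HarmonicOnSet v U) (hK : IsCompact K) (hKU : K ⊆ U)
    (hx₀ : x₀ ∈ U) (hvanish : ∀ j < k, iteratedFDeriv ℝ j v x₀ = 0)
    (hnonzero : iteratedFDeriv ℝ k v x₀ ≠ 0) :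
    ∃ C > (0 : ℝ), ∀ u : En n → ℝ, HarmonicOnSet u U → zeroSet u U = zeroSet v U →
      ∀ x ∈ K, |u x| ≤ C * ‖iteratedFDeriv ℝ k u x₀‖ := by
  have hne : ∃ y ∈ U, v y ≠ 0 := by
    by_contra! h
    have hv0 : v =ᶠ[𝓝 x₀] 0 := by filter_upwards [hU.mem_nhds hx₀] using h
    exact hnonzero (by rw [(hv0.iteratedFDeriv ℝ k).self_of_nhds]; simp)
  obtain ⟨C, hC, hbound⟩ := hv.exists_abs_le_mul_norm_iteratedFDeriv_of_isCompact hU hUc hne hK hKU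
    hx₀ hvanish hnonzero
  refine ⟨C, hC, fun u hu hzero x hx => ?_⟩
  have hZ : ∀ y ∈ U, u y = 0 ↔ v y = 0 := fun y hy => by
    simpa [zeroSet, hy] using Set.ext_iff.1 hzero y
  rcases hu.mul_nonneg_or_nonpos hU hUc hv hne hZ with hpos | hneg
  · exact hbound u hu hpos x hx
  · have hu' : HarmonicOnSet (-u) U := by
      simpa [Pi.neg_def] using hu.const_mul hU (-1)
    simpa [iteratedFDeriv_neg_apply] using hbound (-u) hu' (by simpa using hneg) x hx

theorem stmt17 (n : ℕ) (v : En n → ℝ)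
    (hv : HarmonicOnSet v (ball 0 1))
    (hne : ∃ x ∈ ball (0 : En n) 1, v x ≠ 0)
    (x₀ : En n) (hx₀ : x₀ ∈ zeroSet v (ball 0 1) ∩ ball (0 : En n) (1/2))
    (k : ℕ) (hk : 1 ≤ k)
    (hvanish : ∀ j < k, iteratedFDeriv ℝ j v x₀ = 0)
    (hnonzero : iteratedFDeriv ℝ k v x₀ ≠ 0) :
    ∃ C > (0 : ℝ),
      ∀ u : En n → ℝ, HarmonicOnSet u (ball 0 1) →
        zeroSet u (ball 0 1) = zeroSet v (ball 0 1) →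
        ∀ x ∈ ball (0 : En n) (1/2), |u x| ≤ C * ‖iteratedFDeriv ℝ k u x₀‖ := by
  obtain ⟨C, hC, h⟩ := stmt17_general isOpen_ball (convex_ball 0 1).isPreconnected hv
    (isCompact_closedBall 0 (1 / 2)) (closedBall_subset_ball one_half_lt_one) hx₀.1.1 hvanish
    hnonzero
  exact ⟨C, hC, fun u hu hzero x hx => h u hu hzero x (ball_subset_closedBall hx)⟩
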